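/- arXiv:2010.04562 — 5 statements merged into one kernel-verified Lean document; each statement's English description precedes it below -/
import Mathlib

section
/- Let f : ℂ → ℂ be a non-constant entire function of zero order, let q ≠ 0 and η be two finite complex numbers, and let a and b be two distinct complex numbers. If f(z) and Δ_{q,η}f(z) share the values a and b IM, then f(z) = Δ_{q,η}f(z) for all z ∈ ℂ. -/
/-!
The theorem is a special case of a uniqueness statement (`eq_of_shares_two_values`): two nonconstant
entire functions `f`, `g` of order zero that share two values `a ≠ b`, multiplicities ignored, are
equal. It applies to `g = Δ f`: the difference has order zero again (`SlowGrowth.qdiff`), and it is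
not constant, because `f` takes both values `a` and `b` (`exists_eq_of_slowGrowth`).

*Good circles* (`exists_good_circle`). Put `S R = log M(R, f) + log M(R, g)`. Order zero forces
`S (35 R) ≤ (1 + ε) S R` for arbitrarily large `R`, so `f` and `g` have few zeros in `‖z‖ ≤ 8 R`.
Dividing these out, applying Borel–Carathéodory to what remains, and averaging the kernel
`1 / √|x - c|` over the radius to stay away from the zeros gives arbitrarily large circles on which
`log ‖f‖` and `log ‖g‖` are constant up to an error `ε S`, and `f' / f`, `g' / g` are at most `ε`.

*The dominated case.* With `F = f - g`, the functions `ψ = f' F / ((f - a) (f - b))` and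
`φ = g' F / ((g - a) (g - b))` are entire, since `F` vanishes at the shared points. If `f` dominates
`g` on good circles then `ψ` tends to `0` along them, so `ψ = 0` and `F = 0`; likewise for `φ` if
`g` dominates `f`.

*The balanced case.* Otherwise `log ‖f‖` and `log ‖g‖` are comparable on good circles. At a shared
point with multiplicities `(m, n)` the combination `n ψ - m φ` vanishes. Let `X` be the product of
the nine combinations with `m, n ≤ 3`. Then
`(f' g') ^ 5 X ^ 10 / ((f - a) (f - b) (g - a) (g - b)) ^ 3` is entire (`exists_aux_quotient`): when
`m + n ≥ 5` the zeros of `f' g'` suffice, and in the other cases `X` vanishes. This quotient tends to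
`0` along the circles, so it vanishes, and `n ψ = m φ` identically for some `m, n ≤ 3`. Unless
`F = 0`, integrating gives `((f - a) / (f - b)) ^ n = ((g - a) / (g - b)) ^ m`, which makes `g`
at most a constant times `f` on the circles (`BalancedPair.dominates_of_proportional`); this is the
dominated case again.
-/

open Filter Topology

/-- `log⁺ x = max 0 (log x)`. -/
noncomputable def logPlus (x : ℝ) : ℝ := max 0 (Real.log x)

/-- The maximum modulus of `f` on the circle `|z| = r`. -/
noncomputable def maxMod (f : ℂ → ℂ) (r : ℝ) : ℝ :=
  sSup ((fun z => ‖f z‖) '' Metric.sphere (0 : ℂ) r)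

/-- `f` is an entire function of zero order:
`limsup_{r→∞} (log⁺ log⁺ M(r,f)) / log r = 0`. -/
def ZeroOrderEntire (f : ℂ → ℂ) : Prop :=
  Differentiable ℂ f ∧
    Filter.limsup
      (fun r : ℝ => ((logPlus (logPlus (maxMod f r)) / Real.log r : ℝ) : EReal))
      Filter.atTop = 0

/-! ### Entire functions: quotients, circles, Wronskians -/

lemma entire_analyticAt {f : ℂ → ℂ} (hf : Differentiable ℂ f) (z : ℂ) : AnalyticAt ℂ f z :=
  hf.analyticAt z

lemma entire_eventually_ne {B : ℂ → ℂ} (hB : Differentiable ℂ B) (hB0 : ∃ z, B z ≠ 0) (z₀ : ℂ) :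
    ∀ᶠ z in 𝓝[≠] z₀, B z ≠ 0 := by
  rcases (hB.analyticAt z₀).eventually_eq_zero_or_eventually_ne_zero with h | h
  · exfalso
    obtain ⟨w, hw⟩ := hB0
    have := (AnalyticOnNhd.analyticOrderAt_eq_top_iff_eq_zero z₀ (fun z => hB.analyticAt z)).1
      (analyticOrderAt_eq_top.2 h)
    exact hw (by rw [this]; rfl)
  · exact h

lemma entire_mul_eq_zero {A B : ℂ → ℂ} (hA : Differentiable ℂ A) (hB : Differentiable ℂ B)
    (h : ∀ z, A z * B z = 0) : (∀ z, A z = 0) ∨ (∀ z, B z = 0) := by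
  have := AnalyticOnNhd.eq_zero_or_eq_zero_of_mul_eq_zero (U := Set.univ) (f := A) (g := B)
    (fun z _ => hA.analyticAt z) (fun z _ => hB.analyticAt z) (fun z _ => h z) isPreconnected_univ
  simpa using this

/-- `A / B` is entire as soon as `A` vanishes at every zero of `B` to at least the same order. -/
lemma exists_entire_quotient {A B : ℂ → ℂ} (hA : Differentiable ℂ A) (hB : Differentiable ℂ B)
    (hB0 : ∃ z, B z ≠ 0) (hord : ∀ z, analyticOrderAt B z ≤ analyticOrderAt A z) :
    ∃ Q : ℂ → ℂ, Differentiable ℂ Q ∧ ∀ z, Q z * B z = A z := by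
  have key : ∀ z₀, ∃ h : ℂ → ℂ, AnalyticAt ℂ h z₀ ∧ ∀ᶠ z in 𝓝 z₀, A z = h z * B z := by
    intro z₀
    have hfin : analyticOrderAt B z₀ ≠ ⊤ := by
      intro htop
      obtain ⟨w, hw⟩ := hB0
      have := (AnalyticOnNhd.analyticOrderAt_eq_top_iff_eq_zero z₀
        (fun z => hB.analyticAt z)).1 htop
      exact hw (by rw [this]; rfl)
    obtain ⟨k, hk⟩ := ENat.ne_top_iff_exists.1 hfin
    obtain ⟨v, hv, hv0, hvB⟩ := ((hB.analyticAt z₀).analyticOrderAt_eq_natCast).1 hk.symm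
    have hk2 : (k : ℕ∞) ≤ analyticOrderAt A z₀ := hk ▸ hord z₀
    obtain ⟨u, hu, huA⟩ := (natCast_le_analyticOrderAt (hA.analyticAt z₀)).1 hk2
    refine ⟨fun z => u z / v z, hu.div hv hv0, ?_⟩
    filter_upwards [hvB, huA, hv.continuousAt.eventually_ne hv0] with z h1 h2 h3
    rw [h1, h2, smul_eq_mul, smul_eq_mul]
    field_simp
  choose h hh hhA using key
  have hQ : ∀ z₀, (fun z => h z z) =ᶠ[𝓝 z₀] h z₀ := by
    intro z₀
    have h1 := hhA z₀
    have h2 := entire_eventually_ne hB hB0 z₀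
    rw [eventually_nhdsWithin_iff] at h2
    filter_upwards [h1, h2] with z hz1 hz2
    by_cases hz : z = z₀
    · rw [hz]
    · have hb := hz2 hz
      have := (hhA z).self_of_nhds
      rw [hz1] at this
      exact (mul_right_cancel₀ hb this).symm
  refine ⟨fun z => h z z, fun z₀ => ?_, fun z => ((hhA z).self_of_nhds).symm⟩
  exact ((hh z₀).congr (hQ z₀).symm).differentiableAt

lemma norm_le_of_sphere {f : ℂ → ℂ} (hf : Differentiable ℂ f) {r C : ℝ}
    (h : ∀ z : ℂ, ‖z‖ = r → ‖f z‖ ≤ C) {z : ℂ} (hz : ‖z‖ ≤ r) : ‖f z‖ ≤ C := by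
  rcases hz.eq_or_lt with hz | hz
  · exact h z hz
  have hr : 0 < r := (norm_nonneg z).trans_lt hz
  refine Complex.norm_le_of_forall_mem_frontier_norm_le (U := Metric.ball (0 : ℂ) r)
    Metric.isBounded_ball hf.diffContOnCl (fun w hw => h w ?_) (subset_closure ?_)
  · rw [frontier_ball _ hr.ne'] at hw
    simpa using hw
  · simpa using hz

/-- By the maximum principle, an entire function that is arbitrarily small on arbitrarily large
circles vanishes identically. -/
lemma entire_eq_zero_of_small_circles {Q : ℂ → ℂ} (hQ : Differentiable ℂ Q)
    (h : ∀ ε > 0, ∀ R₀ : ℝ, ∃ r ≥ R₀, ∀ z : ℂ, ‖z‖ = r → ‖Q z‖ ≤ ε) (z : ℂ) : Q z = 0 := by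
  rw [← norm_le_zero_iff]
  refine le_of_forall_pos_le_add fun ε hε => ?_
  obtain ⟨r, hr, hr2⟩ := h ε hε ‖z‖
  simpa using norm_le_of_sphere hQ hr2 hr

/-- Entire functions whose Wronskian vanishes are proportional. -/
lemma entire_eq_const_mul {h k : ℂ → ℂ} (hh : Differentiable ℂ h) (hk : Differentiable ℂ k)
    (hk0 : ∃ z, k z ≠ 0) (hw : ∀ z, deriv h z * k z = h z * deriv k z) :
    ∃ c : ℂ, ∀ z, h z = c * k z := by
  obtain ⟨w, hw0⟩ := hk0
  obtain ⟨δ, hδ, hball⟩ := Metric.eventually_nhds_iff_ball.1 (hk.continuous.continuousAt.eventually_ne hw0)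
  have hd : ∀ z ∈ Metric.ball w δ, HasDerivAt (fun z => h z / k z) 0 z := by
    intro z hz
    have := (hh z).hasDerivAt.div (hk z).hasDerivAt (hball z hz)
    rw [hw z, sub_self, zero_div] at this
    exact this
  have hconst : ∀ z ∈ Metric.ball w δ, h z / k z = h w / k w := by
    intro z hz
    refine Metric.isOpen_ball.is_const_of_deriv_eq_zero (𝕜 := ℂ) (f := fun z => h z / k z)
      (convex_ball w δ).isPreconnected
      (fun z hz => (hd z hz).differentiableAt.differentiableWithinAt)
      (fun z hz => (hd z hz).deriv) hz (Metric.mem_ball_self hδ)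
  refine ⟨h w / k w, fun z => ?_⟩
  have := AnalyticOnNhd.eq_of_eventuallyEq (f := h) (g := fun z => h w / k w * k z) (z₀ := w)
    (fun z _ => hh.analyticAt z)
    (fun z _ => ((differentiable_const _).mul hk).analyticAt z) ?_
  · exact congrFun this z
  · filter_upwards [Metric.ball_mem_nhds w hδ] with z hz
    rw [← hconst z hz, div_mul_cancel₀ _ (hball z hz)]

/-! ### Averaging the kernel over the radius -/

/-- Splits the kernel `1 / √|t|` into two one-sided pieces. For negative base `Real.rpow` carries
a factor `cos (-π / 2) = 0`, so each summand lives on one half-line only. -/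
lemma inv_sqrt_abs_eq (t : ℝ) : (√|t|)⁻¹ = t ^ (-(1/2) : ℝ) + (-t) ^ (-(1/2) : ℝ) := by
  have key : ∀ u : ℝ, 0 < u → (√|u|)⁻¹ = u ^ (-(1/2) : ℝ) + (-u) ^ (-(1/2) : ℝ) := by
    intro u hu
    rw [Real.rpow_def_of_neg (by linarith : -u < 0), abs_of_pos hu, Real.sqrt_eq_rpow,
      Real.rpow_neg hu.le]
    have : Real.cos (-(1/2) * Real.pi) = 0 := by
      rw [show -(1/2) * Real.pi = -(Real.pi/2) by ring, Real.cos_neg, Real.cos_pi_div_two]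
    rw [this]; simp
  rcases lt_trichotomy t 0 with h | h | h
  · have := key (-t) (by linarith)
    rw [abs_neg, neg_neg] at this
    rw [this, add_comm]
  · subst h; norm_num
  · exact key t h

lemma integral_rpow_half_le (u : ℝ) : ∫ x in u..(u+1), x ^ (-(1/2) : ℝ) ≤ 2 := by
  rw [integral_rpow (Or.inl (by norm_num))]
  have e : (-(1/2) + 1 : ℝ) = 1/2 := by norm_num
  rw [e]
  have hs : ∀ x : ℝ, x ^ (1/2 : ℝ) = √x := fun x => by
    rcases le_or_gt 0 x with h | h
    · rw [Real.sqrt_eq_rpow]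
    · rw [Real.sqrt_eq_zero_of_nonpos h.le, Real.rpow_def_of_neg h,
        show (1/2 : ℝ) * Real.pi = Real.pi/2 by ring, Real.cos_pi_div_two, mul_zero]
  rw [hs, hs]
  have : √(u+1) ≤ √u + 1 := by
    rcases le_or_gt 0 u with h | h
    · apply Real.sqrt_le_iff.2 ⟨by positivity, ?_⟩
      nlinarith [Real.sq_sqrt h, Real.sqrt_nonneg u]
    · have : √(u+1) ≤ √1 := Real.sqrt_le_sqrt (by linarith)
      rw [Real.sqrt_one] at this
      linarith [Real.sqrt_nonneg u]
  linarith

lemma kernel_integrable (c : ℝ) :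
    IntervalIntegrable (fun x : ℝ => (√|x - c|)⁻¹) MeasureTheory.volume 1 2 := by
  have h0 : ∀ a b : ℝ, IntervalIntegrable (fun x : ℝ => x ^ (-(1/2) : ℝ)) MeasureTheory.volume a b :=
    fun a b => intervalIntegral.intervalIntegrable_rpow' (by norm_num)
  have h1 : IntervalIntegrable (fun x : ℝ => (x - c) ^ (-(1/2) : ℝ)) MeasureTheory.volume 1 2 := by
    simpa using (h0 (1 - c) (2 - c)).comp_sub_right c
  have h2 : IntervalIntegrable (fun x : ℝ => (c - x) ^ (-(1/2) : ℝ)) MeasureTheory.volume 1 2 := by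
    simpa using (h0 (c - 1) (c - 2)).comp_sub_left c
  refine (h1.add h2).congr fun x _ => ?_
  simp only [inv_sqrt_abs_eq, neg_sub]

lemma kernel_integral_le (c : ℝ) : ∫ x in (1:ℝ)..2, (√|x - c|)⁻¹ ≤ 4 := by
  have h0 : ∀ a b : ℝ, IntervalIntegrable (fun x : ℝ => x ^ (-(1/2) : ℝ)) MeasureTheory.volume a b :=
    fun a b => intervalIntegral.intervalIntegrable_rpow' (by norm_num)
  have h1 : IntervalIntegrable (fun x : ℝ => (x - c) ^ (-(1/2) : ℝ)) MeasureTheory.volume 1 2 := by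
    simpa using (h0 (1 - c) (2 - c)).comp_sub_right c
  have h2 : IntervalIntegrable (fun x : ℝ => (c - x) ^ (-(1/2) : ℝ)) MeasureTheory.volume 1 2 := by
    simpa using (h0 (c - 1) (c - 2)).comp_sub_left c
  simp only [inv_sqrt_abs_eq, neg_sub]
  rw [intervalIntegral.integral_add h1 h2,
    intervalIntegral.integral_comp_sub_right (fun x : ℝ => x ^ (-(1/2) : ℝ)) c,
    intervalIntegral.integral_comp_sub_left (fun x : ℝ => x ^ (-(1/2) : ℝ)) c]
  have i1 := integral_rpow_half_le (1 - c)
  have i2 := integral_rpow_half_le (c - 2)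
  rw [show 1 - c + 1 = 2 - c by ring] at i1
  rw [show c - 2 + 1 = c - 1 by ring] at i2
  linarith

lemma kernel_sum (s : Multiset ℝ) :
    IntervalIntegrable (fun x : ℝ => (s.map (fun c => (√|x - c|)⁻¹)).sum)
      MeasureTheory.volume 1 2 ∧
    ∫ x in (1:ℝ)..2, (s.map (fun c => (√|x - c|)⁻¹)).sum ≤ 4 * (Multiset.card s : ℝ) := by
  induction s using Multiset.induction with
  | empty => simp
  | cons c s ih =>
    simp only [Multiset.map_cons, Multiset.sum_cons, Multiset.card_cons]
    refine ⟨(kernel_integrable c).add ih.1, ?_⟩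
    rw [intervalIntegral.integral_add (kernel_integrable c) ih.1]
    push_cast
    linarith [ih.2, kernel_integral_le c]

/-- The kernel `1 / √|x - c|` has integral at most `4` over `[1, 2]` whatever `c` is, so some
`x ∈ [1, 2]` keeps the sum of the kernels at or below `4` times the number of points `c`. -/
lemma exists_good_radius (s : Multiset ℝ) :
    ∃ x : ℝ, 1 ≤ x ∧ x ≤ 2 ∧ (∀ c ∈ s, x ≠ c) ∧
      (s.map (fun c => (√|x - c|)⁻¹)).sum ≤ 4 * (Multiset.card s : ℝ) := by
  obtain ⟨hi, hle⟩ := kernel_sum s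
  rw [intervalIntegral.integral_of_le (by norm_num)] at hle
  have hi' := (intervalIntegrable_iff_integrableOn_Ioc_of_le (by norm_num : (1:ℝ) ≤ 2)).1 hi
  set μ := MeasureTheory.volume.restrict (Set.Ioc (1:ℝ) 2) with hμ
  have hμ1 : μ Set.univ = 1 := by simp [hμ]; norm_num
  have : MeasureTheory.IsProbabilityMeasure μ := ⟨hμ1⟩
  have hN : μ ((Set.Ioc (1:ℝ) 2)ᶜ ∪ (s.toFinset : Set ℝ)) = 0 := by
    refine MeasureTheory.measure_union_null ?_ ?_
    · rw [hμ, MeasureTheory.Measure.restrict_apply measurableSet_Ioc.compl]; simp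
    · exact (Set.Finite.measure_zero s.toFinset.finite_toSet _)
  obtain ⟨x, hx, hx2⟩ := MeasureTheory.exists_notMem_null_le_integral hi' hN
  simp only [Set.mem_union, Set.mem_compl_iff, not_or, not_not, Finset.mem_coe,
    Multiset.mem_toFinset] at hx
  refine ⟨x, hx.1.1.le, hx.1.2, fun c hc h => hx.2 (h ▸ hc), hx2.trans hle⟩

/-! ### Factoring out zeros, and zero-free functions -/

/-- `f` is the product of `E` and of linear factors with zeros `w`, `‖w‖ ≤ 8 R`, listed in `s`.
The normalisation by `27 R` makes every factor at least `1` in modulus on `‖z‖ = 35 R`, and at most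
`1 / 3` on `‖z‖ ≤ R`. -/
def IsFactorization (f : ℂ → ℂ) (R : ℝ) (s : Multiset ℂ) (E : ℂ → ℂ) : Prop :=
  Differentiable ℂ E ∧ (∀ w ∈ s, ‖w‖ ≤ 8 * R) ∧
    ∀ z, f z = (s.map (fun w => (z - w) / (27 * R : ℝ))).prod * E z

lemma one_le_norm_linear_prod {R : ℝ} (hR : 0 < R) {s : Multiset ℂ} (hs : ∀ w ∈ s, ‖w‖ ≤ 8 * R)
    {z : ℂ} (hz : ‖z‖ = 35 * R) :
    1 ≤ ‖(s.map (fun w => (z - w) / (27 * R : ℝ))).prod‖ := by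
  induction s using Multiset.induction with
  | empty => simp
  | cons w s ih =>
    rw [Multiset.map_cons, Multiset.prod_cons, norm_mul]
    have h1 := ih (fun w hw => hs w (Multiset.mem_cons_of_mem hw))
    have h2 := hs w (Multiset.mem_cons_self w s)
    have h3 : 1 ≤ ‖(z - w) / (27 * R : ℝ)‖ := by
      rw [norm_div, Complex.norm_real, Real.norm_of_nonneg (by positivity),
        le_div_iff₀ (by positivity)]
      linarith [norm_sub_norm_le z w]
    exact one_le_mul_of_one_le_of_one_le h3 h1

lemma norm_linear_prod_le {R : ℝ} (hR : 0 < R) {s : Multiset ℂ} (hs : ∀ w ∈ s, ‖w‖ ≤ 8 * R)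
    {z : ℂ} (hz : ‖z‖ ≤ R) :
    ‖(s.map (fun w => (z - w) / (27 * R : ℝ))).prod‖ ≤ (1 / 3) ^ (Multiset.card s) := by
  induction s using Multiset.induction with
  | empty => simp
  | cons w s ih =>
    rw [Multiset.map_cons, Multiset.prod_cons, norm_mul, Multiset.card_cons, pow_succ']
    have h1 := ih (fun w hw => hs w (Multiset.mem_cons_of_mem hw))
    have h2 := hs w (Multiset.mem_cons_self w s)
    have h3 : ‖(z - w) / (27 * R : ℝ)‖ ≤ 1 / 3 := by
      rw [norm_div, Complex.norm_real, Real.norm_of_nonneg (by positivity),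
        div_le_iff₀ (by positivity)]
      linarith [norm_sub_le z w]
    exact mul_le_mul h3 h1 (norm_nonneg _) (by norm_num)

/-- If `log ‖f‖` grows by at most `δ` between the disc `‖z‖ ≤ R` and the circle `‖z‖ = 35 R`, the
cofactor `E` inherits the bounds of `f`, and, each zero costing a factor `3 > e`, there are at most
`δ` zeros. -/
lemma IsFactorization.bounds {f : ℂ → ℂ} {R : ℝ} (hR : 0 < R) {s : Multiset ℂ} {E : ℂ → ℂ}
    (h : IsFactorization f R s E) {B δ : ℝ} (hB : ∀ z : ℂ, ‖z‖ = 35 * R → ‖f z‖ ≤ Real.exp B)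
    {z₀ : ℂ} (hz₀ : ‖z₀‖ ≤ R) (hfz : Real.exp (B - δ) ≤ ‖f z₀‖) :
    (∀ z : ℂ, ‖z‖ ≤ 35 * R → ‖E z‖ ≤ Real.exp B) ∧ Real.exp (B - δ) ≤ ‖E z₀‖ ∧
      (Multiset.card s : ℝ) ≤ δ := by
  obtain ⟨hE, hs, hfac⟩ := h
  have h1 : ∀ z : ℂ, ‖z‖ ≤ 35 * R → ‖E z‖ ≤ Real.exp B := by
    intro z hz
    refine norm_le_of_sphere hE (fun w hw => ?_) hz
    have := hB w hw
    rw [hfac w, norm_mul] at this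
    nlinarith [one_le_norm_linear_prod hR hs hw, norm_nonneg (E w)]
  have h2 : Real.exp (B - δ) ≤ (1 / 3) ^ (Multiset.card s) * ‖E z₀‖ := by
    refine hfz.trans ?_
    rw [hfac z₀, norm_mul]
    gcongr
    exact norm_linear_prod_le hR hs hz₀
  have hp : (1 / 3 : ℝ) ^ (Multiset.card s) ≤ 1 := pow_le_one₀ (by norm_num) (by norm_num)
  refine ⟨h1, h2.trans (mul_le_of_le_one_left (norm_nonneg _) hp), ?_⟩
  have h3 : Real.exp (B - δ) ≤ (1 / 3) ^ (Multiset.card s) * Real.exp B :=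
    h2.trans (by gcongr; exact h1 z₀ (by linarith))
  rw [Real.exp_sub, div_le_iff₀ (Real.exp_pos _)] at h3
  have h4 : (1:ℝ) ≤ (1 / 3) ^ (Multiset.card s) * Real.exp δ := by
    have := Real.exp_pos B
    by_contra hcon
    push Not at hcon
    nlinarith
  have h5 : (3:ℝ) ^ (Multiset.card s) ≤ Real.exp δ := by
    rw [one_div, inv_pow, inv_mul_eq_div, le_div_iff₀ (by positivity), one_mul] at h4
    exact h4
  have h6 : Real.exp (Multiset.card s) ≤ (3:ℝ) ^ (Multiset.card s) := by
    rw [← Real.exp_one_pow]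
    gcongr
    exact Real.exp_one_lt_three.le
  exact Real.exp_le_exp.1 (h6.trans h5)

/-- A factorization with the largest possible number of zeros has a cofactor without zeros in
`‖z‖ ≤ 8 R`; the number of zeros is bounded by `IsFactorization.bounds`. -/
lemma exists_factorization {f : ℂ → ℂ} (hf : Differentiable ℂ f) {R : ℝ} (hR : 0 < R)
    {B δ : ℝ} (hB : ∀ z : ℂ, ‖z‖ = 35 * R → ‖f z‖ ≤ Real.exp B)
    {z₀ : ℂ} (hz₀ : ‖z₀‖ ≤ R) (hfz : Real.exp (B - δ) ≤ ‖f z₀‖) :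
    ∃ s E, IsFactorization f R s E ∧ ∀ z : ℂ, ‖z‖ ≤ 8 * R → E z ≠ 0 := by
  let N : Set ℕ := {n | ∃ s E, IsFactorization f R s E ∧ Multiset.card s = n}
  have hne : N.Nonempty := ⟨0, 0, f, ⟨hf, by simp, by simp⟩, rfl⟩
  have hbd : BddAbove N := by
    refine ⟨⌊δ⌋₊, ?_⟩
    rintro n ⟨s, E, h, rfl⟩
    exact Nat.le_floor (h.bounds hR hB hz₀ hfz).2.2
  obtain ⟨s, E, h, hcard⟩ := Nat.sSup_mem hne hbd
  refine ⟨s, E, h, fun w hw hEw => ?_⟩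
  obtain ⟨hE, hs, hfac⟩ := h
  have hcons : Multiset.card s + 1 ∈ N := by
    refine ⟨w ::ₘ s, fun z => (27 * R : ℝ) * dslope E w z, ⟨?_, ?_, ?_⟩, by simp⟩
    · refine (differentiable_const _).mul ?_
      rw [← differentiableOn_univ] at hE ⊢
      exact (Complex.differentiableOn_dslope univ_mem).2 hE
    · intro v hv
      rcases Multiset.mem_cons.1 hv with rfl | hv
      · exact hw
      · exact hs v hv
    · intro z
      have hd : (z - w) * dslope E w z = E z := by
        have := sub_smul_dslope E w z
        rw [hEw, sub_zero] at this
        simpa using this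
      rw [Multiset.map_cons, Multiset.prod_cons, hfac z, ← hd]
      have : ((27 * R : ℝ) : ℂ) ≠ 0 := by exact_mod_cast (by positivity : (27 * R : ℝ) ≠ 0)
      field_simp
  have := le_csSup hbd hcons
  omega

/-- Borel–Carathéodory for a branch of `log E` on a disc about `z₀`: a function without zeros
whose modulus is nearly maximal at one point `z₀` is nearly of constant modulus, and has small
logarithmic derivative. -/
lemma zero_free_bounds {E : ℂ → ℂ} (hE : Differentiable ℂ E) {R : ℝ} (hR : 0 < R)
    {B δ : ℝ} (hδ : 0 < δ) (hne : ∀ z : ℂ, ‖z‖ ≤ 8 * R → E z ≠ 0)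
    (hB : ∀ z : ℂ, ‖z‖ ≤ 35 * R → ‖E z‖ ≤ Real.exp B)
    {z₀ : ℂ} (hz₀ : ‖z₀‖ ≤ R) (hEz : Real.exp (B - δ) ≤ ‖E z₀‖) {z : ℂ} (hz : ‖z‖ ≤ 2 * R) :
    B - 4 * δ ≤ Real.log ‖E z‖ ∧ ‖deriv E z‖ ≤ 3 * δ / R * ‖E z‖ := by
  have hin : ∀ u ∈ Metric.ball (0:ℂ) (7 * R), ‖z₀ + u‖ ≤ 8 * R := by
    intro u hu
    have : ‖u‖ < 7 * R := by simpa using hu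
    linarith [norm_add_le z₀ u]
  let G : ℂ → ℂ := fun u => E (z₀ + u)
  have hG : Differentiable ℂ G := hE.comp ((differentiable_const _).add differentiable_id)
  have hGne : ∀ u ∈ Metric.ball (0:ℂ) (7 * R), G u ≠ 0 := fun u hu => hne _ (hin u hu)
  have hld : DifferentiableOn ℂ (fun u => deriv G u / G u) (Metric.ball 0 (7 * R)) := by
    refine DifferentiableOn.div ?_ hG.differentiableOn hGne
    exact fun u _ => (hG.analyticAt u).deriv.differentiableAt.differentiableWithinAt
  -- `k` is the branch of `log (G / G 0)` on the disc that vanishes at the centre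
  obtain ⟨k₀, hk₀⟩ := hld.isExactOn_ball
  let k : ℂ → ℂ := fun u => k₀ u - k₀ 0
  have hk : ∀ u ∈ Metric.ball (0:ℂ) (7 * R), HasDerivAt k (deriv G u / G u) u :=
    fun u hu => (hk₀ u hu).sub_const _
  have h0 : (0:ℂ) ∈ Metric.ball (0:ℂ) (7 * R) := Metric.mem_ball_self (by positivity)
  have hexp : ∀ u ∈ Metric.ball (0:ℂ) (7 * R), G u = G 0 * Complex.exp (k u) := by
    intro u hu
    have hd : ∀ v ∈ Metric.ball (0:ℂ) (7 * R),
        HasDerivAt (fun v => G v * Complex.exp (-k v)) 0 v := by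
      intro v hv
      have hq : G v * (deriv G v / G v) = deriv G v := mul_div_cancel₀ _ (hGne v hv)
      refine ((hG v).hasDerivAt.fun_mul ((hk v hv).fun_neg.cexp)).congr_deriv ?_
      linear_combination -Complex.exp (-k v) * hq
    have hc := Metric.isOpen_ball.is_const_of_deriv_eq_zero (𝕜 := ℂ)
      (f := fun v => G v * Complex.exp (-k v))
      (convex_ball (0:ℂ) (7 * R)).isPreconnected
      (fun z hz => (hd z hz).differentiableAt.differentiableWithinAt)
      (fun z hz => (hd z hz).deriv) hu h0
    have hk0 : k 0 = 0 := sub_self _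
    simp only [hk0, neg_zero, Complex.exp_zero, mul_one] at hc
    rw [← hc, mul_assoc, ← Complex.exp_add, neg_add_cancel, Complex.exp_zero, mul_one]
  have hG0 : Real.exp (B - δ) ≤ ‖G 0‖ := by simpa [G] using hEz
  have hre : Set.MapsTo k (Metric.ball 0 (7 * R)) {z | z.re ≤ δ} := by
    intro u hu
    have h1 : ‖G u‖ ≤ Real.exp B := hB _ (by linarith [hin u hu])
    rw [hexp u hu, norm_mul, Complex.norm_exp] at h1
    have h2 : Real.exp (B - δ) * Real.exp (k u).re ≤ Real.exp B :=
      (mul_le_mul_of_nonneg_right hG0 (Real.exp_pos _).le).trans h1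
    rw [← Real.exp_add, Real.exp_le_exp] at h2
    show (k u).re ≤ δ
    linarith
  have hkd : DifferentiableOn ℂ k (Metric.ball 0 (7 * R)) :=
    fun u hu => (hk u hu).differentiableAt.differentiableWithinAt
  have hbc : ∀ u : ℂ, ‖u‖ ≤ 4 * R → ‖k u‖ ≤ 3 * δ := by
    intro u hu
    have hu' : u ∈ Metric.ball (0:ℂ) (7 * R) := by simp; linarith
    have := Complex.borelCaratheodory_zero hδ hkd hre (by positivity) hu' (sub_self _)
    refine this.trans ?_
    rw [div_le_iff₀ (by linarith)]
    nlinarith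
  set u := z - z₀ with hu_def
  have hu : ‖u‖ ≤ 3 * R := by linarith [norm_sub_le z z₀]
  have huB : u ∈ Metric.ball (0:ℂ) (7 * R) := by simp; linarith
  have hGu : G u = E z := by simp [G, hu_def]
  constructor
  · rw [← hGu, hexp u huB, norm_mul, Complex.norm_exp]
    have hG0p : 0 < ‖G 0‖ := (Real.exp_pos _).trans_le hG0
    rw [Real.log_mul hG0p.ne' (Real.exp_pos _).ne', Real.log_exp]
    have h1 : B - δ ≤ Real.log ‖G 0‖ := (Real.le_log_iff_exp_le hG0p).2 hG0
    have h2 := hbc u (by linarith)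
    have h3 := Complex.abs_re_le_norm (k u)
    have h4 := neg_abs_le (k u).re
    linarith
  · have hder : ‖deriv k u‖ ≤ 3 * δ / R := by
      have hsub : Metric.closedBall u R ⊆ Metric.ball (0:ℂ) (7 * R) := by
        intro v hv
        have : ‖v - u‖ ≤ R := by simpa [dist_eq_norm] using hv
        have h5 : ‖v‖ ≤ ‖v - u‖ + ‖u‖ := by simpa using norm_add_le (v - u) u
        simp; linarith
      refine Complex.norm_deriv_le_of_forall_mem_sphere_norm_le hR ?_ ?_
      · exact (hkd.mono hsub).diffContOnCl_ball subset_rfl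
      · intro v hv
        have : ‖v - u‖ = R := by simpa [dist_eq_norm] using hv
        have h5 : ‖v‖ ≤ ‖v - u‖ + ‖u‖ := by simpa using norm_add_le (v - u) u
        exact hbc v (by linarith)
    rw [(hk u huB).deriv, norm_div] at hder
    have hGp : 0 < ‖G u‖ := norm_pos_iff.2 (hGne u huB)
    rw [div_le_iff₀ hGp, hGu] at hder
    have : deriv G u = deriv E z := by
      have := deriv_comp_const_add E z₀ u
      simp only [G]
      rw [this]; simp [hu_def]
    rwa [this] at hder

/-! ### Estimates on a circle -/

/-- Bounds for the product of linear factors and its logarithmic derivative on the circle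
`‖z‖ = x R`, in terms of the kernel sum `∑ 1 / √|x - ‖w‖ / R|`. The kernel controls both the
logarithm and, through its square, the reciprocal of the distance to a zero. -/
lemma linear_prod_bounds {R : ℝ} (hR : 0 < R) {x : ℝ} (s : Multiset ℂ)
    (hx : ∀ w ∈ s, x ≠ ‖w‖ / R) {z : ℂ} (hz : ‖z‖ = x * R) :
    Differentiable ℂ (fun z : ℂ => (s.map (fun w => (z - w) / (27 * R : ℝ))).prod) ∧
    0 ≤ (s.map (fun w => (√|x - ‖w‖ / R|)⁻¹)).sum ∧
    (s.map (fun w => (z - w) / (27 * R : ℝ))).prod ≠ 0 ∧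
    -(6 * (Multiset.card s : ℝ)) - 2 * (s.map (fun w => (√|x - ‖w‖ / R|)⁻¹)).sum ≤
      Real.log ‖(s.map (fun w => (z - w) / (27 * R : ℝ))).prod‖ ∧
    ‖deriv (fun z : ℂ => (s.map (fun w => (z - w) / (27 * R : ℝ))).prod) z‖ ≤
      (s.map (fun w => (√|x - ‖w‖ / R|)⁻¹)).sum ^ 2 / R *
        ‖(s.map (fun w => (z - w) / (27 * R : ℝ))).prod‖ := by
  induction s using Multiset.induction with
  | empty => simp
  | cons w s ih =>
    obtain ⟨hd, hA0, hP0, hlog, hder⟩ := ih (fun w hw => hx w (Multiset.mem_cons_of_mem hw))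
    have hw := hx w (Multiset.mem_cons_self w s)
    simp only [Multiset.map_cons, Multiset.prod_cons, Multiset.sum_cons, Multiset.card_cons]
    set P : ℂ → ℂ := fun z => (s.map (fun w => (z - w) / (27 * R : ℝ))).prod with hP
    change P z ≠ 0 at hP0
    change _ ≤ Real.log ‖P z‖ at hlog
    change _ ≤ _ * ‖P z‖ at hder
    set A := (s.map (fun w => (√|x - ‖w‖ / R|)⁻¹)).sum with hA
    set d := |x - ‖w‖ / R| with hdd
    have hdpos : 0 < d := abs_pos.2 (sub_ne_zero.2 hw)
    have hsq : 0 < √d := Real.sqrt_pos.2 hdpos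
    have hzw : R * d ≤ ‖z - w‖ := by
      have h1 := abs_norm_sub_norm_le z w
      have h2 : R * d = |‖z‖ - ‖w‖| := by
        rw [hdd, hz, ← abs_of_pos hR, ← abs_mul, abs_of_pos hR]
        congr 1
        field_simp
      rw [h2]; exact h1
    have hzwpos : 0 < ‖z - w‖ := lt_of_lt_of_le (by positivity) hzw
    have hl : ‖(z - w) / (27 * R : ℝ)‖ = ‖z - w‖ / (27 * R) := by
      rw [norm_div, Complex.norm_real, Real.norm_of_nonneg (by positivity)]
    have hlpos : 0 < ‖(z - w) / (27 * R : ℝ)‖ := by rw [hl]; positivity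
    have hlin : ∀ z : ℂ, HasDerivAt (fun z : ℂ => (z - w) / (27 * R : ℝ)) (1 / (27 * R : ℝ)) z :=
      fun z => ((hasDerivAt_id z).sub_const w).div_const _
    refine ⟨?_, ?_, ?_, ?_, ?_⟩
    · have hlind : Differentiable ℂ (fun z : ℂ => (z - w) / (27 * R : ℝ)) :=
        fun z => (hlin z).differentiableAt
      exact hlind.fun_mul hd
    · positivity
    · exact mul_ne_zero (norm_pos_iff.1 hlpos) hP0
    · change _ ≤ Real.log ‖_ * P z‖
      rw [norm_mul, Real.log_mul hlpos.ne' (norm_pos_iff.2 hP0).ne']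
      have h1 : -6 - 2 * (√d)⁻¹ ≤ Real.log ‖(z - w) / (27 * R : ℝ)‖ := by
        have h2 : d / 27 ≤ ‖(z - w) / (27 * R : ℝ)‖ := by
          rw [hl, div_le_div_iff₀ (by norm_num) (by positivity)]
          nlinarith
        have h3 : Real.log (d / 27) ≤ Real.log ‖(z - w) / (27 * R : ℝ)‖ :=
          Real.log_le_log (by positivity) h2
        rw [Real.log_div hdpos.ne' (by norm_num)] at h3
        have h4 : Real.log 27 ≤ 6 := by
          rw [show (27:ℝ) = 3 ^ 3 by norm_num, Real.log_pow]
          have := Real.log_le_sub_one_of_pos (by norm_num : (0:ℝ) < 3)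
          push_cast; linarith
        have h5 : Real.log d = -2 * Real.log (√d)⁻¹ := by
          rw [Real.log_inv, Real.log_sqrt hdpos.le]; ring
        have h6 := Real.log_le_sub_one_of_pos (inv_pos.2 hsq)
        linarith
      rw [Nat.cast_add, Nat.cast_one]
      linarith
    · change ‖deriv (fun z => (z - w) / (27 * R : ℝ) * P z) z‖ ≤ _ * ‖_ * P z‖
      rw [((hlin z).fun_mul (hd z).hasDerivAt).deriv, norm_mul]
      refine (norm_add_le _ _).trans ?_
      rw [norm_mul, norm_mul]
      have h1 : ‖1 / ((27 * R : ℝ) : ℂ)‖ ≤ (√d)⁻¹ ^ 2 / R * ‖(z - w) / (27 * R : ℝ)‖ := by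
        rw [hl, norm_div, Complex.norm_real, Real.norm_of_nonneg (by positivity : 0 ≤ 27 * R),
          norm_one, inv_pow, Real.sq_sqrt hdpos.le]
        have : d⁻¹ / R * (‖z - w‖ / (27 * R)) = (‖z - w‖ / (R * d)) * (1 / (27 * R)) := by
          field_simp
        rw [this]
        exact le_mul_of_one_le_left (by positivity) ((one_le_div (by positivity)).2 hzw)
      have h2 : (√d)⁻¹ ^ 2 / R + A ^ 2 / R ≤ ((√d)⁻¹ + A) ^ 2 / R := by
        rw [← add_div]
        gcongr
        have : 0 ≤ (√d)⁻¹ * A := by positivity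
        nlinarith
      calc _ ≤ (√d)⁻¹ ^ 2 / R * ‖(z - w) / (27 * R : ℝ)‖ * ‖P z‖ +
            ‖(z - w) / (27 * R : ℝ)‖ * (A ^ 2 / R * ‖P z‖) := by gcongr
        _ = ((√d)⁻¹ ^ 2 / R + A ^ 2 / R) * (‖(z - w) / (27 * R : ℝ)‖ * ‖P z‖) := by ring
        _ ≤ _ := by gcongr

/-- `zero_free_bounds` and `linear_prod_bounds` combined: lower bound for `log ‖f‖` and upper bound
for the logarithmic derivative of `f` on the circle `‖z‖ = x R`, given a bound `A` for the kernel
sum at `x`. -/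
lemma circle_estimate {f : ℂ → ℂ} {R : ℝ} (hR : 0 < R) {B δ : ℝ} (hδ : 0 < δ)
    (hB : ∀ z : ℂ, ‖z‖ = 35 * R → ‖f z‖ ≤ Real.exp B)
    {z₀ : ℂ} (hz₀ : ‖z₀‖ ≤ R) (hfz : Real.exp (B - δ) ≤ ‖f z₀‖) {s : Multiset ℂ} {E : ℂ → ℂ}
    (h : IsFactorization f R s E) (hE0 : ∀ z : ℂ, ‖z‖ ≤ 8 * R → E z ≠ 0)
    {x : ℝ} (hx2 : x ≤ 2) (hx : ∀ w ∈ s, x ≠ ‖w‖ / R) {A : ℝ}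
    (hA : (s.map (fun w => (√|x - ‖w‖ / R|)⁻¹)).sum ≤ A) {z : ℂ} (hz : ‖z‖ = x * R) :
    f z ≠ 0 ∧ B - 10 * δ - 2 * A ≤ Real.log ‖f z‖ ∧
      ‖deriv f z‖ ≤ (A ^ 2 + 3 * δ) / R * ‖f z‖ := by
  obtain ⟨hEB, hEz, hcard⟩ := h.bounds hR hB hz₀ hfz
  obtain ⟨hE, hs, hfac⟩ := h
  have hz2 : ‖z‖ ≤ 2 * R := by rw [hz]; gcongr
  obtain ⟨h1, h2⟩ := zero_free_bounds hE hR hδ hE0 hEB hz₀ hEz hz2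
  obtain ⟨hd, hA0, hP0, hlog, hder⟩ := linear_prod_bounds hR s hx hz
  set P : ℂ → ℂ := fun z => (s.map (fun w => (z - w) / (27 * R : ℝ))).prod with hP
  change P z ≠ 0 at hP0
  change _ ≤ Real.log ‖P z‖ at hlog
  change _ ≤ _ * ‖P z‖ at hder
  have hfe : f = fun z => P z * E z := funext hfac
  have hEz0 := hE0 z (by linarith)
  set A' := (s.map (fun w => (√|x - ‖w‖ / R|)⁻¹)).sum
  rw [hfe]
  refine ⟨mul_ne_zero hP0 hEz0, ?_, ?_⟩
  · simp only [norm_mul]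
    rw [Real.log_mul (norm_pos_iff.2 hP0).ne' (norm_pos_iff.2 hEz0).ne']
    linarith
  · rw [((hd z).hasDerivAt.fun_mul (hE z).hasDerivAt).deriv]
    refine (norm_add_le _ _).trans ?_
    rw [norm_mul, norm_mul]
    simp only [norm_mul]
    calc _ ≤ A' ^ 2 / R * ‖P z‖ * ‖E z‖ + ‖P z‖ * (3 * δ / R * ‖E z‖) := by gcongr
      _ = (A' ^ 2 + 3 * δ) / R * (‖P z‖ * ‖E z‖) := by ring
      _ ≤ _ := by gcongr

/-! ### Order zero and good circles -/

/-- Growth of order zero, in pointwise form: for every `κ > 0`, eventually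
`‖f z‖ ≤ exp (‖z‖ ^ κ)`. -/
def SlowGrowth (f : ℂ → ℂ) : Prop :=
  ∀ κ : ℝ, 0 < κ → ∃ R : ℝ, ∀ z : ℂ, R ≤ ‖z‖ → ‖f z‖ ≤ Real.exp (‖z‖ ^ κ)

lemma maxMod_spec {f : ℂ → ℂ} (hf : Differentiable ℂ f) {r : ℝ} (hr : 0 ≤ r) :
    (∃ z₀ : ℂ, ‖z₀‖ = r ∧ ‖f z₀‖ = maxMod f r) ∧ ∀ z : ℂ, ‖z‖ ≤ r → ‖f z‖ ≤ maxMod f r := by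
  have hcomp : IsCompact ((fun z => ‖f z‖) '' Metric.sphere (0 : ℂ) r) :=
    (isCompact_sphere _ _).image hf.continuous.norm
  have hne : ((fun z => ‖f z‖) '' Metric.sphere (0 : ℂ) r).Nonempty :=
    (NormedSpace.sphere_nonempty.2 hr).image _
  constructor
  · obtain ⟨z₀, hz₀, h⟩ := hcomp.sSup_mem hne
    exact ⟨z₀, by simpa using hz₀, h⟩
  · intro z hz
    refine norm_le_of_sphere hf (fun w hw => ?_) hz
    exact le_csSup hcomp.bddAbove ⟨w, by simpa using hw, rfl⟩

lemma maxMod_mono {f : ℂ → ℂ} (hf : Differentiable ℂ f) {r r' : ℝ} (hr : 0 ≤ r) (h : r ≤ r') :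
    maxMod f r ≤ maxMod f r' := by
  obtain ⟨⟨z, hz, hz2⟩, -⟩ := maxMod_spec hf hr
  rw [← hz2]
  exact (maxMod_spec hf (hr.trans h)).2 z (by linarith)

/-- Liouville's theorem, as a statement on the maximum modulus. -/
lemma exists_le_log_maxMod {f : ℂ → ℂ} (hf : Differentiable ℂ f) (hnc : ¬∃ c, ∀ z, f z = c)
    (C : ℝ) : ∃ R, 0 ≤ R ∧ ∀ r ≥ R, 0 < maxMod f r ∧ C ≤ Real.log (maxMod f r) := by
  have : ∃ w, Real.exp C < ‖f w‖ := by
    by_contra hcon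
    push Not at hcon
    refine hnc (hf.exists_const_forall_eq_of_bounded ?_)
    rw [isBounded_iff_forall_norm_le]
    exact ⟨Real.exp C, by rintro _ ⟨z, rfl⟩; exact hcon z⟩
  obtain ⟨w, hw⟩ := this
  refine ⟨‖w‖, norm_nonneg _, fun r hr => ?_⟩
  have h1 := (maxMod_spec hf ((norm_nonneg w).trans hr)).2 w hr
  have h2 : Real.exp C ≤ maxMod f r := hw.le.trans h1
  have h3 := (Real.exp_pos C).trans_le h2
  exact ⟨h3, (Real.le_log_iff_exp_le h3).2 h2⟩

lemma ZeroOrderEntire.slowGrowth {f : ℂ → ℂ} (hf : ZeroOrderEntire f) : SlowGrowth f := by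
  obtain ⟨hd, hlim⟩ := hf
  intro κ hκ
  have h1 : Filter.limsup
      (fun r : ℝ => ((logPlus (logPlus (maxMod f r)) / Real.log r : ℝ) : EReal))
      Filter.atTop < ((κ : ℝ) : EReal) := by
    rw [hlim]; exact_mod_cast hκ
  have h2 := (Filter.eventually_lt_of_limsup_lt h1).and (eventually_gt_atTop (1:ℝ))
  obtain ⟨R, hR⟩ := eventually_atTop.1 h2
  refine ⟨R, fun z hz => ?_⟩
  obtain ⟨h3, h4⟩ := hR ‖z‖ hz
  have h5 : logPlus (logPlus (maxMod f ‖z‖)) / Real.log ‖z‖ < κ := by exact_mod_cast h3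
  have hlog := Real.log_pos h4
  rw [div_lt_iff₀ hlog] at h5
  have h6 : ‖f z‖ ≤ maxMod f ‖z‖ := (maxMod_spec hd (norm_nonneg z)).2 z le_rfl
  have hzp : 0 < ‖z‖ := by linarith
  have h7 : logPlus (maxMod f ‖z‖) ≤ ‖z‖ ^ κ := by
    rcases le_or_gt (logPlus (maxMod f ‖z‖)) 0 with h | h
    · exact h.trans (by positivity)
    · rw [← Real.log_le_log_iff h (by positivity), Real.log_rpow hzp]
      exact (le_max_right _ _).trans h5.le
  have h8 : Real.log (maxMod f ‖z‖) ≤ ‖z‖ ^ κ := (le_max_right _ _).trans h7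
  refine h6.trans ?_
  rcases le_or_gt (maxMod f ‖z‖) 0 with h | h
  · exact h.trans (Real.exp_pos _).le
  · exact (Real.log_le_iff_le_exp h).1 h8

lemma SlowGrowth.qdiff {f : ℂ → ℂ} (hd : Differentiable ℂ f) (hf : SlowGrowth f) (q η : ℂ) :
    SlowGrowth (fun z => f (q * z + η) - f z) := by
  intro κ hκ
  obtain ⟨R, hR⟩ := hf (κ / 2) (by linarith)
  set C := ‖q‖ + ‖η‖ + 1 with hC
  have hC1 : 1 ≤ C := by rw [hC]; linarith [norm_nonneg q, norm_nonneg η]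
  set K := C ^ (κ / 2) with hK
  have hK0 : 0 ≤ K := by positivity
  have h1 := ((tendsto_rpow_atTop (by linarith : 0 < κ / 2)).eventually_ge_atTop (K + 1)).and
    ((eventually_ge_atTop (1:ℝ)).and (eventually_ge_atTop R))
  obtain ⟨R', hR'⟩ := eventually_atTop.1 h1
  refine ⟨R', fun z hz => ?_⟩
  obtain ⟨h2, h3, h4⟩ := hR' ‖z‖ hz
  set r := ‖z‖ with hr
  have hbd : ∀ w : ℂ, ‖w‖ ≤ C * r → ‖f w‖ ≤ Real.exp ((C * r) ^ (κ / 2)) := by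
    intro w hw
    refine norm_le_of_sphere hd (fun v hv => ?_) hw
    have := hR v (by rw [hv]; nlinarith)
    rwa [hv] at this
  have h5 : ‖q * z + η‖ ≤ C * r := by
    have := norm_add_le (q * z) η
    rw [norm_mul] at this
    have h6 : ‖η‖ ≤ ‖η‖ * r := le_mul_of_one_le_right (norm_nonneg _) h3
    rw [hC]; nlinarith
  have h6 := hbd _ h5
  have h7 := hbd z (by rw [← hr]; nlinarith)
  have h8 : (C * r) ^ (κ / 2) = K * r ^ (κ / 2) := Real.mul_rpow (by linarith) (by linarith)
  have h9 : r ^ κ = r ^ (κ / 2) * r ^ (κ / 2) := by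
    rw [← Real.rpow_add (by linarith)]; congr 1; ring
  have h10 : 2 ≤ Real.exp 1 := by linarith [Real.add_one_le_exp (1:ℝ)]
  calc ‖f (q * z + η) - f z‖ ≤ 2 * Real.exp ((C * r) ^ (κ / 2)) := by
        linarith [norm_sub_le (f (q * z + η)) (f z)]
    _ ≤ Real.exp 1 * Real.exp ((C * r) ^ (κ / 2)) := by gcongr
    _ = Real.exp (1 + (C * r) ^ (κ / 2)) := by rw [Real.exp_add]
    _ ≤ Real.exp (r ^ κ) := by
        rw [Real.exp_le_exp, h8, h9]; nlinarith

lemma SlowGrowth.log_maxMod_le {f : ℂ → ℂ} (hd : Differentiable ℂ f) (hf : SlowGrowth f)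
    {κ : ℝ} (hκ : 0 < κ) : ∃ R, ∀ r ≥ R, Real.log (maxMod f r) ≤ r ^ κ := by
  obtain ⟨R, hR⟩ := hf κ hκ
  refine ⟨max R 0, fun r hr => ?_⟩
  have hr0 : 0 ≤ r := (le_max_right _ _).trans hr
  obtain ⟨⟨z, hz, hz2⟩, -⟩ := maxMod_spec hd hr0
  have := hR z (by rw [hz]; exact (le_max_left _ _).trans hr)
  rw [hz2, hz] at this
  rcases eq_or_ne (maxMod f r) 0 with h | h
  · rw [h, Real.log_zero]; positivity
  · refine (Real.log_le_iff_le_exp (lt_of_le_of_ne ?_ h.symm)).2 this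
    rw [← hz2]; exact norm_nonneg _

/-- A function of order zero cannot be multiplied by `1 + ε` at every dilation by `35`. -/
lemma exists_slow_step {S : ℝ → ℝ} (hS : ∃ R, ∀ r ≥ R, 1 ≤ S r)
    (hS2 : ∀ κ : ℝ, 0 < κ → ∃ R, ∀ r ≥ R, S r ≤ 2 * r ^ κ) {ε : ℝ} (hε : 0 < ε) (R₀ : ℝ) :
    ∃ R ≥ R₀, S (35 * R) ≤ (1 + ε) * S R := by
  by_contra hcon
  push Not at hcon
  obtain ⟨R₁, h1⟩ := hS
  set t := Real.exp (Real.log (1 + ε) / 2) with ht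
  have hlog : 0 < Real.log (1 + ε) := Real.log_pos (by linarith)
  have ht1 : 1 < t := by rw [ht]; exact Real.one_lt_exp_iff.2 (by linarith)
  have ht2 : t * t = 1 + ε := by
    rw [ht, ← Real.exp_add, add_halves, Real.exp_log (by linarith)]
  have hl35 : 0 < Real.log 35 := Real.log_pos (by norm_num)
  set κ := Real.log (1 + ε) / 2 / Real.log 35 with hκ
  have hκ0 : 0 < κ := by positivity
  have h35 : (35:ℝ) ^ κ = t := by
    rw [Real.rpow_def_of_pos (by norm_num), ht, hκ]
    congr 1
    field_simp
  obtain ⟨R₂, h2⟩ := hS2 κ hκ0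
  set R := max (max R₀ R₁) (max R₂ 1) with hR
  have hRa : R₀ ≤ R := (le_max_left _ _).trans (le_max_left _ _)
  have hRb : R₁ ≤ R := (le_max_right _ _).trans (le_max_left _ _)
  have hRc : R₂ ≤ R := (le_max_left _ _).trans (le_max_right _ _)
  have hRd : 1 ≤ R := (le_max_right _ _).trans (le_max_right _ _)
  have hge : ∀ j : ℕ, R ≤ 35 ^ j * R := fun j =>
    le_mul_of_one_le_left (by linarith) (one_le_pow₀ (by norm_num))
  have hlow : ∀ j : ℕ, (t * t) ^ j ≤ S (35 ^ j * R) := by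
    intro j
    induction j with
    | zero => simpa using h1 R hRb
    | succ j ih =>
      have := hcon (35 ^ j * R) (hRa.trans (hge j))
      rw [pow_succ', pow_succ', ht2, mul_assoc 35]
      rw [ht2] at ih
      nlinarith
  have hup : ∀ j : ℕ, t ^ j ≤ 2 * R ^ κ := by
    intro j
    have h3 := (hlow j).trans (h2 _ (hRc.trans (hge j)))
    have h4 : ((35:ℝ) ^ j) ^ κ = t ^ j := by
      rw [← Real.rpow_natCast, ← Real.rpow_mul (by norm_num), mul_comm (j:ℝ),
        Real.rpow_mul (by norm_num), h35, Real.rpow_natCast]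
    rw [Real.mul_rpow (by positivity) (by linarith), h4, mul_pow] at h3
    have : 0 < t ^ j := by positivity
    nlinarith
  obtain ⟨j, hj⟩ := pow_unbounded_of_one_lt (2 * R ^ κ) ht1
  linarith [hup j]

/-- What is known on a good circle `‖z‖ = r`: `log ‖f‖` lies in
`[B - ε T, B]`, the logarithmic derivative of `f` is at most `ε`, and `B ≥ 1 / ε`. -/
def GoodOn (f : ℂ → ℂ) (r ε B T : ℝ) : Prop :=
  1 / ε ≤ B ∧ ∀ z : ℂ, ‖z‖ = r →
    f z ≠ 0 ∧ B - ε * T ≤ Real.log ‖f z‖ ∧ Real.log ‖f z‖ ≤ B ∧ ‖deriv f z‖ ≤ ε * ‖f z‖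

set_option maxHeartbeats 1000000 in
/-- Arbitrarily large circles are good for `f` and `g` simultaneously. The error is relative to
`T = B + B'`, since the growth step is applied to the sum of the two logarithms and says nothing
about the smaller function alone. -/
lemma exists_good_circle {f g : ℂ → ℂ} (hf : Differentiable ℂ f) (hg : Differentiable ℂ g)
    (hfs : SlowGrowth f) (hgs : SlowGrowth g) (hfn : ¬∃ c, ∀ z, f z = c)
    (hgn : ¬∃ c, ∀ z, g z = c) {ε : ℝ} (hε : 0 < ε) (R₀ : ℝ) :
    ∃ r ≥ R₀, ∃ B B', GoodOn f r ε B (B + B') ∧ GoodOn g r ε B' (B + B') := by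
  set C := max 1 (1 / ε) with hC
  obtain ⟨Rf, hRf0, hRf⟩ := exists_le_log_maxMod hf hfn C
  obtain ⟨Rg, hRg0, hRg⟩ := exists_le_log_maxMod hg hgn C
  have hC1 : 1 ≤ C := le_max_left _ _
  have hCε : 1 / ε ≤ C := le_max_right _ _
  set S : ℝ → ℝ := fun r => Real.log (maxMod f r) + Real.log (maxMod g r) with hS
  have hSle : ∀ κ : ℝ, 0 < κ → ∃ R, ∀ r ≥ R, S r ≤ 2 * r ^ κ := by
    intro κ hκ
    obtain ⟨R1, h1⟩ := hfs.log_maxMod_le hf hκ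
    obtain ⟨R2, h2⟩ := hgs.log_maxMod_le hg hκ
    refine ⟨max R1 R2, fun r hr => ?_⟩
    have := h1 r ((le_max_left _ _).trans hr)
    have := h2 r ((le_max_right _ _).trans hr)
    simp only [hS]; linarith
  -- `circle_estimate` loses `10 δ + 2 A` with `A = 8 δ`, hence the constant `26`
  set ε' := ε / 26 with hε'
  have hε'0 : 0 < ε' := by positivity
  obtain ⟨Rq, hRq⟩ := hSle (1 / 4) (by norm_num)
  obtain ⟨R, hR, hstep⟩ := exists_slow_step (S := S)
    ⟨max Rf Rg, fun r hr => by
      have := (hRf r ((le_max_left _ _).trans hr)).2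
      have := (hRg r ((le_max_right _ _).trans hr)).2
      simp only [hS]; linarith⟩ hSle hε'0
    (max (max (max R₀ 1) (max Rf Rg)) (max Rq ((256 * ε' + 6) ^ 4)))
  simp only [ge_iff_le, max_le_iff] at hR
  obtain ⟨⟨⟨hR1, hR2⟩, hR3, hR4⟩, hR5, hR6⟩ := hR
  have hR0 : 0 < R := by linarith
  obtain ⟨hMf, hMf2⟩ := hRf R hR3
  obtain ⟨hMg, hMg2⟩ := hRg R hR4
  obtain ⟨hMf', hMf2'⟩ := hRf (35 * R) (by linarith)
  obtain ⟨hMg', hMg2'⟩ := hRg (35 * R) (by linarith)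
  have hmf : Real.log (maxMod f R) ≤ Real.log (maxMod f (35 * R)) :=
    Real.log_le_log hMf (maxMod_mono hf hR0.le (by linarith))
  have hmg : Real.log (maxMod g R) ≤ Real.log (maxMod g (35 * R)) :=
    Real.log_le_log hMg (maxMod_mono hg hR0.le (by linarith))
  set B := Real.log (maxMod f (35 * R)) with hB
  set B' := Real.log (maxMod g (35 * R)) with hB'
  have hSR : S R = Real.log (maxMod f R) + Real.log (maxMod g R) := rfl
  have hS35 : S (35 * R) = B + B' := rfl
  set δ := ε' * S R with hδ
  have hδ0 : 0 < δ := by rw [hδ, hSR]; exact mul_pos hε'0 (by linarith)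
  have hstep' : B + B' ≤ S R + δ := by rw [← hS35, hδ]; linarith
  have hfB : ∀ z : ℂ, ‖z‖ ≤ 35 * R → ‖f z‖ ≤ Real.exp B := by
    intro z hz
    rw [hB, Real.exp_log hMf']
    exact (maxMod_spec hf (by linarith)).2 z hz
  have hgB : ∀ z : ℂ, ‖z‖ ≤ 35 * R → ‖g z‖ ≤ Real.exp B' := by
    intro z hz
    rw [hB', Real.exp_log hMg']
    exact (maxMod_spec hg (by linarith)).2 z hz
  obtain ⟨⟨zf, hzf, hzf2⟩, -⟩ := maxMod_spec hf hR0.le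
  obtain ⟨⟨zg, hzg, hzg2⟩, -⟩ := maxMod_spec hg hR0.le
  have hfz : Real.exp (B - δ) ≤ ‖f zf‖ := by
    rw [hzf2, ← Real.le_log_iff_exp_le hMf]; linarith
  have hgz : Real.exp (B' - δ) ≤ ‖g zg‖ := by
    rw [hzg2, ← Real.le_log_iff_exp_le hMg]; linarith
  obtain ⟨s, E, hfac, hE⟩ := exists_factorization hf hR0 (fun z hz => hfB z hz.le) hzf.le hfz
  obtain ⟨s', E', hfac', hE'⟩ := exists_factorization hg hR0 (fun z hz => hgB z hz.le) hzg.le hgz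
  have hcard := (hfac.bounds hR0 (fun z hz => hfB z hz.le) hzf.le hfz).2.2
  have hcard' := (hfac'.bounds hR0 (fun z hz => hgB z hz.le) hzg.le hgz).2.2
  obtain ⟨x, hx1, hx2, hx3, hx4⟩ := exists_good_radius ((s + s').map (fun w => ‖w‖ / R))
  rw [Multiset.map_map, Multiset.map_add, Multiset.sum_add, Multiset.card_map, Multiset.card_add,
    Nat.cast_add] at hx4
  have hnn : ∀ s : Multiset ℂ, 0 ≤ (s.map (fun w => (√|x - ‖w‖ / R|)⁻¹)).sum := by
    intro s
    refine Multiset.sum_nonneg fun y hy => ?_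
    obtain ⟨w, -, rfl⟩ := Multiset.mem_map.1 hy
    positivity
  have hsum : (s.map (fun w => (√|x - ‖w‖ / R|)⁻¹)).sum +
      (s'.map (fun w => (√|x - ‖w‖ / R|)⁻¹)).sum ≤ 8 * δ := by
    refine le_trans hx4 ?_
    linarith
  have hxs : ∀ w ∈ s, x ≠ ‖w‖ / R := fun w hw =>
    hx3 _ (Multiset.mem_map_of_mem _ (Multiset.mem_add.2 (Or.inl hw)))
  have hxs' : ∀ w ∈ s', x ≠ ‖w‖ / R := fun w hw =>
    hx3 _ (Multiset.mem_map_of_mem _ (Multiset.mem_add.2 (Or.inr hw)))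
  have hdel : ((8 * δ) ^ 2 + 3 * δ) / R ≤ ε := by
    set T := R ^ (1 / 4 : ℝ) with hT
    have hT4 : T ^ 4 = R := by
      rw [hT, ← Real.rpow_natCast, ← Real.rpow_mul hR0.le]; norm_num
    have hT0 : 0 ≤ T := by positivity
    have hT1 : 256 * ε' + 6 ≤ T := by
      refine le_of_pow_le_pow_left₀ (n := 4) (by norm_num) hT0 ?_
      rw [hT4]; exact hR6
    have hST : δ ≤ ε' * (2 * T) := by
      rw [hδ]; exact mul_le_mul_of_nonneg_left (hRq R hR5) hε'0.le
    rw [div_le_iff₀ hR0, ← hT4]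
    have hT1' : 1 ≤ T := by linarith
    have e1 : (8 * δ) ^ 2 ≤ (8 * (ε' * (2 * T))) ^ 2 := by gcongr
    have e2 : T ≤ T ^ 2 := by nlinarith
    have e3 : ε' * T ≤ ε' * T ^ 2 := by gcongr
    have e4 : ε' * T ^ 2 * (256 * ε' + 6) ≤ ε' * T ^ 2 * T ^ 2 := by
      gcongr; linarith
    have e5 : ε' * T ^ 2 * T ^ 2 ≤ ε * T ^ 4 := by
      rw [mul_assoc, ← pow_add]
      gcongr
      rw [hε']; linarith
    have e6 : (8 * (ε' * (2 * T))) ^ 2 = ε' * T ^ 2 * (256 * ε') := by ring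
    have e7 : ε' * T ^ 2 * (256 * ε' + 6) = ε' * T ^ 2 * (256 * ε') + 6 * (ε' * T ^ 2) := by ring
    linarith
  have hT0 : 26 * δ ≤ ε * (B + B') := by
    have : S R ≤ B + B' := by rw [hSR]; linarith
    calc 26 * δ = ε * S R := by rw [hδ, hε']; ring
      _ ≤ _ := by gcongr
  have hxR : x * R ≤ 35 * R := by gcongr; linarith
  refine ⟨x * R, by nlinarith, B, B', ⟨hCε.trans hMf2', fun z hz => ?_⟩,
    ⟨hCε.trans hMg2', fun z hz => ?_⟩⟩
  · obtain ⟨h1, h2, h3⟩ := circle_estimate hR0 hδ0 (fun z hz => hfB z hz.le) hzf.le hfz hfac hE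
      hx2 hxs (A := 8 * δ) (by linarith [hnn s']) hz
    refine ⟨h1, by linarith, ?_, h3.trans (by gcongr)⟩
    exact (Real.log_le_iff_le_exp (norm_pos_iff.2 h1)).2 (hfB z (by rw [hz]; exact hxR))
  · obtain ⟨h1, h2, h3⟩ := circle_estimate hR0 hδ0 (fun z hz => hgB z hz.le) hzg.le hgz hfac' hE'
      hx2 hxs' (A := 8 * δ) (by linarith [hnn s]) hz
    refine ⟨h1, by linarith, ?_, h3.trans (by gcongr)⟩
    exact (Real.log_le_iff_le_exp (norm_pos_iff.2 h1)).2 (hgB z (by rw [hz]; exact hxR))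

/-! ### The auxiliary entire functions -/

lemma entire_deriv {f : ℂ → ℂ} (hf : Differentiable ℂ f) : Differentiable ℂ (deriv f) :=
  fun z => (hf.analyticAt z).deriv.differentiableAt

lemma exists_deriv_ne_zero {f : ℂ → ℂ} (hf : Differentiable ℂ f) (hn : ¬∃ c, ∀ z, f z = c) :
    ∃ z, deriv f z ≠ 0 := by
  by_contra hcon
  push Not at hcon
  exact hn ⟨f 0, fun z => is_const_of_deriv_eq_zero hf hcon z 0⟩

lemma analyticOrderAt_ne_top_of_entire {f : ℂ → ℂ} (hf : Differentiable ℂ f) (h0 : ∃ z, f z ≠ 0)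
    (z : ℂ) : analyticOrderAt f z ≠ ⊤ := by
  intro htop
  obtain ⟨w, hw⟩ := h0
  have := (AnalyticOnNhd.analyticOrderAt_eq_top_iff_eq_zero z (fun z => hf.analyticAt z)).1 htop
  exact hw (by rw [this]; rfl)

lemma entire_prod_eq_zero {ι : Type*} (s : Finset ι) (h : ι → ℂ → ℂ)
    (hd : ∀ i, Differentiable ℂ (h i)) (h0 : ∀ z, ∏ i ∈ s, h i z = 0) :
    ∃ i ∈ s, ∀ z, h i z = 0 := by
  classical
  induction s using Finset.induction_on with
  | empty => simp at h0
  | insert i s hi ih =>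
    simp only [Finset.prod_insert hi] at h0
    rcases entire_mul_eq_zero (hd i) (Differentiable.fun_finsetProd fun j _ => hd j) h0 with h1 | h1
    · exact ⟨i, Finset.mem_insert_self i s, h1⟩
    · obtain ⟨j, hj, hj2⟩ := ih h1
      exact ⟨j, Finset.mem_insert_of_mem hj, hj2⟩

/-- At an `a`- or `b`-point, `(f - a) (f - b)` vanishes to one order more than `f'`. -/
lemma analyticOrderAt_two_values {f : ℂ → ℂ} (hf : Differentiable ℂ f) {a b : ℂ} (hab : a ≠ b)
    {z₀ : ℂ} (h : f z₀ = a ∨ f z₀ = b) :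
    analyticOrderAt (fun z => (f z - a) * (f z - b)) z₀ = analyticOrderAt (deriv f) z₀ + 1 := by
  have hA : ∀ c : ℂ, AnalyticAt ℂ (fun z => f z - c) z₀ := fun c =>
    (hf.sub_const c).analyticAt z₀
  have hmul : analyticOrderAt (fun z => (f z - a) * (f z - b)) z₀ =
      analyticOrderAt (fun z => f z - a) z₀ + analyticOrderAt (fun z => f z - b) z₀ :=
    analyticOrderAt_mul (hA a) (hA b)
  have hd := (hf.analyticAt z₀).analyticOrderAt_deriv_add_one
  rw [hmul, hd]
  rcases h with h | h
  · rw [h, (hA b).analyticOrderAt_eq_zero.2 (by rw [h]; exact sub_ne_zero.2 hab), add_zero]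
  · rw [h, (hA a).analyticOrderAt_eq_zero.2 (by rw [h]; exact sub_ne_zero.2 hab.symm), zero_add]

/-- The quotient `f' F / ((f - a) (f - b))` is entire when `F` vanishes at all `a`- and `b`-points
of `f`: the poles of `f' / ((f - a) (f - b))` are simple. -/
lemma exists_entire_logDeriv_mul {f F : ℂ → ℂ} (hf : Differentiable ℂ f) (hF : Differentiable ℂ F)
    (hn : ¬∃ c, ∀ z, f z = c) {a b : ℂ} (hab : a ≠ b)
    (hz : ∀ z, f z = a ∨ f z = b → F z = 0) :
    ∃ ψ : ℂ → ℂ, Differentiable ℂ ψ ∧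
      ∀ z, ψ z * ((f z - a) * (f z - b)) = deriv f z * F z := by
  refine exists_entire_quotient (A := fun z => deriv f z * F z)
    (B := fun z => (f z - a) * (f z - b)) ((entire_deriv hf).fun_mul hF)
    ((hf.sub_const a).fun_mul (hf.sub_const b)) ?_ ?_
  · by_contra hcon
    push Not at hcon
    rcases entire_mul_eq_zero (hf.sub_const a) (hf.sub_const b) hcon with h | h
    · exact hn ⟨a, fun z => sub_eq_zero.1 (h z)⟩
    · exact hn ⟨b, fun z => sub_eq_zero.1 (h z)⟩
  · intro z
    by_cases h : f z = a ∨ f z = b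
    · rw [analyticOrderAt_two_values hf hab h]
      have : analyticOrderAt (fun z => deriv f z * F z) z =
          analyticOrderAt (deriv f) z + analyticOrderAt F z :=
        analyticOrderAt_mul ((entire_deriv hf).analyticAt z) (hF.analyticAt z)
      rw [this]
      gcongr
      exact Order.one_le_iff_ne_zero.2 ((hF.analyticAt z).analyticOrderAt_ne_zero.2 (hz z h))
    · have h0 : analyticOrderAt (fun z => (f z - a) * (f z - b)) z = 0 := by
        rw [AnalyticAt.analyticOrderAt_eq_zero
          (((hf.sub_const a).fun_mul (hf.sub_const b)).analyticAt z)]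
        push Not at h
        exact mul_ne_zero (sub_ne_zero.2 h.1) (sub_ne_zero.2 h.2)
      rw [h0]
      exact zero_le

/-- Value of `ψ = f' F / ((f - a) (f - b))` at an `a`-point of `f` where `F` vanishes: it is
`F'` times the multiplicity, up to the factor `a - b`. -/
lemma quotient_value {f F ψ : ℂ → ℂ} (hf : Differentiable ℂ f) (hF : Differentiable ℂ F)
    (hψ : Differentiable ℂ ψ) {a b : ℂ}
    (h : ∀ z, ψ z * ((f z - a) * (f z - b)) = deriv f z * F z) {z₀ : ℂ} (hz : f z₀ = a)
    (hFz : F z₀ = 0) {p : ℕ} (hp : analyticOrderAt (deriv f) z₀ = p) :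
    ψ z₀ * (a - b) = (p + 1 : ℕ) * deriv F z₀ := by
  have hm : analyticOrderAt (fun z => f z - a) z₀ = (p + 1 : ℕ) := by
    rw [← hz, ← (hf.analyticAt z₀).analyticOrderAt_deriv_add_one, hp]; rfl
  obtain ⟨u, hu, hu0, hfu⟩ := ((hf.sub_const a).analyticAt z₀).analyticOrderAt_eq_natCast.1 hm
  have hder : ∀ᶠ z in 𝓝 z₀, deriv f z =
      (p + 1 : ℕ) * (z - z₀) ^ p * u z + (z - z₀) ^ (p + 1) * deriv u z := by
    have h1 : (fun z => f z - a) =ᶠ[𝓝 z₀] fun z => (z - z₀) ^ (p + 1) * u z := by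
      filter_upwards [hfu] with z hz
      rw [hz, smul_eq_mul]
    filter_upwards [h1.deriv, hu.eventually_analyticAt] with z h2 h3
    rw [deriv_sub_const] at h2
    rw [h2]
    have h4 := ((((hasDerivAt_id z).sub_const z₀).fun_pow (p + 1)).fun_mul
      h3.differentiableAt.hasDerivAt).deriv
    simpa using h4
  have hv : Differentiable ℂ (dslope F z₀) := by
    rw [← differentiableOn_univ] at hF ⊢
    exact (Complex.differentiableOn_dslope univ_mem).2 hF
  have hFv : ∀ z, F z = (z - z₀) * dslope F z₀ z := by
    intro z
    have := sub_smul_dslope F z₀ z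
    rw [hFz, sub_zero, smul_eq_mul] at this
    exact this.symm
  have hne : (fun z => ψ z * (u z * (f z - b))) =ᶠ[𝓝[≠] z₀]
      fun z => ((p + 1 : ℕ) * u z + (z - z₀) * deriv u z) * dslope F z₀ z := by
    filter_upwards [hfu.filter_mono nhdsWithin_le_nhds, hder.filter_mono nhdsWithin_le_nhds,
      self_mem_nhdsWithin] with z h1 h2 h3
    have h4 := h z
    rw [h1, h2, hFv z, smul_eq_mul] at h4
    have h5 : (z - z₀) ^ (p + 1) ≠ 0 := pow_ne_zero _ (sub_ne_zero.2 h3)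
    refine mul_left_cancel₀ h5 ?_
    rw [pow_succ] at h4 ⊢
    linear_combination h4
  have hc1 : ContinuousAt (fun z => ψ z * (u z * (f z - b))) z₀ :=
    hψ.continuous.continuousAt.mul
      (hu.continuousAt.mul (hf.sub_const b).continuous.continuousAt)
  have hc2 : ContinuousAt
      (fun z => ((p + 1 : ℕ) * u z + (z - z₀) * deriv u z) * dslope F z₀ z) z₀ :=
    ((continuousAt_const.mul hu.continuousAt).add
      ((continuousAt_id.sub continuousAt_const).mul hu.deriv.continuousAt)).mul
      hv.continuous.continuousAt
  have heq := ((hc1.eventuallyEq_nhds_iff_eventuallyEq_nhdsNE hc2).1 hne).self_of_nhds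
  simp only [hz, sub_self, zero_mul, add_zero, dslope_same] at heq
  refine mul_left_cancel₀ hu0 ?_
  linear_combination heq

/-- The product of the nine functions `n ψ - m φ` with `1 ≤ m, n ≤ 3`. -/
def nineProd (ψ φ : ℂ → ℂ) (z : ℂ) : ℂ :=
  ∏ i ∈ Finset.range 3 ×ˢ Finset.range 3, ((i.2 + 1 : ℕ) * ψ z - (i.1 + 1 : ℕ) * φ z)

lemma differentiable_nineProd {ψ φ : ℂ → ℂ} (hψ : Differentiable ℂ ψ) (hφ : Differentiable ℂ φ) :
    Differentiable ℂ (nineProd ψ φ) :=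
  Differentiable.fun_finsetProd fun _ _ => (hψ.const_mul _).sub (hφ.const_mul _)

/-- At a shared point of multiplicities `(p + 1, k + 1)` the two quotients are proportional. -/
lemma quotient_values_proportional {f g F ψ φ : ℂ → ℂ} (hf : Differentiable ℂ f)
    (hg : Differentiable ℂ g) (hF : Differentiable ℂ F)
    (hψ : Differentiable ℂ ψ) (hφ : Differentiable ℂ φ) {a b : ℂ} (hab : a ≠ b)
    (h : ∀ z, ψ z * ((f z - a) * (f z - b)) = deriv f z * F z)
    (h' : ∀ z, φ z * ((g z - a) * (g z - b)) = deriv g z * F z) {z₀ : ℂ} (hz : f z₀ = a)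
    (hz' : g z₀ = a) (hFz : F z₀ = 0) {p k : ℕ} (hp : analyticOrderAt (deriv f) z₀ = p)
    (hk : analyticOrderAt (deriv g) z₀ = k) :
    ((k + 1 : ℕ) : ℂ) * ψ z₀ - (p + 1 : ℕ) * φ z₀ = 0 := by
  have h1 := quotient_value hf hF hψ h hz hFz hp
  have h2 := quotient_value hg hF hφ h' hz' hFz hk
  refine mul_right_cancel₀ (sub_ne_zero.2 hab) ?_
  linear_combination ((k + 1 : ℕ) : ℂ) * h1 - ((p + 1 : ℕ) : ℂ) * h2

/-- The auxiliary quotient: multiplicities `(m, n)` with `m + n ≥ 5` are compensated by the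
derivatives, the remaining ones by a zero of `nineProd`. -/
lemma exists_aux_quotient {f g F ψ φ : ℂ → ℂ} (hf : Differentiable ℂ f)
    (hg : Differentiable ℂ g) (hF : Differentiable ℂ F)
    (hψ : Differentiable ℂ ψ) (hφ : Differentiable ℂ φ) {a b : ℂ} (hab : a ≠ b)
    (hfn : ¬∃ c, ∀ z, f z = c) (hgn : ¬∃ c, ∀ z, g z = c)
    (h : ∀ z, ψ z * ((f z - a) * (f z - b)) = deriv f z * F z)
    (h' : ∀ z, φ z * ((g z - a) * (g z - b)) = deriv g z * F z)
    (hsa : ∀ z, f z = a ↔ g z = a) (hsb : ∀ z, f z = b ↔ g z = b)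
    (hz : ∀ z, f z = a ∨ f z = b → F z = 0) :
    ∃ Q : ℂ → ℂ, Differentiable ℂ Q ∧ ∀ z,
      Q z * (((f z - a) * (f z - b)) * ((g z - a) * (g z - b))) ^ 3 =
        (deriv f z * deriv g z) ^ 5 * nineProd ψ φ z ^ 10 := by
  have hPf : Differentiable ℂ (fun z => (f z - a) * (f z - b)) :=
    (hf.sub_const a).fun_mul (hf.sub_const b)
  have hPg : Differentiable ℂ (fun z => (g z - a) * (g z - b)) :=
    (hg.sub_const a).fun_mul (hg.sub_const b)
  have hX := differentiable_nineProd hψ hφ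
  have hff := entire_deriv hf
  have hgg := entire_deriv hg
  refine exists_entire_quotient
    (A := fun z => (deriv f z * deriv g z) ^ 5 * nineProd ψ φ z ^ 10)
    (B := fun z => (((f z - a) * (f z - b)) * ((g z - a) * (g z - b))) ^ 3)
    (((hff.fun_mul hgg).fun_pow 5).fun_mul (hX.fun_pow 10)) ((hPf.fun_mul hPg).fun_pow 3) ?_ ?_
  · by_contra hcon
    push Not at hcon
    have h1 : ∀ z, ((f z - a) * (f z - b)) * ((g z - a) * (g z - b)) = 0 := fun z =>
      eq_zero_of_pow_eq_zero (hcon z)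
    rcases entire_mul_eq_zero hPf hPg h1 with h | h
    · rcases entire_mul_eq_zero (hf.sub_const a) (hf.sub_const b) h with h | h
      · exact hfn ⟨a, fun z => sub_eq_zero.1 (h z)⟩
      · exact hfn ⟨b, fun z => sub_eq_zero.1 (h z)⟩
    · rcases entire_mul_eq_zero (hg.sub_const a) (hg.sub_const b) h with h | h
      · exact hgn ⟨a, fun z => sub_eq_zero.1 (h z)⟩
      · exact hgn ⟨b, fun z => sub_eq_zero.1 (h z)⟩
  · intro z
    have eB : analyticOrderAt
        (fun z => (((f z - a) * (f z - b)) * ((g z - a) * (g z - b))) ^ 3) z =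
        3 • (analyticOrderAt (fun z => (f z - a) * (f z - b)) z +
          analyticOrderAt (fun z => (g z - a) * (g z - b)) z) := by
      rw [← analyticOrderAt_mul (hPf.analyticAt z) (hPg.analyticAt z)]
      exact analyticOrderAt_pow ((hPf.fun_mul hPg).analyticAt z) 3
    have eA : analyticOrderAt
        (fun z => (deriv f z * deriv g z) ^ 5 * nineProd ψ φ z ^ 10) z =
        5 • (analyticOrderAt (deriv f) z + analyticOrderAt (deriv g) z) +
          10 • analyticOrderAt (nineProd ψ φ) z := by
      rw [← analyticOrderAt_mul (hff.analyticAt z) (hgg.analyticAt z),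
        ← analyticOrderAt_pow ((hff.mul hgg).analyticAt z) 5,
        ← analyticOrderAt_pow (hX.analyticAt z) 10]
      exact analyticOrderAt_mul (((hff.fun_mul hgg).fun_pow 5).analyticAt z)
        ((hX.fun_pow 10).analyticAt z)
    by_cases hc : f z = a ∨ f z = b
    · have hc' : g z = a ∨ g z = b := by rwa [← hsa, ← hsb]
      obtain ⟨p, hp⟩ := ENat.ne_top_iff_exists.1
        (analyticOrderAt_ne_top_of_entire hff (exists_deriv_ne_zero hf hfn) z)
      obtain ⟨k, hk⟩ := ENat.ne_top_iff_exists.1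
        (analyticOrderAt_ne_top_of_entire hgg (exists_deriv_ne_zero hg hgn) z)
      rw [eA, eB, analyticOrderAt_two_values hf hab hc, analyticOrderAt_two_values hg hab hc',
        ← hp, ← hk]
      have key : ((3 * ((p + 1) + (k + 1)) : ℕ) : ℕ∞) ≤
          ((5 * (p + k) : ℕ) : ℕ∞) + 10 • analyticOrderAt (nineProd ψ φ) z := by
        by_cases hpk : 3 ≤ p + k
        · refine le_trans (Nat.cast_le.2 ?_) (le_add_right le_rfl)
          omega
        · have hX0 : nineProd ψ φ z = 0 := by
            refine Finset.prod_eq_zero (i := (p, k)) ?_ ?_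
            · simp only [Finset.mem_product, Finset.mem_range]; omega
            · rcases hc with hc1 | hc1
              · exact quotient_values_proportional hf hg hF hψ hφ hab h h' hc1 ((hsa z).1 hc1)
                  (hz z (Or.inl hc1)) hp.symm hk.symm
              · refine quotient_values_proportional hf hg hF hψ hφ hab.symm
                  (fun z => ?_) (fun z => ?_) hc1 ((hsb z).1 hc1)
                  (hz z (Or.inr hc1)) hp.symm hk.symm
                · rw [mul_comm (f z - b)]; exact h z
                · rw [mul_comm (g z - b)]; exact h' z
          have hX1 : 1 ≤ analyticOrderAt (nineProd ψ φ) z :=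
            Order.one_le_iff_ne_zero.2 ((hX.analyticAt z).analyticOrderAt_ne_zero.2 hX0)
          calc ((3 * ((p + 1) + (k + 1)) : ℕ) : ℕ∞) ≤ ((5 * (p + k) + 10 : ℕ) : ℕ∞) := by
                refine Nat.cast_le.2 ?_; omega
            _ = ((5 * (p + k) : ℕ) : ℕ∞) + 10 • (1 : ℕ∞) := by push_cast; simp
            _ ≤ _ := by gcongr
      simpa [nsmul_eq_mul, mul_add] using key
    · have hc' : ¬(g z = a ∨ g z = b) := by rwa [← hsa, ← hsb]
      push Not at hc hc'
      have h0 : analyticOrderAt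
          (fun z => (((f z - a) * (f z - b)) * ((g z - a) * (g z - b))) ^ 3) z = 0 := by
        rw [AnalyticAt.analyticOrderAt_eq_zero (((hPf.fun_mul hPg).fun_pow 3).analyticAt z)]
        exact pow_ne_zero _ (mul_ne_zero
          (mul_ne_zero (sub_ne_zero.2 hc.1) (sub_ne_zero.2 hc.2))
          (mul_ne_zero (sub_ne_zero.2 hc'.1) (sub_ne_zero.2 hc'.2)))
      rw [h0]
      exact zero_le

/-! ### The uniqueness theorem -/

/-- On arbitrarily large circles `f` is large with small logarithmic derivative, and `g` is at
most `C` times as large. -/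
def Dominates (f g : ℂ → ℂ) (C : ℝ) : Prop :=
  ∀ ε > 0, ∀ R₀ : ℝ, ∃ r ≥ R₀, ∀ z : ℂ, ‖z‖ = r →
    1 / ε ≤ ‖f z‖ ∧ ‖deriv f z‖ ≤ ε * ‖f z‖ ∧ ‖g z‖ ≤ C * ‖f z‖

/-- On arbitrarily large circles `f` and `g` are large with small logarithmic derivatives, and
have comparable logarithms: all values of `log ‖f‖` and `log ‖g‖` lie in `[s, 1.01 s]`. -/
def BalancedPair (f g : ℂ → ℂ) : Prop :=
  ∀ ε > 0, ∀ R₀ : ℝ, ∃ r ≥ R₀, ∃ s : ℝ, 1 / ε ≤ s ∧ ∀ z : ℂ, ‖z‖ = r →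
    (Real.exp s ≤ ‖f z‖ ∧ ‖f z‖ ≤ Real.exp (101 / 100 * s) ∧ ‖deriv f z‖ ≤ ε * ‖f z‖) ∧
    (Real.exp s ≤ ‖g z‖ ∧ ‖g z‖ ≤ Real.exp (101 / 100 * s) ∧ ‖deriv g z‖ ≤ ε * ‖g z‖)

lemma GoodOn.dominates_aux {f g : ℂ → ℂ} {r ε B B' T : ℝ} (hf : GoodOn f r ε B T)
    (hg : GoodOn g r ε B' T) (h : B' ≤ B - ε * T) {ε₁ : ℝ} (hε : 0 < ε) (hε₁ : ε ≤ ε₁)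
    {z : ℂ} (hz : ‖z‖ = r) :
    1 / ε₁ ≤ ‖f z‖ ∧ ‖deriv f z‖ ≤ ε₁ * ‖f z‖ ∧ ‖g z‖ ≤ 1 * ‖f z‖ := by
  obtain ⟨f0, f1, -, f3⟩ := hf.2 z hz
  obtain ⟨g0, -, g2, -⟩ := hg.2 z hz
  have hf0 := norm_pos_iff.2 f0
  have hg0 := norm_pos_iff.2 g0
  refine ⟨?_, f3.trans (by gcongr), ?_⟩
  · have h1 : 1 / ε₁ ≤ 1 / ε := one_div_le_one_div_of_le hε hε₁
    have h2 := Real.log_le_sub_one_of_pos hf0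
    linarith [hg.1]
  · rw [one_mul, ← Real.log_le_log_iff hg0 hf0]
    linarith

/-- If neither function dominates the other, the two bounds `B` and `B'` differ by at most
`ε (B + B')`, so the logarithms are comparable. -/
lemma dominates_or_balanced {f g : ℂ → ℂ} (hf : Differentiable ℂ f) (hg : Differentiable ℂ g)
    (hfs : SlowGrowth f) (hgs : SlowGrowth g) (hfn : ¬∃ c, ∀ z, f z = c)
    (hgn : ¬∃ c, ∀ z, g z = c) : Dominates f g 1 ∨ Dominates g f 1 ∨ BalancedPair f g := by
  by_contra hcon
  rw [not_or, not_or] at hcon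
  obtain ⟨h1, h2, h3⟩ := hcon
  unfold Dominates at h1 h2
  rw [not_forall] at h1 h2
  obtain ⟨ε₁, h1⟩ := h1
  obtain ⟨ε₂, h2⟩ := h2
  rw [Classical.not_imp, not_forall] at h1 h2
  obtain ⟨hε₁, R₁, h1⟩ := h1
  obtain ⟨hε₂, R₂, h2⟩ := h2
  refine h3 fun ε hε R₀ => ?_
  set ε₀ := min (min ε₁ ε₂) (min (ε / 2) (1 / 1000)) with hε₀
  have e1 : ε₀ ≤ ε₁ := (min_le_left _ _).trans (min_le_left _ _)
  have e2 : ε₀ ≤ ε₂ := (min_le_left _ _).trans (min_le_right _ _)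
  have e3 : ε₀ ≤ ε / 2 := (min_le_right _ _).trans (min_le_left _ _)
  have e4 : ε₀ ≤ 1 / 1000 := (min_le_right _ _).trans (min_le_right _ _)
  have e0 : 0 < ε₀ := lt_min (lt_min hε₁ hε₂) (lt_min (by linarith) (by norm_num))
  obtain ⟨r, hr, B, B', gf, gg⟩ := exists_good_circle hf hg hfs hgs hfn hgn e0
    (max R₀ (max R₁ R₂))
  have r0 : R₀ ≤ r := (le_max_left _ _).trans hr
  have r1 : R₁ ≤ r := ((le_max_left _ _).trans (le_max_right _ _)).trans hr
  have r2 : R₂ ≤ r := ((le_max_right _ _).trans (le_max_right _ _)).trans hr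
  have hfg : B - ε₀ * (B + B') < B' := by
    by_contra hle
    push Not at hle
    exact h1 ⟨r, r1, fun z hz => gf.dominates_aux gg hle e0 e1 hz⟩
  have hgf : B' - ε₀ * (B + B') < B := by
    by_contra hle
    push Not at hle
    exact h2 ⟨r, r2, fun z hz => gg.dominates_aux gf hle e0 e2 hz⟩
  set M := max B B' with hM
  have m1 : B ≤ M := le_max_left _ _
  have m2 : B' ≤ M := le_max_right _ _
  have hB := gf.1
  have hB' := gg.1
  have hinv : 2 / ε ≤ 1 / ε₀ := by
    rw [div_le_div_iff₀ hε e0]; linarith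
  have hMpos : 0 < M := lt_of_lt_of_le (by positivity : 0 < 1 / ε₀) (hB.trans m1)
  have t1 : ε₀ * (B + B') ≤ ε₀ * (2 * M) := by gcongr; linarith
  have t2 : ε₀ * M ≤ 1 / 1000 * M := by gcongr
  have b1 : M - ε₀ * (2 * M) ≤ B := by
    rcases max_cases B B' with ⟨h, -⟩ | ⟨h, -⟩ <;> rw [← hM] at h
    · have : 0 ≤ ε₀ * (2 * M) := by positivity
      linarith
    · linarith
  have b2 : M - ε₀ * (2 * M) ≤ B' := by
    rcases max_cases B B' with ⟨h, -⟩ | ⟨h, -⟩ <;> rw [← hM] at h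
    · linarith
    · have : 0 ≤ ε₀ * (2 * M) := by positivity
      linarith
  have hid : 1 / ε = 2 / ε / 2 := by ring
  refine ⟨r, r0, M - 4 * (ε₀ * M), ?_, fun z hz => ⟨?_, ?_⟩⟩
  · linarith
  · obtain ⟨f0, f1, f2, f3⟩ := gf.2 z hz
    have hf0 := norm_pos_iff.2 f0
    refine ⟨(Real.le_log_iff_exp_le hf0).1 (by linarith),
      (Real.log_le_iff_le_exp hf0).1 (by linarith), f3.trans ?_⟩
    gcongr; linarith
  · obtain ⟨f0, f1, f2, f3⟩ := gg.2 z hz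
    have hf0 := norm_pos_iff.2 f0
    refine ⟨(Real.le_log_iff_exp_le hf0).1 (by linarith),
      (Real.log_le_iff_le_exp hf0).1 (by linarith), f3.trans ?_⟩
    gcongr; linarith

lemma norm_sub_bounds {w a : ℂ} (h : 2 * ‖a‖ ≤ ‖w‖) :
    ‖w‖ / 2 ≤ ‖w - a‖ ∧ ‖w - a‖ ≤ 2 * ‖w‖ := by
  have h1 := norm_sub_norm_le w a
  have h2 := norm_sub_le w a
  constructor <;> linarith [norm_nonneg a]

/-- Where `f` is large, `ψ = f' F / ((f - a) (f - b))` is at most `4 ε ‖F‖ / ‖f‖`. -/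
lemma quotient_bound {f F ψ : ℂ → ℂ} {a b : ℂ} {z : ℂ}
    (h : ψ z * ((f z - a) * (f z - b)) = deriv f z * F z) (ha : 2 * ‖a‖ ≤ ‖f z‖)
    (hb : 2 * ‖b‖ ≤ ‖f z‖) (h0 : 0 < ‖f z‖) {ε : ℝ}
    (hd : ‖deriv f z‖ ≤ ε * ‖f z‖) :
    ‖ψ z‖ * ‖f z‖ ≤ 4 * ε * ‖F z‖ := by
  have h1 := (norm_sub_bounds ha).1
  have h2 := (norm_sub_bounds hb).1
  have h3 : ‖ψ z‖ * (‖f z - a‖ * ‖f z - b‖) = ‖deriv f z‖ * ‖F z‖ := by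
    rw [← norm_mul, ← norm_mul, ← norm_mul, h]
  have h4 : ‖ψ z‖ * (‖f z‖ / 2 * (‖f z‖ / 2)) ≤ ε * ‖f z‖ * ‖F z‖ := by
    calc _ ≤ ‖ψ z‖ * (‖f z - a‖ * ‖f z - b‖) := by gcongr
      _ = _ := h3
      _ ≤ _ := by gcongr
  refine le_of_mul_le_mul_right ?_ h0
  linarith

/-- If `f` dominates, `ψ = f' F / ((f - a) (f - b))` tends to `0` along the circles, because
`‖F‖ ≤ (1 + C) ‖f‖` there. -/
lemma Dominates.quotient_eq_zero {f g F ψ : ℂ → ℂ} {C : ℝ} (hC : 0 ≤ C) (hdom : Dominates f g C)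
    (hψ : Differentiable ℂ ψ) {a b : ℂ}
    (h : ∀ z, ψ z * ((f z - a) * (f z - b)) = deriv f z * F z)
    (hF : ∀ z, ‖F z‖ ≤ ‖f z‖ + ‖g z‖) (z : ℂ) : ψ z = 0 := by
  refine entire_eq_zero_of_small_circles hψ (fun ε hε R₀ => ?_) z
  set K := 2 * ‖a‖ + 2 * ‖b‖ + 1 with hK
  have hK0 : 0 < K := by positivity
  set ε' := min (ε / (4 * (1 + C))) (1 / K) with hε'
  have e0 : 0 < ε' := lt_min (by positivity) (by positivity)
  have e1 : ε' ≤ ε / (4 * (1 + C)) := min_le_left _ _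
  have e2 : K ≤ 1 / ε' := by
    rw [le_div_iff₀ e0, mul_comm, ← le_div_iff₀ hK0]; exact min_le_right _ _
  obtain ⟨r, hr, hr2⟩ := hdom ε' e0 R₀
  refine ⟨r, hr, fun z hz => ?_⟩
  obtain ⟨h1, h2, h3⟩ := hr2 z hz
  have hfK : K ≤ ‖f z‖ := e2.trans h1
  have h0 : 0 < ‖f z‖ := by linarith
  have h4 := quotient_bound (h z) (by linarith [norm_nonneg b]) (by linarith [norm_nonneg a]) h0 h2
  have h5 : ‖F z‖ ≤ (1 + C) * ‖f z‖ := by linarith [hF z]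
  have h6 : 4 * ε' * (1 + C) ≤ ε := by
    rw [le_div_iff₀ (by positivity)] at e1; linarith
  refine le_of_mul_le_mul_right ?_ h0
  calc ‖ψ z‖ * ‖f z‖ ≤ 4 * ε' * ‖F z‖ := h4
    _ ≤ 4 * ε' * ((1 + C) * ‖f z‖) := by gcongr
    _ = 4 * ε' * (1 + C) * ‖f z‖ := by ring
    _ ≤ ε * ‖f z‖ := by gcongr

lemma norm_nineProd_le {ψ φ : ℂ → ℂ} {z : ℂ} {E : ℝ} (h1 : ‖ψ z‖ ≤ 8 * E) (h2 : ‖φ z‖ ≤ 8 * E) :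
    ‖nineProd ψ φ z‖ ≤ (48 * E) ^ 9 := by
  have hE : 0 ≤ E := by linarith [norm_nonneg (ψ z)]
  unfold nineProd
  rw [norm_prod]
  have : ∀ i ∈ Finset.range 3 ×ˢ Finset.range 3,
      ‖((i.2 + 1 : ℕ) : ℂ) * ψ z - (i.1 + 1 : ℕ) * φ z‖ ≤ 48 * E := by
    intro i hi
    simp only [Finset.mem_product, Finset.mem_range] at hi
    have c1 : ((i.1 + 1 : ℕ) : ℝ) ≤ 3 := by exact_mod_cast (by omega : i.1 + 1 ≤ 3)
    have c2 : ((i.2 + 1 : ℕ) : ℝ) ≤ 3 := by exact_mod_cast (by omega : i.2 + 1 ≤ 3)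
    refine (norm_sub_le _ _).trans ?_
    rw [norm_mul, norm_mul, Complex.norm_natCast, Complex.norm_natCast]
    calc _ ≤ 3 * (8 * E) + 3 * (8 * E) := by gcongr
      _ = _ := by ring
  refine (Finset.prod_le_prod (fun _ _ => norm_nonneg _) this).trans ?_
  simp

/-- With `log ‖f‖` and `log ‖g‖` between `s` and `1.01 s`, the numerator of the auxiliary quotient
is about `exp (10 s)` up to a small exponent coming from `ψ` and `φ`, and the denominator about
`exp (12 s)`; hence the quotient tends to `0` along the circles. -/
lemma BalancedPair.aux_quotient_eq_zero {f g F ψ φ Q : ℂ → ℂ} (hbal : BalancedPair f g)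
    (hQ : Differentiable ℂ Q) {a b : ℂ}
    (h : ∀ z, ψ z * ((f z - a) * (f z - b)) = deriv f z * F z)
    (h' : ∀ z, φ z * ((g z - a) * (g z - b)) = deriv g z * F z)
    (hF : ∀ z, ‖F z‖ ≤ ‖f z‖ + ‖g z‖)
    (hq : ∀ z, Q z * (((f z - a) * (f z - b)) * ((g z - a) * (g z - b))) ^ 3 =
        (deriv f z * deriv g z) ^ 5 * nineProd ψ φ z ^ 10) (z : ℂ) : Q z = 0 := by
  refine entire_eq_zero_of_small_circles hQ (fun ε hε R₀ => ?_) z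
  obtain ⟨L, hL⟩ : ∃ L : ℝ, L = 4096 * 48 ^ 90 := ⟨_, rfl⟩
  have hL0 : 0 < L := by rw [hL]; positivity
  set K := 2 * ‖a‖ + 2 * ‖b‖ + 1 with hK
  have hK0 : 0 < K := by positivity
  set ε' := min (min (ε / L) 1) (1 / K) with hε'
  have e0 : 0 < ε' := lt_min (lt_min (by positivity) one_pos) (by positivity)
  have e1 : ε' ≤ ε / L := (min_le_left _ _).trans (min_le_left _ _)
  have e3 : ε' ≤ 1 := (min_le_left _ _).trans (min_le_right _ _)
  have e2 : K ≤ 1 / ε' := by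
    rw [le_div_iff₀ e0, mul_comm, ← le_div_iff₀ hK0]; exact min_le_right _ _
  obtain ⟨r, hr, s, hs, hr2⟩ := hbal ε' e0 R₀
  refine ⟨r, hr, fun z hz => ?_⟩
  obtain ⟨⟨f1, f2, f3⟩, g1, g2, g3⟩ := hr2 z hz
  have hs1 := Real.add_one_le_exp s
  set x := ‖f z‖ with hx
  set y := ‖g z‖ with hy
  have hxK : K ≤ x := by linarith
  have hyK : K ≤ y := by linarith
  have hx0 : 0 < x := by linarith
  have hy0 : 0 < y := by linarith
  have na := norm_nonneg a
  have nb := norm_nonneg b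
  set E := Real.exp (s / 100) with hE
  have hEs : Real.exp (101 / 100 * s) = E * Real.exp s := by
    rw [hE, ← Real.exp_add]; congr 1; ring
  have hF2 : ‖F z‖ ≤ 2 * (E * Real.exp s) := by rw [← hEs]; linarith [hF z]
  have hψE : ‖ψ z‖ ≤ 8 * E := by
    have h4 := quotient_bound (h z) (by linarith) (by linarith) hx0 f3
    refine le_of_mul_le_mul_right ?_ hx0
    calc ‖ψ z‖ * x ≤ 4 * ε' * ‖F z‖ := h4
      _ ≤ 4 * 1 * (2 * (E * Real.exp s)) := by gcongr
      _ = 8 * E * Real.exp s := by ring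
      _ ≤ 8 * E * x := by gcongr
  have hφE : ‖φ z‖ ≤ 8 * E := by
    have h4 := quotient_bound (h' z) (by linarith) (by linarith) hy0 g3
    refine le_of_mul_le_mul_right ?_ hy0
    calc ‖φ z‖ * y ≤ 4 * ε' * ‖F z‖ := h4
      _ ≤ 4 * 1 * (2 * (E * Real.exp s)) := by gcongr
      _ = 8 * E * Real.exp s := by ring
      _ ≤ 8 * E * y := by gcongr
  have hX := norm_nineProd_le hψE hφE
  have hX10 : ‖nineProd ψ φ z‖ ^ 10 ≤ 48 ^ 90 * Real.exp s := by
    calc ‖nineProd ψ φ z‖ ^ 10 ≤ ((48 * E) ^ 9) ^ 10 := by gcongr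
      _ = 48 ^ 90 * E ^ 90 := by rw [← pow_mul, mul_pow]
      _ ≤ 48 ^ 90 * Real.exp s := by
        gcongr
        rw [hE, ← Real.exp_nat_mul, Real.exp_le_exp]
        have : 0 < s := lt_of_lt_of_le (by positivity) hs
        push_cast; linarith
  have hn : ‖Q z‖ * ((‖f z - a‖ * ‖f z - b‖) * (‖g z - a‖ * ‖g z - b‖)) ^ 3 =
      (‖deriv f z‖ * ‖deriv g z‖) ^ 5 * ‖nineProd ψ φ z‖ ^ 10 := by
    have := congrArg norm (hq z)
    simpa only [norm_mul, norm_pow] using this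
  have b1 := (norm_sub_bounds (w := f z) (a := a) (by linarith)).1
  have b2 := (norm_sub_bounds (w := f z) (a := b) (by linarith)).1
  have b3 := (norm_sub_bounds (w := g z) (a := a) (by linarith)).1
  have b4 := (norm_sub_bounds (w := g z) (a := b) (by linarith)).1
  have d1 : ‖deriv f z‖ ≤ x := f3.trans (mul_le_of_le_one_left hx0.le e3)
  have d2 : ‖deriv g z‖ ≤ y := g3.trans (mul_le_of_le_one_left hy0.le e3)
  have hbig : ‖Q z‖ * ((x / 2 * (x / 2)) * (y / 2 * (y / 2))) ^ 3 ≤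
      (x * y) ^ 5 * (48 ^ 90 * Real.exp s) := by
    calc _ ≤ ‖Q z‖ * ((‖f z - a‖ * ‖f z - b‖) * (‖g z - a‖ * ‖g z - b‖)) ^ 3 := by gcongr
      _ = _ := hn
      _ ≤ _ := by gcongr
  have hQxy : ‖Q z‖ * (x * y) ≤ L * Real.exp s := by
    have hp : 0 < (x * y) ^ 5 / 4096 := by positivity
    refine le_of_mul_le_mul_right ?_ hp
    calc ‖Q z‖ * (x * y) * ((x * y) ^ 5 / 4096) =
        ‖Q z‖ * ((x / 2 * (x / 2)) * (y / 2 * (y / 2))) ^ 3 := by ring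
      _ ≤ (x * y) ^ 5 * (48 ^ 90 * Real.exp s) := hbig
      _ = L * Real.exp s * ((x * y) ^ 5 / 4096) := by rw [hL]; field_simp
  have hes := Real.exp_pos s
  have hQs : ‖Q z‖ * Real.exp s ≤ L := by
    refine le_of_mul_le_mul_right ?_ hes
    calc ‖Q z‖ * Real.exp s * Real.exp s = ‖Q z‖ * (Real.exp s * Real.exp s) := by ring
      _ ≤ ‖Q z‖ * (x * y) := by gcongr
      _ ≤ _ := hQxy
  have hLs : L ≤ ε * Real.exp s := by
    have h1 : 1 / ε' ≤ Real.exp s := by linarith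
    rw [div_le_iff₀ e0] at h1
    rw [le_div_iff₀ hL0] at e1
    calc L = L * 1 := by ring
      _ ≤ L * (Real.exp s * ε') := by gcongr
      _ = ε' * L * Real.exp s := by ring
      _ ≤ ε * Real.exp s := by gcongr
  exact le_of_mul_le_mul_right (hQs.trans hLs) hes

lemma pow_sub_one_upper {y : ℂ} (hy : ‖y‖ ≤ 1) {m : ℕ} (hm : m < 3) :
    ‖(1 + y) ^ (m + 1) - 1‖ ≤ 7 * ‖y‖ := by
  have hn := norm_nonneg y
  have h2 : ‖y ^ 2‖ ≤ 1 := by rw [norm_pow]; exact pow_le_one₀ hn hy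
  interval_cases m
  · simp; linarith
  · rw [show (1 + y) ^ (1 + 1) - 1 = (2 + y) * y by ring, norm_mul]
    gcongr
    refine (norm_add_le _ _).trans ?_
    norm_num; linarith
  · rw [show (1 + y) ^ (2 + 1) - 1 = (3 + 3 * y + y ^ 2) * y by ring, norm_mul]
    gcongr
    refine (norm_add_le _ _).trans ?_
    have : ‖3 + 3 * y‖ ≤ 6 := by
      refine (norm_add_le _ _).trans ?_
      rw [norm_mul]; norm_num; linarith
    linarith

lemma pow_sub_one_lower {x : ℂ} (hx : ‖x‖ ≤ 1 / 2) {n : ℕ} (hn : n < 3) :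
    ‖x‖ ≤ ‖(1 + x) ^ (n + 1) - 1‖ := by
  have h0 := norm_nonneg x
  have h2 : ‖x ^ 2‖ ≤ 1 / 4 := by rw [norm_pow]; nlinarith
  interval_cases n
  · simp
  · rw [show (1 + x) ^ (1 + 1) - 1 = (2 + x) * x by ring, norm_mul]
    refine le_mul_of_one_le_left h0 ?_
    have h3 := norm_sub_le (2 + x) x
    rw [show (2 + x) - x = 2 by ring] at h3
    norm_num at h3; linarith
  · rw [show (1 + x) ^ (2 + 1) - 1 = (3 + 3 * x + x ^ 2) * x by ring, norm_mul]
    refine le_mul_of_one_le_left h0 ?_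
    have h3 := norm_sub_le (3 + 3 * x + x ^ 2) (3 * x + x ^ 2)
    have h4 := norm_add_le (3 * x) (x ^ 2)
    rw [show (3 + 3 * x + x ^ 2) - (3 * x + x ^ 2) = 3 by ring] at h3
    rw [norm_mul] at h4
    norm_num at h2 h3 h4; linarith

/-- If `log ((f-a)/(f-b))` and `log ((g-a)/(g-b))` have proportional derivatives, with a ratio of
small integers, then `(f-a)/(f-b)` and `(g-a)/(g-b)` have equal powers; both tend to `1` along the
circles, at comparable rates, so `g` is bounded by a multiple of `f`. -/
lemma BalancedPair.dominates_of_proportional {f g : ℂ → ℂ} (hbal : BalancedPair f g)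
    (hf : Differentiable ℂ f) (hg : Differentiable ℂ g) {a b : ℂ} (hab : a ≠ b) {m n : ℕ}
    (hm : m < 3) (hn : n < 3)
    (h : ∀ z, ((n + 1 : ℕ) : ℂ) * deriv f z * ((g z - a) * (g z - b)) =
      (m + 1 : ℕ) * deriv g z * ((f z - a) * (f z - b))) : Dominates f g 15 := by
  have hba : 0 < ‖b - a‖ := norm_pos_iff.2 (sub_ne_zero.2 hab.symm)
  -- far out on the circles, both functions exceed any given bound
  have hcirc : ∀ ε > 0, ∀ R₀ : ℝ, ∃ r ≥ R₀, 0 ≤ r ∧ ∀ z : ℂ, ‖z‖ = r →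
      (1 / ε ≤ ‖f z‖ ∧ ‖deriv f z‖ ≤ ε * ‖f z‖ ∧ 2 * ‖b‖ ≤ ‖f z‖ ∧ f z ≠ b ∧
        ‖(b - a) / (f z - b)‖ ≤ ε) ∧
      g z ≠ a ∧ g z ≠ b ∧ ‖(b - a) / (g z - b)‖ ≤ ε := by
    intro ε hε R₀
    set K := 2 * ‖a‖ + 2 * ‖b‖ + 1 / ε + 2 * ‖b - a‖ / ε + 1 with hK
    have hi1 : 0 < 1 / ε := by positivity
    have hi2 : 0 < 2 * ‖b - a‖ / ε := by positivity
    have na := norm_nonneg a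
    have nb := norm_nonneg b
    have hK0 : 0 < K := by positivity
    obtain ⟨r, hr, s, hs, hr2⟩ := hbal (min ε (1 / K)) (lt_min hε (by positivity)) (max R₀ 0)
    refine ⟨r, (le_max_left _ _).trans hr, (le_max_right _ _).trans hr, fun z hz => ?_⟩
    obtain ⟨⟨f1, f2, f3⟩, g1, g2, g3⟩ := hr2 z hz
    have hKs : K ≤ s := by
      refine le_trans ?_ hs
      rw [le_div_iff₀ (lt_min hε (by positivity)), mul_comm, ← le_div_iff₀ hK0]
      exact min_le_right _ _
    have hes := Real.add_one_le_exp s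
    have hne : ∀ w c : ℂ, Real.exp s ≤ ‖w‖ → (c = a ∨ c = b) → w ≠ c := by
      rintro w c hw hc rfl
      rcases hc with rfl | rfl <;> linarith
    have hsm : ∀ w : ℂ, Real.exp s ≤ ‖w‖ → ‖(b - a) / (w - b)‖ ≤ ε := by
      intro w hw
      have h1 := (norm_sub_bounds (w := w) (a := b) (by linarith)).1
      rw [norm_div, div_le_iff₀ (by linarith)]
      have h2 : 2 * ‖b - a‖ / ε ≤ ‖w‖ := by linarith
      rw [div_le_iff₀ hε] at h2
      have : ε * (‖w‖ / 2) ≤ ε * ‖w - b‖ := by gcongr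
      linarith
    refine ⟨⟨by linarith, f3.trans ?_, by linarith, hne _ _ f1 (Or.inr rfl), hsm _ f1⟩,
      hne _ _ g1 (Or.inl rfl), hne _ _ g1 (Or.inr rfl), hsm _ g1⟩
    gcongr
    exact min_le_left _ _
  have hfd : ∀ c : ℂ, ∀ z, HasDerivAt (fun z => f z - c) (deriv f z) z := fun c z =>
    (hf z).hasDerivAt.sub_const c
  have hgd : ∀ c : ℂ, ∀ z, HasDerivAt (fun z => g z - c) (deriv g z) z := fun c z =>
    (hg z).hasDerivAt.sub_const c
  obtain ⟨c, hc⟩ := entire_eq_const_mul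
    (h := fun z => (f z - a) ^ (n + 1) * (g z - b) ^ (m + 1))
    (k := fun z => (f z - b) ^ (n + 1) * (g z - a) ^ (m + 1))
    (((hf.sub_const a).fun_pow _).fun_mul ((hg.sub_const b).fun_pow _))
    (((hf.sub_const b).fun_pow _).fun_mul ((hg.sub_const a).fun_pow _))
    (by
      obtain ⟨r, -, hr0, hr⟩ := hcirc 1 one_pos 0
      obtain ⟨⟨-, -, -, h1, -⟩, h2, -⟩ := hr (r : ℂ) (by simp [abs_of_nonneg hr0])
      exact ⟨r, mul_ne_zero (pow_ne_zero _ (sub_ne_zero.2 h1)) (pow_ne_zero _ (sub_ne_zero.2 h2))⟩)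
    (fun z => by
      rw [(((hfd a z).fun_pow (n + 1)).fun_mul ((hgd b z).fun_pow (m + 1))).deriv,
        (((hfd b z).fun_pow (n + 1)).fun_mul ((hgd a z).fun_pow (m + 1))).deriv]
      simp only [Nat.add_sub_cancel]
      linear_combination (a - b) * ((f z - a) ^ n * (f z - b) ^ n * (g z - a) ^ m *
        (g z - b) ^ m) * h z)
  have hrel : ∀ z, f z ≠ b → g z ≠ b →
      (1 + (b - a) / (f z - b)) ^ (n + 1) = c * (1 + (b - a) / (g z - b)) ^ (m + 1) := by
    intro z h1 h2
    have h1 := sub_ne_zero.2 h1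
    have h2 := sub_ne_zero.2 h2
    have e1 : 1 + (b - a) / (f z - b) = (f z - a) / (f z - b) := by field_simp; ring
    have e2 : 1 + (b - a) / (g z - b) = (g z - a) / (g z - b) := by field_simp; ring
    rw [e1, e2, div_pow, div_pow, ← mul_div_assoc,
      div_eq_div_iff (pow_ne_zero _ h1) (pow_ne_zero _ h2)]
    linear_combination hc z
  have hc1 : c = 1 := by
    rw [← sub_eq_zero, ← norm_le_zero_iff]
    refine le_of_forall_pos_le_add fun ε hε => ?_
    rw [zero_add]
    set ε' := min 1 (ε / (7 * (1 + ‖c‖))) with hε'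
    have e0 : 0 < ε' := lt_min one_pos (by positivity)
    obtain ⟨r, -, hr0, hr⟩ := hcirc ε' e0 0
    obtain ⟨⟨-, -, -, h1, h2⟩, -, h3, h4⟩ := hr (r : ℂ) (by simp [abs_of_nonneg hr0])
    have h5 := hrel _ h1 h3
    have e1 : ε' ≤ 1 := min_le_left _ _
    have u1 := pow_sub_one_upper (h2.trans e1) hn
    have u2 := pow_sub_one_upper (h4.trans e1) hm
    set X := (1 + (b - a) / (f r - b)) ^ (n + 1)
    set Y := (1 + (b - a) / (g r - b)) ^ (m + 1)
    have h6 : c - 1 = (X - 1) - c * (Y - 1) := by linear_combination -h5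
    rw [h6]
    refine (norm_sub_le _ _).trans ?_
    rw [norm_mul]
    have e2 : ε' * (7 * (1 + ‖c‖)) ≤ ε :=
      (le_div_iff₀ (by positivity)).1 (min_le_right _ _)
    calc ‖X - 1‖ + ‖c‖ * ‖Y - 1‖ ≤ 7 * ε' + ‖c‖ * (7 * ε') := by
          gcongr
          · linarith
          · linarith
      _ = ε' * (7 * (1 + ‖c‖)) := by ring
      _ ≤ ε := e2
  intro ε hε R₀
  obtain ⟨r, hr, -, hr2⟩ := hcirc (min ε (1 / 2)) (lt_min hε (by norm_num)) R₀
  refine ⟨r, hr, fun z hz => ?_⟩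
  obtain ⟨⟨h1, h2, h3, h4, h5⟩, -, h7, h8⟩ := hr2 z hz
  have e1 : min ε (1 / 2) ≤ ε := min_le_left _ _
  have e2 : min ε (1 / 2) ≤ 1 / 2 := min_le_right _ _
  refine ⟨le_trans (one_div_le_one_div_of_le (lt_min hε (by norm_num)) e1) h1,
    h2.trans (by gcongr), ?_⟩
  have l1 := pow_sub_one_lower (h5.trans e2) hn
  have u1 := pow_sub_one_upper ((h8.trans e2).trans (by norm_num)) hm
  rw [hrel z h4 h7, hc1, one_mul] at l1
  have h9 := l1.trans u1
  have p1 : 0 < ‖f z - b‖ := norm_pos_iff.2 (sub_ne_zero.2 h4)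
  have p2 : 0 < ‖g z - b‖ := norm_pos_iff.2 (sub_ne_zero.2 h7)
  rw [norm_div, norm_div, ← mul_div_assoc, div_le_div_iff₀ p1 p2] at h9
  have h10 : ‖g z - b‖ ≤ 7 * ‖f z - b‖ := by
    refine le_of_mul_le_mul_left ?_ hba
    linarith
  have h11 := (norm_sub_bounds h3).2
  have h12 : ‖g z‖ ≤ ‖g z - b‖ + ‖b‖ := by simpa using norm_add_le (g z - b) b
  linarith [norm_nonneg b]

/-- Two nonconstant entire functions of slow growth sharing two values, multiplicities ignored,
are equal. -/
theorem eq_of_shares_two_values {f g : ℂ → ℂ} (hf : Differentiable ℂ f) (hg : Differentiable ℂ g)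
    (hfs : SlowGrowth f) (hgs : SlowGrowth g) (hfn : ¬∃ c, ∀ z, f z = c)
    (hgn : ¬∃ c, ∀ z, g z = c) {a b : ℂ} (hab : a ≠ b)
    (hsa : ∀ z, f z = a ↔ g z = a) (hsb : ∀ z, f z = b ↔ g z = b) (z : ℂ) : f z = g z := by
  have hFd : Differentiable ℂ (fun z => f z - g z) := hf.fun_sub hg
  have hF0 : ∀ z, f z = a ∨ f z = b → f z - g z = 0 := by
    rintro z (h | h)
    · rw [h, (hsa z).1 h, sub_self]
    · rw [h, (hsb z).1 h, sub_self]
  have hF0' : ∀ z, g z = a ∨ g z = b → f z - g z = 0 := by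
    intro z h
    rw [← hsa, ← hsb] at h
    exact hF0 z h
  obtain ⟨ψ, hψ, hψe⟩ := exists_entire_logDeriv_mul hf hFd hfn hab hF0
  obtain ⟨φ, hφ, hφe⟩ := exists_entire_logDeriv_mul hg hFd hgn hab hF0'
  obtain ⟨wf, hwf⟩ := exists_deriv_ne_zero hf hfn
  obtain ⟨wg, hwg⟩ := exists_deriv_ne_zero hg hgn
  have hFn : ∀ z, ‖f z - g z‖ ≤ ‖f z‖ + ‖g z‖ := fun z => norm_sub_le _ _
  have hψ0 : (∀ z, ψ z = 0) → ∀ z, f z - g z = 0 := by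
    intro h0
    refine (entire_mul_eq_zero (entire_deriv hf) hFd fun z => ?_).resolve_left
      fun h => hwf (h wf)
    rw [← hψe z, h0 z, zero_mul]
  have hφ0 : (∀ z, φ z = 0) → ∀ z, f z - g z = 0 := by
    intro h0
    refine (entire_mul_eq_zero (entire_deriv hg) hFd fun z => ?_).resolve_left
      fun h => hwg (h wg)
    rw [← hφe z, h0 z, zero_mul]
  rw [← sub_eq_zero]
  revert z
  rcases dominates_or_balanced hf hg hfs hgs hfn hgn with hdom | hdom | hbal
  · exact hψ0 (hdom.quotient_eq_zero zero_le_one hψ hψe hFn)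
  · exact hφ0 (hdom.quotient_eq_zero zero_le_one hφ hφe
      (fun z => (hFn z).trans_eq (add_comm _ _)))
  · obtain ⟨Q, hQ, hQe⟩ := exists_aux_quotient hf hg hFd hψ hφ hab hfn hgn hψe hφe hsa hsb hF0
    have hQ0 := hbal.aux_quotient_eq_zero hQ hψe hφe hFn hQe
    have hX0 : ∀ z, nineProd ψ φ z = 0 := by
      have h1 : ∀ z, (deriv f z * deriv g z) * nineProd ψ φ z = 0 := by
        intro z
        have := hQe z
        rw [hQ0 z, zero_mul, eq_comm, mul_eq_zero] at this
        rcases this with h | h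
        · rw [eq_zero_of_pow_eq_zero h, zero_mul]
        · rw [eq_zero_of_pow_eq_zero h, mul_zero]
      rcases entire_mul_eq_zero ((entire_deriv hf).fun_mul (entire_deriv hg))
        (differentiable_nineProd hψ hφ) h1 with h | h
      · rcases entire_mul_eq_zero (entire_deriv hf) (entire_deriv hg) h with h | h
        · exact absurd (h wf) hwf
        · exact absurd (h wg) hwg
      · exact h
    obtain ⟨⟨m, n⟩, hmn, hχ⟩ := entire_prod_eq_zero (Finset.range 3 ×ˢ Finset.range 3)
      (fun i z => ((i.2 + 1 : ℕ) : ℂ) * ψ z - (i.1 + 1 : ℕ) * φ z)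
      (fun i => (hψ.const_mul _).sub (hφ.const_mul _)) hX0
    simp only [Finset.mem_product, Finset.mem_range] at hmn
    simp only at hχ
    have hW : ∀ z, (f z - g z) * (((n + 1 : ℕ) : ℂ) * deriv f z * ((g z - a) * (g z - b)) -
        (m + 1 : ℕ) * deriv g z * ((f z - a) * (f z - b))) = 0 := by
      intro z
      linear_combination (-((n + 1 : ℕ) : ℂ) * ((g z - a) * (g z - b))) * hψe z +
        (((m + 1 : ℕ) : ℂ) * ((f z - a) * (f z - b))) * hφe z +
        ((f z - a) * (f z - b)) * ((g z - a) * (g z - b)) * hχ z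
    rcases entire_mul_eq_zero hFd
      ((((entire_deriv hf).const_mul _).fun_mul
        ((hg.sub_const a).fun_mul (hg.sub_const b))).fun_sub
        (((entire_deriv hg).const_mul _).fun_mul
        ((hf.sub_const a).fun_mul (hf.sub_const b)))) hW with h | h
    · exact h
    · have hdom := hbal.dominates_of_proportional hf hg hab hmn.1 hmn.2
        (fun z => sub_eq_zero.1 (h z))
      exact hψ0 (hdom.quotient_eq_zero (by norm_num) hψ hψe hFn)

/-- A nonconstant entire function of slow growth has no Picard exceptional value. -/
lemma exists_eq_of_slowGrowth {f : ℂ → ℂ} (hf : Differentiable ℂ f) (hfs : SlowGrowth f)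
    (hfn : ¬∃ c, ∀ z, f z = c) (a : ℂ) : ∃ z, f z = a := by
  by_contra hcon
  push Not at hcon
  have hne : ∀ z, f z - a ≠ 0 := fun z => sub_ne_zero.2 (hcon z)
  have hQ : Differentiable ℂ (fun z => (f z - a)⁻¹) := (hf.sub_const a).fun_inv hne
  refine inv_ne_zero (hne 0) (entire_eq_zero_of_small_circles hQ (fun ε hε R₀ => ?_) 0)
  set K := 2 * ‖a‖ + 2 / ε with hK
  have hi : 0 < 2 / ε := by positivity
  have hK0 : 0 < K := by positivity
  have e0 : 0 < min (1 / 4) (1 / (2 * K)) := lt_min (by norm_num) (by positivity)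
  obtain ⟨r, hr, B, B', gf, gf'⟩ := exists_good_circle hf hf hfs hfs hfn hfn e0 R₀
  set ε₀ := min (1 / 4) (1 / (2 * K)) with hε₀
  have e1 : ε₀ ≤ 1 / 4 := min_le_left _ _
  have e2 : 2 * K ≤ 1 / ε₀ := by
    rw [le_div_iff₀ e0, mul_comm, ← le_div_iff₀ (by positivity)]; exact min_le_right _ _
  -- `f` is paired with itself; adding the two lower bounds for `log ‖f z‖` absorbs the error term
  have key : ∀ z : ℂ, ‖z‖ = r → K ≤ ‖f z‖ := by
    intro z hz
    obtain ⟨f0, f1, f2, -⟩ := gf.2 z hz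
    obtain ⟨-, f1', f2', -⟩ := gf'.2 z hz
    have hl := Real.log_le_sub_one_of_pos (norm_pos_iff.2 f0)
    have hB := gf.1
    have hB' := gf'.1
    have : ε₀ * (B + B') ≤ 1 / 4 * (B + B') := by gcongr; linarith
    linarith
  refine ⟨r, hr, fun z hz => ?_⟩
  have h1 := key z hz
  have h2 := (norm_sub_bounds (w := f z) (a := a) (by linarith)).1
  rw [norm_inv]
  refine inv_le_of_inv_le₀ hε ?_
  have : ε⁻¹ = 2 / ε / 2 := by ring
  linarith [norm_nonneg a]

/-- **Theorem 1.** If a non-constant entire function `f` of zero order shares the two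
distinct values `a` and `b` IM with its `q`-difference `Δ_{q,η} f (z) = f(qz+η) - f(z)`,
then `f ≡ Δ_{q,η} f`. -/
theorem uniqueness_qdifference_shares_two_values_IM
    (f : ℂ → ℂ) (hf : ZeroOrderEntire f) (hnc : ¬∃ c : ℂ, ∀ z : ℂ, f z = c)
    (q η : ℂ) (hq : q ≠ 0) (a b : ℂ) (hab : a ≠ b)
    (hsa : {z : ℂ | f z = a} = {z : ℂ | f (q * z + η) - f z = a})
    (hsb : {z : ℂ | f z = b} = {z : ℂ | f (q * z + η) - f z = b}) :
    ∀ z : ℂ, f z = f (q * z + η) - f z := by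
  have hd := hf.1
  have hs := hf.slowGrowth
  have hgd : Differentiable ℂ (fun z => f (q * z + η) - f z) :=
    (hd.comp ((differentiable_id.const_mul q).add_const η)).sub hd
  have hsa' : ∀ z, f z = a ↔ f (q * z + η) - f z = a := fun z => Set.ext_iff.1 hsa z
  have hsb' : ∀ z, f z = b ↔ f (q * z + η) - f z = b := fun z => Set.ext_iff.1 hsb z
  refine eq_of_shares_two_values hd hgd hs (hs.qdiff hd q η) hnc ?_ hab hsa' hsb'
  rintro ⟨c, hc⟩
  -- `f` takes both values, hence so does its difference, which is therefore not constant
  obtain ⟨z, hz⟩ := exists_eq_of_slowGrowth hd hs hnc a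
  obtain ⟨w, hw⟩ := exists_eq_of_slowGrowth hd hs hnc b
  have h1 := (hsa' z).1 hz
  have h2 := (hsb' w).1 hw
  have h3 := hc z
  have h4 := hc w
  exact hab (by rw [← h1, ← h2, h3, h4])
end

section
/- Let f : ℂ → ℂ be a non-constant entire function of zero order, let q ≠ 0 and η be two finite complex numbers, and let a₁, a₂, b₁, b₂ be complex numbers with a₁ ≠ b₁ and a₂ ≠ b₂. If f(z) and Δ_{q,η}f(z) share the pairs (a₁, a₂) and (b₁, b₂) IM, then (a₂ − b₂)·f(z) − (a₁ − b₁)·Δ_{q,η}f(z) = a₂b₁ − a₁b₂ for all z ∈ ℂ. -/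
/-!
Normalise `F = (f - a₁) / (b₁ - a₁)` and `G = (Δf - a₂) / (b₂ - a₂)`. Both are entire of zero order,
`F` is not constant, and they share the values `0` and `1` ignoring multiplicities; the claim is
`F = G`.

Suppose `F ≠ G`. Since `F - G` vanishes at all zeros and all `1`-points of `F` and of `G`, the
functions `φ = F' (F - G) / (F (F - 1))` and `ψ = G' (G - F) / (G (G - 1))` are entire
(`exists_deriv_mul_quotient`), do not vanish identically, and have zero order as quotients of
functions of zero order (`SubPow.of_mul_eq`). Two facts about zero order yield a contradiction.

* Finitely many functions of zero order, each of modulus at least `exp 2` somewhere, are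
  simultaneously at least `e` in modulus on most of some arbitrarily large disc
  (`exists_good_scale`).
* The logarithmic derivative of a function of zero order is arbitrarily small on most of every
  sufficiently large disc (`volume_large_logDeriv_le`).

Most of a disc is meant in the sense of area. Hence, after multiplying `φ` and `ψ` by suitable constants, some
point satisfies `|F|, |G|, |φ|, |ψ| ≥ e` while `F' / F` and `G' / G` are tiny. If `|G| ≤ |F|` there,
then `|φ| ≤ |F' / F| · |F - G| / |F - 1|` is tiny, a contradiction; if `|F| ≤ |G|`, the same applies
to `ψ`. The first fact also shows that a zero-free function of zero order is constant, which excludes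
a constant `G`.

The analytic input is the sub-mean value inequality for `log ‖f‖` over discs (`lintegral_ball_le`).
-/

open Filter Topology

open MeasureTheory Metric

/-! ### Mean value inequalities for `log ‖f‖` -/

/-- Subharmonicity of `log ‖f‖`, read off from Jensen's formula. -/
lemma log_norm_le_circleAverage {f : ℂ → ℂ} (hf : Differentiable ℂ f) {c : ℂ} (hc : f c ≠ 0)
    {t : ℝ} (ht : 0 < t) :
    Real.log ‖f c‖ ≤ Real.circleAverage (fun z => Real.log ‖f z‖) c t := by
  have han : AnalyticOnNhd ℂ f (closedBall c |t|) := fun z _ => hf.analyticAt z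
  rw [AnalyticOnNhd.circleAverage_log_norm ht.ne' han hc]
  have : 0 ≤ ∑ᶠ u, (MeromorphicOn.divisor f (closedBall c |t|) u : ℝ)
      * Real.log (t * ‖c - u‖⁻¹) := by
    refine finsum_nonneg fun u => ?_
    by_cases hu : u ∈ closedBall c |t|
    · refine mul_nonneg ?_ ?_
      · exact_mod_cast MeromorphicOn.AnalyticOnNhd.divisor_nonneg han u
      · rcases eq_or_ne u c with rfl | hne
        · simp
        · apply Real.log_nonneg
          have h1 : 0 < ‖c - u‖ := norm_pos_iff.2 (sub_ne_zero.2 hne.symm)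
          rw [mem_closedBall, dist_comm, dist_eq_norm, abs_of_pos ht] at hu
          rw [← div_eq_mul_inv, le_div_iff₀ h1]
          simpa using hu
    · simp [hu]
  linarith

/-- Sub-mean value inequality for the nonnegative function `A - log ‖f‖` on a circle, written with
lower integrals so that it can be integrated over the radius. -/
lemma lintegral_circle_le {f : ℂ → ℂ} (hf : Differentiable ℂ f) {c : ℂ} (hc : f c ≠ 0)
    {t A : ℝ} (ht : 0 < t) (hA : ∀ z ∈ sphere c t, Real.log ‖f z‖ ≤ A) :
    ∫⁻ θ in Set.Ioo (-Real.pi) Real.pi, ENNReal.ofReal (A - Real.log ‖f (circleMap c t θ)‖)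
      ≤ ∫⁻ _ in Set.Ioo (-Real.pi) Real.pi, ENNReal.ofReal (A - Real.log ‖f c‖) := by
  have hpi := Real.pi_pos
  have hmer : MeromorphicOn f (sphere c |t|) := fun z _ => (hf.analyticAt z).meromorphicAt
  have hint0 : CircleIntegrable (fun z => Real.log ‖f z‖) c t := hmer.circleIntegrable_log_norm
  have hper : Function.Periodic (fun θ => Real.log ‖f (circleMap c t θ)‖) (2 * Real.pi) := by
    intro θ; simp [periodic_circleMap c t θ]
  have hint : IntervalIntegrable (fun θ => Real.log ‖f (circleMap c t θ)‖) volume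
      (-Real.pi) Real.pi := by
    have := hper.intervalIntegrable (t := 0) (by positivity) (by simpa [CircleIntegrable] using hint0)
      (-Real.pi) Real.pi
    exact this
  have heq : ∫ θ in (-Real.pi)..Real.pi, Real.log ‖f (circleMap c t θ)‖
      = 2 * Real.pi * Real.circleAverage (fun z => Real.log ‖f z‖) c t := by
    have h := hper.intervalIntegral_add_eq (-Real.pi) 0
    rw [Real.circleAverage_def, smul_eq_mul, mul_inv_cancel_left₀ (by positivity)]
    convert h using 2 <;> ring
  have hconst : IntervalIntegrable (fun _ : ℝ => A) volume (-Real.pi) Real.pi := by simp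
  have hInt := (hconst.sub hint)
  have hIoo : IntegrableOn (fun θ => A - Real.log ‖f (circleMap c t θ)‖)
      (Set.Ioo (-Real.pi) Real.pi) volume := by
    rw [intervalIntegrable_iff_integrableOn_Ioo_of_le (by linarith)] at hInt
    exact hInt
  rw [← ofReal_integral_eq_lintegral_ofReal hIoo]
  · rw [lintegral_const, ← integral_Ioc_eq_integral_Ioo,
      ← intervalIntegral.integral_of_le (by linarith), intervalIntegral.integral_sub hconst hint, heq]
    have h := log_norm_le_circleAverage hf hc ht
    simp only [intervalIntegral.integral_const, MeasurableSet.univ, Measure.restrict_apply,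
      Set.univ_inter, Real.volume_Ioo, smul_eq_mul]
    rw [← ENNReal.ofReal_mul' (by linarith)]
    apply ENNReal.ofReal_le_ofReal
    nlinarith
  · refine ae_of_all _ fun θ => ?_
    have := hA (circleMap c t θ) (circleMap_mem_sphere c ht.le θ)
    simpa using this

/-- Area form of the sub-mean value inequality: a value of `log ‖f‖` at the centre that is close to
the upper bound `A` forces `log ‖f‖` to be close to `A` on average over the disc. -/
lemma lintegral_ball_le {f : ℂ → ℂ} (hf : Differentiable ℂ f) {c : ℂ} (hc : f c ≠ 0)
    {ρ A : ℝ} (hA : ∀ z ∈ ball c ρ, Real.log ‖f z‖ ≤ A) :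
    ∫⁻ z in ball c ρ, ENNReal.ofReal (A - Real.log ‖f z‖)
      ≤ ENNReal.ofReal (A - Real.log ‖f c‖) * volume (ball c ρ) := by
  have hpolar : ∀ u : ℂ → ENNReal, Measurable u → ∫⁻ z in ball c ρ, u z =
      ∫⁻ t in Set.Ioi (0 : ℝ), ∫⁻ θ in Set.Ioo (-Real.pi) Real.pi,
        ENNReal.ofReal t * (ball c ρ).indicator u (circleMap c t θ) := by
    intro u hu
    have hum : Measurable ((ball c ρ).indicator u) := hu.indicator measurableSet_ball
    rw [← lintegral_indicator measurableSet_ball,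
      ← lintegral_add_left_eq_self _ c, ← Complex.lintegral_comp_polarCoord_symm,
      polarCoord_target, Measure.volume_eq_prod, ← Measure.prod_restrict, lintegral_prod]
    · simp only [smul_eq_mul, Complex.polarCoord_symm_apply, circleMap, Complex.exp_mul_I,
        Complex.ofReal_cos, Complex.ofReal_sin]
    · apply Measurable.aemeasurable
      apply (ENNReal.measurable_ofReal.comp measurable_fst).smul
      apply hum.comp
      apply measurable_const.add
      have : (Complex.polarCoord.symm : ℝ × ℝ → ℂ) = fun p => p.1 * (Real.cos p.2 + Real.sin p.2 * Complex.I) :=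
        funext fun p => Complex.polarCoord_symm_apply p
      rw [this]
      fun_prop
  have hm : Measurable fun z => ENNReal.ofReal (A - Real.log ‖f z‖) := by
    have := hf.continuous.measurable
    fun_prop
  calc _ ≤ ∫⁻ z in ball c ρ, ENNReal.ofReal (A - Real.log ‖f c‖) := by
        rw [hpolar _ hm, hpolar _ measurable_const]
        refine setLIntegral_mono' measurableSet_Ioi fun t ht => ?_
        rw [lintegral_const_mul' _ _ (by simp), lintegral_const_mul' _ _ (by simp)]
        refine mul_le_mul_right ?_ _
        have ht : 0 < t := ht
        by_cases h : t < ρ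
        · have hmem : ∀ θ, circleMap c t θ ∈ ball c ρ := fun θ => by
            simp [circleMap, abs_of_pos ht, h]
          simp only [Set.indicator_of_mem (hmem _)]
          refine lintegral_circle_le hf hc ht fun z hz => hA z ?_
          rw [mem_sphere] at hz; rw [mem_ball]; linarith
        · have hmem : ∀ θ, circleMap c t θ ∉ ball c ρ := fun θ => by
            simpa [circleMap, abs_of_pos ht] using h
          simp only [Set.indicator_of_notMem (hmem _)]
          rfl
    _ = _ := by simp

/-! ### Entire functions of zero order -/

/-- `f` is entire and `log ‖f z‖ = O((1 + ‖z‖) ^ ε)` for every `ε > 0`. This restates zero order as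
a family of global bounds; unlike the `limsup`, it is visibly stable under sums, products, affine
substitutions and differentiation. -/
def SubPow (f : ℂ → ℂ) : Prop :=
  Differentiable ℂ f ∧ ∀ ε : ℝ, 0 < ε → ∃ C : ℝ, 0 ≤ C ∧
    ∀ z, ‖f z‖ ≤ Real.exp (C * (1 + ‖z‖) ^ ε)

lemma one_le_one_add_norm_rpow (z : ℂ) {ε : ℝ} (hε : 0 < ε) : 1 ≤ (1 + ‖z‖) ^ ε :=
  Real.one_le_rpow (by linarith [norm_nonneg z]) hε.le

lemma SubPow.const (c : ℂ) : SubPow fun _ => c := by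
  refine ⟨differentiable_const c, fun ε hε => ⟨‖c‖, norm_nonneg c, fun z => ?_⟩⟩
  have h1 := one_le_one_add_norm_rpow z hε
  have h2 := Real.add_one_le_exp (‖c‖ * (1 + ‖z‖) ^ ε)
  nlinarith [norm_nonneg c]

lemma SubPow.mul {f g : ℂ → ℂ} (hf : SubPow f) (hg : SubPow g) : SubPow fun z => f z * g z := by
  refine ⟨hf.1.mul hg.1, fun ε hε => ?_⟩
  obtain ⟨C, hC, h⟩ := hf.2 ε hε
  obtain ⟨D, hD, h'⟩ := hg.2 ε hε
  refine ⟨C + D, by positivity, fun z => ?_⟩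
  rw [norm_mul, add_mul, Real.exp_add]
  exact mul_le_mul (h z) (h' z) (norm_nonneg _) (Real.exp_pos _).le

lemma SubPow.add {f g : ℂ → ℂ} (hf : SubPow f) (hg : SubPow g) : SubPow fun z => f z + g z := by
  refine ⟨hf.1.add hg.1, fun ε hε => ?_⟩
  obtain ⟨C, hC, h⟩ := hf.2 ε hε
  obtain ⟨D, hD, h'⟩ := hg.2 ε hε
  refine ⟨1 + C + D, by positivity, fun z => ?_⟩
  have h1 := one_le_one_add_norm_rpow z hε
  set x := (1 + ‖z‖) ^ ε
  have e1 : Real.exp (C * x) ≤ Real.exp ((C + D) * x) := Real.exp_le_exp.2 (by nlinarith)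
  have e2 : Real.exp (D * x) ≤ Real.exp ((C + D) * x) := Real.exp_le_exp.2 (by nlinarith)
  have e3 : 2 ≤ Real.exp x := by linarith [Real.add_one_le_exp x]
  calc ‖f z + g z‖ ≤ ‖f z‖ + ‖g z‖ := norm_add_le _ _
    _ ≤ 2 * Real.exp ((C + D) * x) := by linarith [h z, h' z]
    _ ≤ Real.exp x * Real.exp ((C + D) * x) := by gcongr
    _ = _ := by rw [← Real.exp_add]; ring_nf

lemma SubPow.const_mul {f : ℂ → ℂ} (hf : SubPow f) (c : ℂ) : SubPow fun z => c * f z :=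
  (SubPow.const c).mul hf

lemma SubPow.sub {f g : ℂ → ℂ} (hf : SubPow f) (hg : SubPow g) : SubPow fun z => f z - g z := by
  have := hf.add (hg.const_mul (-1))
  simpa [sub_eq_add_neg] using this

lemma SubPow.comp_affine {f : ℂ → ℂ} (hf : SubPow f) (a b : ℂ) :
    SubPow fun z => f (a * z + b) := by
  refine ⟨hf.1.comp (by fun_prop), fun ε hε => ?_⟩
  obtain ⟨C, hC, h⟩ := hf.2 ε hε
  refine ⟨C * (1 + ‖a‖ + ‖b‖) ^ ε, by positivity, fun z => (h _).trans ?_⟩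
  rw [mul_assoc, ← Real.mul_rpow (by positivity) (by positivity)]
  gcongr
  have := norm_add_le (a * z) b
  rw [norm_mul] at this
  nlinarith [norm_nonneg a, norm_nonneg b, norm_nonneg z, mul_nonneg (norm_nonneg b) (norm_nonneg z)]

lemma SubPow.deriv {f : ℂ → ℂ} (hf : SubPow f) : SubPow (deriv f) := by
  refine ⟨hf.1.deriv, fun ε hε => ?_⟩
  obtain ⟨C, hC, h⟩ := hf.2 ε hε
  refine ⟨C * 2 ^ ε, by positivity, fun z => ?_⟩
  have := Complex.norm_deriv_le_of_forall_mem_sphere_norm_le (c := z) (R := 1)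
    (C := Real.exp (C * 2 ^ ε * (1 + ‖z‖) ^ ε)) one_pos hf.1.diffContOnCl (fun w hw => by
      refine (h w).trans ?_
      rw [mul_assoc, ← Real.mul_rpow (by positivity) (by positivity)]
      gcongr
      rw [mem_sphere, dist_eq_norm] at hw
      have := norm_le_norm_add_norm_sub' w z
      linarith [norm_nonneg z])
  simpa using this

lemma SubPow.of_zeroOrderEntire {f : ℂ → ℂ} (hf : ZeroOrderEntire f) : SubPow f := by
  refine ⟨hf.1, fun ε hε => ?_⟩
  have hlt : Filter.limsup
      (fun r : ℝ => ((logPlus (logPlus (maxMod f r)) / Real.log r : ℝ) : EReal))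
      Filter.atTop < (ε : EReal) := by rw [hf.2]; exact_mod_cast hε
  have hev := (Filter.eventually_lt_of_limsup_lt hlt).and (eventually_gt_atTop (1 : ℝ))
  obtain ⟨R, hR⟩ := eventually_atTop.1 hev
  obtain ⟨K, hK⟩ := (isCompact_closedBall (0 : ℂ) R).exists_bound_of_continuousOn
    hf.1.continuous.continuousOn
  refine ⟨1 + |K|, by positivity, fun z => ?_⟩
  have h1 := one_le_one_add_norm_rpow z hε
  set x := (1 + ‖z‖) ^ ε
  rcases le_or_gt ‖z‖ R with hz | hz
  · have := hK z (by simpa using hz)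
    have h2 := Real.add_one_le_exp ((1 + |K|) * x)
    nlinarith [le_abs_self K, abs_nonneg K]
  · obtain ⟨h2, h3⟩ := hR ‖z‖ hz.le
    have h2 : logPlus (logPlus (maxMod f ‖z‖)) / Real.log ‖z‖ < ε := by exact_mod_cast h2
    have hlog := Real.log_pos h3
    rw [div_lt_iff₀ hlog] at h2
    have hle : ‖f z‖ ≤ maxMod f ‖z‖ := by
      refine le_csSup ?_ ⟨z, by simp, rfl⟩
      exact ((isCompact_sphere (0 : ℂ) ‖z‖).image hf.1.continuous.norm).bddAbove
    have hz0 : 0 < ‖z‖ := by linarith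
    have h4 : Real.log (maxMod f ‖z‖) ≤ ‖z‖ ^ ε := by
      rcases le_or_gt (Real.log (maxMod f ‖z‖)) 0 with h | h
      · exact h.trans (by positivity)
      · have h5 : Real.log (Real.log (maxMod f ‖z‖)) < ε * Real.log ‖z‖ := by
          refine lt_of_le_of_lt ?_ h2
          have : logPlus (maxMod f ‖z‖) = Real.log (maxMod f ‖z‖) := max_eq_right h.le
          rw [this]
          exact le_max_right _ _
        rw [Real.rpow_def_of_pos hz0, ← Real.exp_log h]
        exact Real.exp_le_exp.2 (by linarith)
    have h6 : ‖z‖ ^ ε ≤ x := Real.rpow_le_rpow hz0.le (by linarith) hε.le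
    rcases eq_or_ne (f z) 0 with h0 | h0
    · rw [h0, norm_zero]; positivity
    have h7 : 0 < ‖f z‖ := norm_pos_iff.2 h0
    calc ‖f z‖ ≤ maxMod f ‖z‖ := hle
      _ = Real.exp (Real.log (maxMod f ‖z‖)) := (Real.exp_log (h7.trans_le hle)).symm
      _ ≤ _ := Real.exp_le_exp.2 (by nlinarith [abs_nonneg K])

lemma ae_ne_zero {f : ℂ → ℂ} (hf : Differentiable ℂ f) {c : ℂ} (hc : f c ≠ 0) :
    ∀ᵐ z, f z ≠ 0 := by
  have han : AnalyticOnNhd ℂ f Set.univ := fun z _ => hf.analyticAt z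
  have h := han.preimage_zero_mem_codiscrete (x := c) hc
  have := ae_restrict_le_codiscreteWithin (μ := (volume : Measure ℂ)) MeasurableSet.univ h
  rw [Measure.restrict_univ] at this
  filter_upwards [this] with z hz
  simpa using hz

lemma log_norm_le_of_le_exp {w : ℂ} {a : ℝ} (ha : 0 ≤ a) (h : ‖w‖ ≤ Real.exp a) :
    Real.log ‖w‖ ≤ a := by
  rcases eq_or_ne w 0 with rfl | h0
  · simpa using ha
  · exact (Real.log_le_iff_le_exp (norm_pos_iff.2 h0)).2 h

lemma volume_ball_mul (c d : ℂ) {k r : ℝ} (hk : 0 ≤ k) :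
    volume (ball c (k * r)) = ENNReal.ofReal (k ^ 2) * volume (ball d r) := by
  simp only [Complex.volume_ball]
  rw [ENNReal.ofReal_mul hk, mul_pow, ← ENNReal.ofReal_pow hk, mul_assoc]

/-- An entire quotient of functions of zero order has zero order. At `z₀` one averages
`log ‖φ‖ = log ‖A‖ - log ‖B‖` over the disc of radius `1 + ‖z₀‖` about `z₀`; the mean of
`- log ‖B‖` is controlled by `lintegral_ball_le` on a disc about `0`, where `B` does not vanish. -/
lemma SubPow.of_mul_eq {A B φ : ℂ → ℂ} (hA : SubPow A) (hB : SubPow B) (hφ : Differentiable ℂ φ)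
    (hB0 : B 0 ≠ 0) (h : ∀ z, A z = B z * φ z) : SubPow φ := by
  refine ⟨hφ, fun ε hε => ?_⟩
  obtain ⟨C, hC, hCA⟩ := hA.2 ε hε
  obtain ⟨D, hD, hDB⟩ := hB.2 ε hε
  refine ⟨C * 2 ^ ε + 3 * D * 2 ^ ε + 4 * |Real.log ‖B 0‖|, by positivity, fun z₀ => ?_⟩
  rcases eq_or_ne (φ z₀) 0 with h0 | h0
  · rw [h0, norm_zero]; positivity
  set r := 1 + ‖z₀‖ with hr
  have hr1 : 1 ≤ r := by simp [hr]
  have hx : 1 ≤ r ^ ε := one_le_one_add_norm_rpow z₀ hε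
  have hgrow : ∀ {E : ℝ}, 0 ≤ E → ∀ {w : ℂ}, ‖w‖ < 2 * r - 1 →
      E * (1 + ‖w‖) ^ ε ≤ E * 2 ^ ε * r ^ ε := fun {E} hE w hw => by
    rw [mul_assoc, ← Real.mul_rpow (by positivity) (by positivity)]
    gcongr
    linarith
  set a := C * 2 ^ ε * r ^ ε with ha
  set b := D * 2 ^ ε * r ^ ε with hb
  have ha0 : 0 ≤ a := by positivity
  have hb0 : 0 ≤ b := by positivity
  have hAa : ∀ w : ℂ, ‖w‖ < 2 * r - 1 → Real.log ‖A w‖ ≤ a := fun w hw =>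
    log_norm_le_of_le_exp ha0 ((hCA w).trans (Real.exp_le_exp.2 (hgrow hC hw)))
  have hBb : ∀ w : ℂ, ‖w‖ < 2 * r - 1 → Real.log ‖B w‖ ≤ b := fun w hw =>
    log_norm_le_of_le_exp hb0 ((hDB w).trans (Real.exp_le_exp.2 (hgrow hD hw)))
  have hsub : ∀ w ∈ ball z₀ r, ‖w‖ < 2 * r - 1 := fun w hw => by
    rw [mem_ball, dist_eq_norm] at hw
    have := norm_le_norm_add_norm_sub' w z₀
    linarith
  -- a qualitative bound for `φ`, which cancels from the final estimate
  obtain ⟨K₀, hK₀⟩ := (isCompact_closedBall z₀ r).exists_bound_of_continuousOn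
    hφ.continuous.continuousOn
  set K := |K₀| + a with hK
  have hφK : ∀ w ∈ ball z₀ r, Real.log ‖φ w‖ ≤ K := fun w hw => by
    have h1 := hK₀ w (ball_subset_closedBall hw)
    have h2 : Real.log ‖φ w‖ ≤ |K₀| := log_norm_le_of_le_exp (abs_nonneg _)
      (h1.trans ((le_abs_self _).trans (by linarith [Real.add_one_le_exp |K₀|])))
    linarith
  have I1 := lintegral_ball_le hφ h0 hφK
  have I2 := lintegral_ball_le hB.1 hB0 (ρ := 2 * r - 1) (A := b) (fun w hw => hBb w (by simpa using hw))
  have hV : volume (ball (0 : ℂ) (2 * r - 1)) ≤ 4 * volume (ball z₀ r) := by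
    have h2 := volume_ball_mul 0 z₀ (k := 2) (r := r) (by norm_num)
    rw [show ENNReal.ofReal (2 ^ 2) = 4 by norm_num] at h2
    rw [← h2]
    exact measure_mono (ball_subset_ball (by linarith))
  have I3 : ∫⁻ z in ball z₀ r, ENNReal.ofReal (b - Real.log ‖B z‖) ≤
      ENNReal.ofReal (4 * (b - Real.log ‖B 0‖)) * volume (ball z₀ r) := by
    calc _ ≤ ∫⁻ z in ball (0 : ℂ) (2 * r - 1), ENNReal.ofReal (b - Real.log ‖B z‖) :=
          lintegral_mono_set fun w hw => by simpa using hsub w hw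
      _ ≤ _ := I2
      _ ≤ ENNReal.ofReal (b - Real.log ‖B 0‖) * (4 * volume (ball z₀ r)) := by gcongr
      _ = _ := by
        rw [ENNReal.ofReal_mul (by norm_num)]
        norm_num
        ring
  have I4 : ENNReal.ofReal (K - a + b) * volume (ball z₀ r) ≤
      (∫⁻ z in ball z₀ r, ENNReal.ofReal (K - Real.log ‖φ z‖)) +
        ∫⁻ z in ball z₀ r, ENNReal.ofReal (b - Real.log ‖B z‖) := by
    have hm : Measurable fun z => ENNReal.ofReal (K - Real.log ‖φ z‖) := by
      have := hφ.continuous.measurable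
      fun_prop
    rw [← lintegral_add_left hm, ← setLIntegral_const]
    refine lintegral_mono_ae ?_
    filter_upwards [ae_restrict_mem measurableSet_ball, ae_restrict_of_ae (ae_ne_zero hφ h0),
      ae_restrict_of_ae (ae_ne_zero hB.1 hB0)] with w hw hw1 hw2
    rw [← ENNReal.ofReal_add (by linarith [hφK w hw]) (by linarith [hBb w (hsub w hw)])]
    apply ENNReal.ofReal_le_ofReal
    have h1 := hAa w (hsub w hw)
    rw [h w, norm_mul, Real.log_mul (norm_ne_zero_iff.2 hw2) (norm_ne_zero_iff.2 hw1)] at h1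
    linarith
  have hB0b : Real.log ‖B 0‖ ≤ b := hBb 0 (by rw [norm_zero]; linarith)
  have hφ0K : Real.log ‖φ z₀‖ ≤ K := hφK z₀ (mem_ball_self (by linarith))
  have I5 : ENNReal.ofReal (K - a + b) * volume (ball z₀ r) ≤
      ENNReal.ofReal (K - Real.log ‖φ z₀‖ + 4 * (b - Real.log ‖B 0‖)) * volume (ball z₀ r) := by
    rw [ENNReal.ofReal_add (p := K - Real.log ‖φ z₀‖) (by linarith) (by linarith), add_mul]
    exact I4.trans (add_le_add I1 I3)
  rw [ENNReal.mul_le_mul_iff_left (measure_ball_pos _ _ (by linarith)).ne' measure_ball_lt_top.ne,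
    ENNReal.ofReal_le_ofReal_iff (by linarith)] at I5
  rw [← Real.log_le_iff_le_exp (norm_pos_iff.2 h0)]
  have : |Real.log ‖B 0‖| ≤ |Real.log ‖B 0‖| * r ^ ε := le_mul_of_one_le_right (abs_nonneg _) hx
  have := neg_abs_le (Real.log ‖B 0‖)
  calc Real.log ‖φ z₀‖ ≤ a + 3 * b + 4 * |Real.log ‖B 0‖| := by linarith
    _ ≤ _ := by rw [ha, hb]; linarith

/-! ### The logarithmic derivative is small on most of a large disc -/

/-- A zero-free function is `exp h` up to a constant, and Borel–Carathéodory together with Cauchy's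
estimate bounds `h'`, the logarithmic derivative. -/
lemma norm_deriv_le_of_ne_zero {g : ℂ → ℂ} (hg : Differentiable ℂ g) {ρ L : ℝ} (hρ : 0 < ρ)
    (hL : 0 < L) (h0 : ∀ z ∈ ball (0 : ℂ) ρ, g z ≠ 0)
    (hb : ∀ z ∈ ball (0 : ℂ) ρ, ‖g z‖ ≤ Real.exp L * ‖g 0‖) {z : ℂ} (hz : ‖z‖ < ρ / 4) :
    ‖deriv g z‖ ≤ 8 * L / ρ * ‖g z‖ := by
  have hdiv : DifferentiableOn ℂ (fun w => deriv g w / g w) (ball 0 ρ) :=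
    hg.deriv.differentiableOn.div hg.differentiableOn h0
  obtain ⟨H, hH⟩ := hdiv.isExactOn_ball
  set h : ℂ → ℂ := fun w => H w - H 0 with hh
  have hd : ∀ w ∈ ball (0 : ℂ) ρ, HasDerivAt h (deriv g w / g w) w := fun w hw =>
    (hH w hw).sub_const _
  have hdiff : DifferentiableOn ℂ h (ball 0 ρ) := fun w hw =>
    (hd w hw).differentiableAt.differentiableWithinAt
  have hmem0 : (0 : ℂ) ∈ ball (0 : ℂ) ρ := mem_ball_self hρ
  have hexp : ∀ w ∈ ball (0 : ℂ) ρ, g w = Complex.exp (h w) * g 0 := by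
    intro w hw
    have key : ∀ x ∈ ball (0 : ℂ) ρ, HasDerivAt (fun x => Complex.exp (-h x) * g x) 0 x := by
      intro x hx
      have h1 : HasDerivAt (fun x => Complex.exp (-h x) * g x)
          (Complex.exp (-h x) * (-(deriv g x / g x)) * g x + Complex.exp (-h x) * deriv g x) x :=
        ((hd x hx).neg.cexp).mul (hg x).hasDerivAt
      convert h1 using 1
      linear_combination Complex.exp (-h x) * (div_mul_cancel₀ (deriv g x) (h0 x hx))
    have hc : Complex.exp (-h w) * g w = Complex.exp (-h 0) * g 0 := by
      refine isOpen_ball.is_const_of_deriv_eq_zero (convex_ball _ _).isPreconnected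
        (fun x hx => (key x hx).differentiableAt.differentiableWithinAt) (fun x hx => (key x hx).deriv)
        hw hmem0
    have h00 : h 0 = 0 := by simp [hh]
    rw [h00, neg_zero, Complex.exp_zero, one_mul] at hc
    rw [← hc, ← mul_assoc, ← Complex.exp_add]
    simp
  have hre : Set.MapsTo h (ball 0 ρ) {z | z.re ≤ L} := by
    intro w hw
    have h1 := hb w hw
    rw [hexp w hw, norm_mul, Complex.norm_exp] at h1
    have h2 := le_of_mul_le_mul_right h1 (norm_pos_iff.2 (h0 0 hmem0))
    exact Real.exp_le_exp.1 h2
  have hbc : ∀ w : ℂ, ‖w‖ ≤ ρ / 2 → ‖h w‖ ≤ 2 * L := by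
    intro w hw
    have hw' : w ∈ ball (0 : ℂ) ρ := by simp; linarith
    have := Complex.borelCaratheodory_zero hL hdiff hre hρ hw' (by simp [hh])
    refine this.trans ?_
    rw [div_le_iff₀ (by linarith)]
    nlinarith
  have hzb : z ∈ ball (0 : ℂ) ρ := by simp; linarith
  have hsub : closedBall z (ρ / 4) ⊆ ball 0 ρ := by
    intro w hw
    rw [mem_closedBall, dist_eq_norm] at hw
    have := norm_le_norm_add_norm_sub' w z
    simp; linarith
  have hC := Complex.norm_deriv_le_of_forall_mem_sphere_norm_le (f := h) (c := z) (R := ρ / 4)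
    (C := 2 * L) (by positivity)
    ((hdiff.mono hsub).diffContOnCl_ball (U := closedBall z (ρ / 4)) subset_rfl)
    (fun w hw => hbc w (by
      rw [mem_sphere, dist_eq_norm] at hw
      have := norm_le_norm_add_norm_sub' w z
      linarith))
  rw [(hd z hzb).deriv, norm_div, div_le_iff₀ (norm_pos_iff.2 (h0 z hzb))] at hC
  refine hC.trans (le_of_eq ?_)
  field_simp
  ring

/-- The monic polynomial function with the list `s` of zeros. -/
def zeroProd (s : List ℂ) (z : ℂ) : ℂ := (s.map fun a => z - a).prod

lemma zeroProd_cons (a : ℂ) (s : List ℂ) (z : ℂ) :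
    zeroProd (a :: s) z = (z - a) * zeroProd s z := by simp [zeroProd]

lemma differentiable_zeroProd (s : List ℂ) : Differentiable ℂ (zeroProd s) := by
  induction s with
  | nil => exact differentiable_const (1 : ℂ)
  | cons a s ih =>
    have : zeroProd (a :: s) = fun z => (z - a) * zeroProd s z := funext (zeroProd_cons a s)
    rw [this]
    fun_prop

lemma pow_le_norm_zeroProd {s : List ℂ} {z : ℂ} {m : ℝ} (hm : 0 ≤ m)
    (h : ∀ a ∈ s, m ≤ ‖z - a‖) : m ^ s.length ≤ ‖zeroProd s z‖ := by
  induction s with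
  | nil => simp [zeroProd]
  | cons a s ih =>
    rw [zeroProd_cons, norm_mul, List.length_cons, pow_succ']
    exact mul_le_mul (h a (by simp)) (ih fun b hb => h b (by simp [hb])) (by positivity)
      (norm_nonneg _)

lemma norm_zeroProd_le_pow {s : List ℂ} {z : ℂ} {m : ℝ} (hm : 0 ≤ m)
    (h : ∀ a ∈ s, ‖z - a‖ ≤ m) : ‖zeroProd s z‖ ≤ m ^ s.length := by
  induction s with
  | nil => simp [zeroProd]
  | cons a s ih =>
    rw [zeroProd_cons, norm_mul, List.length_cons, pow_succ']
    exact mul_le_mul (h a (by simp)) (ih fun b hb => h b (by simp [hb])) (norm_nonneg _) hm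

lemma norm_deriv_zeroProd_le {s : List ℂ} {z : ℂ} {m : ℝ} (hm : 0 < m)
    (h : ∀ a ∈ s, m ≤ ‖z - a‖) :
    ‖deriv (zeroProd s) z‖ ≤ s.length / m * ‖zeroProd s z‖ := by
  induction s with
  | nil =>
    have : zeroProd [] = fun _ => (1 : ℂ) := by funext z; simp [zeroProd]
    simp [this]
  | cons a s ih =>
    have hfun : zeroProd (a :: s) = fun z => (z - a) * zeroProd s z := funext (zeroProd_cons a s)
    have hd : deriv (zeroProd (a :: s)) z = 1 * zeroProd s z + (z - a) * deriv (zeroProd s) z := by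
      rw [hfun]
      exact (((hasDerivAt_id z).sub_const a).mul (differentiable_zeroProd s z).hasDerivAt).deriv
    have ih' := ih fun b hb => h b (by simp [hb])
    have ha := h a (by simp)
    rw [hd, zeroProd_cons, norm_mul, List.length_cons, one_mul]
    have h1 : ‖zeroProd s z‖ ≤ ‖z - a‖ / m * ‖zeroProd s z‖ :=
      le_mul_of_one_le_left (norm_nonneg _) ((one_le_div hm).2 ha)
    calc ‖zeroProd s z + (z - a) * deriv (zeroProd s) z‖
        ≤ ‖zeroProd s z‖ + ‖z - a‖ * ‖deriv (zeroProd s) z‖ := by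
          rw [← norm_mul]; exact norm_add_le _ _
      _ ≤ ‖z - a‖ / m * ‖zeroProd s z‖ + ‖z - a‖ * (s.length / m * ‖zeroProd s z‖) := by gcongr
      _ = _ := by push_cast; field_simp; ring

/-- Maximum principle on `‖z‖ ≤ 4 ρ`: on the boundary all zeros are at distance at least `3 ρ`. -/
lemma norm_cofactor_le {F g : ℂ → ℂ} (hg : Differentiable ℂ g) {s : List ℂ} {ρ M : ℝ}
    (hρ : 0 < ρ) (hF : ∀ z, F z = zeroProd s z * g z) (hs : ∀ a ∈ s, ‖a‖ ≤ ρ)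
    (hM : ∀ z, ‖z‖ = 4 * ρ → ‖F z‖ ≤ M) {z : ℂ} (hz : ‖z‖ ≤ 4 * ρ) :
    ‖g z‖ ≤ M / (3 * ρ) ^ s.length := by
  refine Complex.norm_le_of_forall_mem_frontier_norm_le (U := ball 0 (4 * ρ)) isBounded_ball
    hg.diffContOnCl (fun w hw => ?_) (by
      rw [closure_ball _ (by positivity)]; simpa using hz)
  rw [frontier_ball _ (by positivity), mem_sphere_zero_iff_norm] at hw
  rw [le_div_iff₀ (by positivity)]
  have h1 : (3 * ρ) ^ s.length ≤ ‖zeroProd s w‖ := pow_le_norm_zeroProd (by positivity)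
    fun a ha => by
      have := norm_sub_norm_le w a
      linarith [hs a ha]
  have h2 := hM w hw
  rw [hF w, norm_mul] at h2
  nlinarith [norm_nonneg (g w)]

/-- A Jensen-type bound for the number of zeros of `F` in the disc of radius `ρ`. -/
lemma three_pow_length_mul_le {F g : ℂ → ℂ} (hg : Differentiable ℂ g) {s : List ℂ} {ρ M : ℝ}
    (hρ : 0 < ρ) (hF : ∀ z, F z = zeroProd s z * g z) (hs : ∀ a ∈ s, ‖a‖ ≤ ρ)
    (hM : ∀ z, ‖z‖ = 4 * ρ → ‖F z‖ ≤ M) : 3 ^ s.length * ‖F 0‖ ≤ M := by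
  have h1 := norm_cofactor_le hg hρ hF hs hM (z := 0) (by simp; positivity)
  rw [le_div_iff₀ (by positivity), mul_pow] at h1
  have h2 : ‖zeroProd s 0‖ ≤ ρ ^ s.length := norm_zeroProd_le_pow hρ.le fun a ha => by
    simpa using hs a ha
  rw [hF 0, norm_mul]
  calc _ ≤ 3 ^ s.length * (ρ ^ s.length * ‖g 0‖) := by gcongr
    _ = ‖g 0‖ * (3 ^ s.length * ρ ^ s.length) := by ring
    _ ≤ M := h1

/-- All zeros of `F` in a disc can be divided out: the process stops because
`three_pow_length_mul_le` bounds the number of zeros removed. -/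
lemma exists_zeroProd_factorization {F : ℂ → ℂ} (hFd : Differentiable ℂ F) (hF0 : F 0 ≠ 0) {ρ M : ℝ}
    (hρ : 0 < ρ) (hM : ∀ z, ‖z‖ = 4 * ρ → ‖F z‖ ≤ M) :
    ∃ (s : List ℂ) (g : ℂ → ℂ), Differentiable ℂ g ∧ (∀ z, F z = zeroProd s z * g z) ∧
      (∀ a ∈ s, ‖a‖ ≤ ρ) ∧ ∀ z, ‖z‖ ≤ ρ → g z ≠ 0 := by
  by_contra hcon
  push Not at hcon
  have hall : ∀ n : ℕ, ∃ (s : List ℂ) (g : ℂ → ℂ), Differentiable ℂ g ∧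
      (∀ z, F z = zeroProd s z * g z) ∧ (∀ a ∈ s, ‖a‖ ≤ ρ) ∧ s.length = n := by
    intro n
    induction n with
    | zero => exact ⟨[], F, hFd, fun z => by simp [zeroProd], by simp, rfl⟩
    | succ n ih =>
      obtain ⟨s, g, hg, hF, hs, hn⟩ := ih
      obtain ⟨a, ha, hga⟩ := hcon s g hg hF hs
      refine ⟨a :: s, dslope g a, ?_, fun z => ?_, ?_, by simp [hn]⟩
      · rw [← differentiableOn_univ, Complex.differentiableOn_dslope univ_mem]
        exact hg.differentiableOn
      · have := sub_smul_dslope g a z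
        rw [hga, sub_zero, smul_eq_mul] at this
        rw [hF z, zeroProd_cons, ← this]
        ring
      · intro b hb
        rcases List.mem_cons.1 hb with rfl | hb
        · exact ha
        · exact hs b hb
  have hpos : 0 < ‖F 0‖ := norm_pos_iff.2 hF0
  obtain ⟨n, hn⟩ := pow_unbounded_of_one_lt (M / ‖F 0‖) (by norm_num : (1 : ℝ) < 3)
  obtain ⟨s, g, hg, hF, hs, rfl⟩ := hall n
  have := three_pow_length_mul_le hg hρ hF hs hM
  rw [div_lt_iff₀ hpos] at hn
  linarith

/-- In large discs `‖F'‖ ≤ κ ‖F‖` off a set of relative area at most `1 / 8`. With `F = P g` on the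
disc of radius `4 r`, the zero-free cofactor contributes `O(L / r)` to `F' / F`, where
`L = O(r ^ (1 / 4))` bounds both `log ‖F‖` and the number of zeros; the polynomial `P` contributes
`O(L ^ 2 / r)` off the discs of radius `r / (3 L)` about the zeros. -/
lemma volume_large_logDeriv_le {F : ℂ → ℂ} (hF : SubPow F) (hF0 : F 0 ≠ 0) {κ : ℝ} (hκ : 0 < κ) :
    ∃ r₀ : ℝ, ∀ r, r₀ ≤ r → volume {z ∈ ball (0 : ℂ) r | κ * ‖F z‖ < ‖deriv F z‖} ≤
      ENNReal.ofReal (1 / 8) * volume (ball (0 : ℂ) r) := by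
  obtain ⟨C, hC, hCF⟩ := hF.2 (1 / 4) (by norm_num)
  set l := |Real.log ‖F 0‖| with hl
  set K := C * 17 ^ (1 / 4 : ℝ) + l + 1 with hK
  have hK0 : 0 < K := by positivity
  refine ⟨max 1 ((5 * K ^ 2 / κ) ^ 2), fun r hr => ?_⟩
  have hr1 : 1 ≤ r := (le_max_left _ _).trans hr
  have hr2 : (5 * K ^ 2 / κ) ^ 2 ≤ r := (le_max_right _ _).trans hr
  have hr0 : 0 < r := by linarith
  set x := r ^ (1 / 4 : ℝ) with hx
  have hx1 : 1 ≤ x := Real.one_le_rpow hr1 (by norm_num)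
  have hx4 : x ^ 4 = r := by
    rw [hx, ← Real.rpow_natCast, ← Real.rpow_mul hr0.le]; norm_num
  set L := C * (1 + 16 * r) ^ (1 / 4 : ℝ) + l + 1 with hLdef
  have hl0 : 0 ≤ l := abs_nonneg _
  have hL1 : 1 ≤ L := by
    have : 0 ≤ C * (1 + 16 * r) ^ (1 / 4 : ℝ) := by positivity
    linarith
  have hLK : L ≤ K * x := by
    have h1 : (1 + 16 * r) ^ (1 / 4 : ℝ) ≤ 17 ^ (1 / 4 : ℝ) * x := by
      rw [hx, ← Real.mul_rpow (by norm_num) hr0.le]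
      exact Real.rpow_le_rpow (by positivity) (by linarith) (by norm_num)
    have h2 := mul_le_mul_of_nonneg_left h1 hC
    rw [hLdef, hK]
    nlinarith
  have hsmall : 5 * L ^ 2 / r ≤ κ := by
    rw [div_le_iff₀ hr0]
    have h1 : 5 * K ^ 2 / κ ≤ x ^ 2 := by
      refine le_of_sq_le_sq ?_ (by positivity)
      calc _ ≤ r := hr2
        _ = (x ^ 2) ^ 2 := by rw [← hx4]; ring
    rw [div_le_iff₀ hκ] at h1
    have h2 : L ^ 2 ≤ (K * x) ^ 2 := pow_le_pow_left₀ (by linarith) hLK 2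
    calc 5 * L ^ 2 ≤ 5 * (K * x) ^ 2 := by linarith
      _ = (5 * K ^ 2) * x ^ 2 := by ring
      _ ≤ (x ^ 2 * κ) * x ^ 2 := by gcongr
      _ = κ * r := by rw [← hx4]; ring
  set M := Real.exp (C * (1 + 16 * r) ^ (1 / 4 : ℝ)) with hMdef
  have hM : ∀ z : ℂ, ‖z‖ = 4 * (4 * r) → ‖F z‖ ≤ M := fun z hz => by
    have := hCF z
    rwa [hz, show 1 + 4 * (4 * r) = 1 + 16 * r by ring] at this
  obtain ⟨s, g, hg, hFg, hs, hg0⟩ := exists_zeroProd_factorization hF.1 hF0 (ρ := 4 * r)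
    (by positivity) hM
  have hFpos : 0 < ‖F 0‖ := norm_pos_iff.2 hF0
  have hMF : M ≤ Real.exp (L - 1) * ‖F 0‖ := by
    have : Real.exp (-l) ≤ ‖F 0‖ := by
      rw [← Real.le_log_iff_exp_le hFpos]; exact neg_abs_le _
    calc M = Real.exp (L - 1) * Real.exp (-l) := by
          rw [← Real.exp_add, hMdef]; congr 1; rw [hLdef]; ring
      _ ≤ _ := by gcongr
  have hlen : (s.length : ℝ) ≤ L := by
    have h1 := (three_pow_length_mul_le hg (by positivity) hFg hs hM).trans hMF
    have h2 : (3 : ℝ) ^ s.length ≤ Real.exp (L - 1) := le_of_mul_le_mul_right h1 hFpos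
    have h3 : Real.exp s.length ≤ 3 ^ s.length := by
      rw [← Real.exp_one_pow]
      exact pow_le_pow_left₀ (Real.exp_pos _).le (by linarith [Real.exp_one_lt_d9]) _
    have := Real.exp_le_exp.1 (h3.trans h2)
    linarith
  have hgb : ∀ z ∈ ball (0 : ℂ) (4 * r), ‖g z‖ ≤ Real.exp L * ‖g 0‖ := by
    intro z hz
    have h1 := norm_cofactor_le hg (by positivity) hFg hs hM (z := z) (by
      rw [mem_ball_zero_iff] at hz; linarith)
    have h2 : ‖F 0‖ ≤ (4 * r) ^ s.length * ‖g 0‖ := by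
      rw [hFg 0, norm_mul]
      gcongr
      exact norm_zeroProd_le_pow (by positivity) fun a ha => by simpa using hs a ha
    have h3 : (4 * r) ^ s.length ≤ (3 * (4 * r)) ^ s.length :=
      pow_le_pow_left₀ (by positivity) (by linarith) _
    refine h1.trans ?_
    rw [div_le_iff₀ (by positivity)]
    calc M ≤ Real.exp (L - 1) * ‖F 0‖ := hMF
      _ ≤ Real.exp L * ((3 * (4 * r)) ^ s.length * ‖g 0‖) := by
        refine mul_le_mul (Real.exp_le_exp.2 (by linarith)) (h2.trans ?_) (norm_nonneg _)
          (Real.exp_pos _).le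
        gcongr
      _ = _ := by ring
  clear_value L M x K l
  -- outside these small discs every zero is far enough away
  obtain ⟨k, hk⟩ : ∃ k, k = 1 / (3 * L) := ⟨_, rfl⟩
  have hk0 : 0 < k := by rw [hk]; positivity
  have hsub : {z ∈ ball (0 : ℂ) r | κ * ‖F z‖ < ‖deriv F z‖} ⊆ ⋃ a ∈ s.toFinset, ball a (k * r) := by
    rintro z ⟨hz, hbad⟩
    by_contra hnot
    rw [mem_ball_zero_iff] at hz
    have hfar : ∀ a ∈ s, k * r ≤ ‖z - a‖ := by
      intro a ha
      by_contra hlt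
      apply hnot
      simp only [Set.mem_iUnion]
      exact ⟨a, by simpa using ha, by rw [mem_ball, dist_eq_norm]; linarith⟩
    have hP := norm_deriv_zeroProd_le (by positivity) hfar
    have hG := norm_deriv_le_of_ne_zero hg (ρ := 4 * r) (L := L) (by positivity) (by positivity)
      (fun w hw => hg0 w (by rw [mem_ball_zero_iff] at hw; exact hw.le)) hgb (z := z) (by linarith)
    have hd : deriv F z = deriv (zeroProd s) z * g z + zeroProd s z * deriv g z := by
      have : F = fun z => zeroProd s z * g z := funext hFg
      rw [this]
      exact ((differentiable_zeroProd s z).hasDerivAt.mul (hg z).hasDerivAt).deriv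
    have hcoef : s.length / (k * r) + 8 * L / (4 * r) ≤ 5 * L ^ 2 / r := by
      have e1 : s.length / (k * r) = 3 * L * s.length / r := by rw [hk]; field_simp
      have e2 : 8 * L / (4 * r) = 2 * L / r := by field_simp; ring
      rw [e1, e2, ← add_div]
      gcongr
      nlinarith
    have : ‖deriv F z‖ ≤ κ * ‖F z‖ := by
      rw [hd, hFg z, norm_mul]
      calc _ ≤ ‖deriv (zeroProd s) z‖ * ‖g z‖ + ‖zeroProd s z‖ * ‖deriv g z‖ := by
            rw [← norm_mul, ← norm_mul]; exact norm_add_le _ _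
        _ ≤ (s.length / (k * r) * ‖zeroProd s z‖) * ‖g z‖
            + ‖zeroProd s z‖ * (8 * L / (4 * r) * ‖g z‖) := by gcongr
        _ = (s.length / (k * r) + 8 * L / (4 * r)) * (‖zeroProd s z‖ * ‖g z‖) := by ring
        _ ≤ _ := by
          gcongr
          exact hcoef.trans hsmall
    linarith
  calc _ ≤ volume (⋃ a ∈ s.toFinset, ball a (k * r)) := measure_mono hsub
    _ ≤ ∑ a ∈ s.toFinset, volume (ball a (k * r)) := measure_biUnion_finset_le _ _
    _ = ∑ a ∈ s.toFinset, ENNReal.ofReal (k ^ 2) * volume (ball (0 : ℂ) r) :=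
      Finset.sum_congr rfl fun a _ => volume_ball_mul a 0 hk0.le
    _ = ENNReal.ofReal (s.toFinset.card * k ^ 2) * volume (ball (0 : ℂ) r) := by
      rw [Finset.sum_const, nsmul_eq_mul, ENNReal.ofReal_mul (by positivity), ENNReal.ofReal_natCast,
        mul_assoc]
    _ ≤ _ := by
      gcongr
      have h1 : (s.toFinset.card : ℝ) ≤ L := le_trans (by exact_mod_cast s.toFinset_card_le) hlen
      calc (s.toFinset.card : ℝ) * k ^ 2 ≤ L * k ^ 2 := by gcongr
        _ = 1 / (9 * L) := by rw [hk]; field_simp; norm_num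
        _ ≤ 1 / 8 := by
          apply one_div_le_one_div_of_le <;> linarith

/-! ### Discs on which finitely many functions are simultaneously large -/

/-- If `log ‖f‖` grows at most by the factor `1 + 1 / 128` between the radii `r` and `3 r`, then `f`
is large on all but a fraction `1 / 16` of the disc of radius `r`. -/
lemma volume_small_le {f : ℂ → ℂ} (hf : Differentiable ℂ f) {r : ℝ} {z₀ : ℂ}
    (hz₀ : ‖z₀‖ ≤ r) (hb : 2 ≤ Real.log ‖f z₀‖)
    (hA : ∀ z, ‖z‖ ≤ 3 * r → Real.log ‖f z‖ ≤ (1 + 1 / 128) * Real.log ‖f z₀‖) :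
    volume {z ∈ ball (0 : ℂ) r | ‖f z‖ < Real.exp 1} ≤
      ENNReal.ofReal (1 / 16) * volume (ball (0 : ℂ) r) := by
  set b := Real.log ‖f z₀‖ with hbdef
  have h0 : f z₀ ≠ 0 := by
    intro h
    simp [hbdef, h] at hb
    linarith
  have key := lintegral_ball_le hf h0 (ρ := 2 * r) (A := (1 + 1 / 128) * b) (fun z hz => hA z (by
    rw [mem_ball, dist_eq_norm] at hz
    have := norm_add_le (z - z₀) z₀
    rw [sub_add_cancel] at this
    linarith))
  set S := {z ∈ ball (0 : ℂ) r | ‖f z‖ < Real.exp 1} with hS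
  have meas : MeasurableSet S :=
    measurableSet_ball.inter (measurableSet_lt hf.continuous.norm.measurable measurable_const)
  have hsub : S ⊆ ball z₀ (2 * r) := by
    intro z hz
    have h1 : ‖z‖ < r := by simpa using hz.1
    rw [mem_ball, dist_eq_norm]
    linarith [norm_sub_le z z₀]
  have lower : ENNReal.ofReal (b / 2) * volume S ≤
      ∫⁻ z in ball z₀ (2 * r), ENNReal.ofReal ((1 + 1 / 128) * b - Real.log ‖f z‖) := by
    calc ENNReal.ofReal (b / 2) * volume S = ∫⁻ z in S, ENNReal.ofReal (b / 2) := by simp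
      _ ≤ ∫⁻ z in S, ENNReal.ofReal ((1 + 1 / 128) * b - Real.log ‖f z‖) := by
        refine setLIntegral_mono' meas fun z hz => ENNReal.ofReal_le_ofReal ?_
        have := log_norm_le_of_le_exp zero_le_one hz.2.le
        linarith
      _ ≤ _ := lintegral_mono_set hsub
  have hfin : ENNReal.ofReal (b / 2) * volume S ≤
      ENNReal.ofReal (b / 2) * (ENNReal.ofReal (1 / 16) * volume (ball (0 : ℂ) r)) := by
    refine (lower.trans key).trans (le_of_eq ?_)
    rw [volume_ball_mul z₀ 0 zero_le_two, ← mul_assoc, ← mul_assoc,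
      ← ENNReal.ofReal_mul (by linarith), ← ENNReal.ofReal_mul (by linarith)]
    congr 2
    rw [← hbdef]
    ring
  exact (ENNReal.mul_le_mul_iff_right (by simp; linarith) ENNReal.ofReal_ne_top).1 hfin

/-- There are arbitrarily large discs on most of which all the functions `f i` are at least `e` in
modulus. On a scale `3 ^ k` where this fails, one of the quantities `log M(3 ^ k, f i)` grows by a
factor `1 + 1 / 128` on the next scale, so permanent failure makes `∑ i, log log M(3 ^ k, f i)` grow
linearly in `k` with a fixed slope; zero order makes the slope arbitrarily small. -/
lemma exists_good_scale {ι : Type*} [Fintype ι] {f : ι → ℂ → ℂ} (hf : ∀ i, SubPow (f i))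
    (hw : ∀ i, ∃ w, Real.exp 2 ≤ ‖f i w‖) (r₀ : ℝ) :
    ∃ r, r₀ ≤ r ∧ 0 < r ∧ ∀ i, volume {z ∈ ball (0 : ℂ) r | ‖f i z‖ < Real.exp 1} ≤
      ENNReal.ofReal (1 / 16) * volume (ball (0 : ℂ) r) := by
  by_contra! hcon
  choose w hw using hw
  have hmax : ∀ i (k : ℕ), ∃ p : ℂ, ‖p‖ ≤ 3 ^ k ∧ ∀ z : ℂ, ‖z‖ ≤ 3 ^ k → ‖f i z‖ ≤ ‖f i p‖ := by
    intro i k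
    obtain ⟨p, hp, h⟩ := (isCompact_closedBall (0 : ℂ) (3 ^ k)).exists_isMaxOn
      ⟨0, by simp⟩ (hf i).1.continuous.norm.continuousOn
    exact ⟨p, by simpa using hp, fun z hz => h (by simpa using hz)⟩
  choose p hp hpm using hmax
  obtain ⟨k₀, hk₀⟩ : ∃ k₀ : ℕ, ∀ k, k₀ ≤ k → r₀ ≤ 3 ^ k ∧ ∀ i, ‖w i‖ ≤ 3 ^ k := by
    have ht : Tendsto (fun k : ℕ => (3 : ℝ) ^ k) atTop atTop :=
      tendsto_pow_atTop_atTop_of_one_lt (by norm_num)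
    have h := (ht.eventually_ge_atTop r₀).and
      (eventually_all.2 fun i => ht.eventually_ge_atTop ‖w i‖)
    exact eventually_atTop.1 h
  set b : ι → ℕ → ℝ := fun i k => Real.log ‖f i (p i k)‖ with hb
  have hb2 : ∀ i k, k₀ ≤ k → 2 ≤ b i k := by
    intro i k hk
    have h1 := (hw i).trans (hpm i k _ ((hk₀ k hk).2 i))
    exact (Real.le_log_iff_exp_le ((Real.exp_pos 2).trans_le h1)).2 h1
  have hbm : ∀ i k, k₀ ≤ k → ∀ z : ℂ, ‖z‖ ≤ 3 ^ k → Real.log ‖f i z‖ ≤ b i k := by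
    intro i k hk z hz
    have h2 := hb2 i k hk
    refine log_norm_le_of_le_exp (by linarith) ?_
    have hne : 0 < ‖f i (p i k)‖ := by
      rw [norm_pos_iff]
      intro h
      simp [hb, h] at h2
      linarith
    rw [Real.exp_log hne]
    exact hpm i k z hz
  set η := Real.log (1 + 1 / 128) with hη
  have hη0 : 0 < η := Real.log_pos (by norm_num)
  have hl3 : 0 < Real.log 3 := Real.log_pos (by norm_num)
  set S : ℕ → ℝ := fun k => ∑ i, Real.log (b i k) with hS
  have hstep : ∀ k, k₀ ≤ k → S k + η ≤ S (k + 1) := by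
    intro k hk
    obtain ⟨i, hi⟩ := hcon (3 ^ k) (hk₀ k hk).1 (by positivity)
    have hex : ∃ z : ℂ, ‖z‖ ≤ 3 * 3 ^ k ∧ (1 + 1 / 128) * b i k < Real.log ‖f i z‖ := by
      by_contra! h
      exact absurd (volume_small_le (hf i).1 (hp i k) (hb2 i k hk) h) (not_le.2 hi)
    obtain ⟨z, hz, hlt⟩ := hex
    have h1 := hbm i (k + 1) (by omega) z (by rw [pow_succ]; linarith)
    have hmono : ∀ j, 0 ≤ Real.log (b j (k + 1)) - Real.log (b j k) := by
      intro j
      have h2 := hb2 j k hk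
      have h3 : b j k ≤ b j (k + 1) := hbm j (k + 1) (by omega) _ ((hp j k).trans
        (pow_le_pow_right₀ (by norm_num) (by omega)))
      linarith [Real.log_le_log (by linarith) h3]
    have h4 := Finset.single_le_sum (fun j _ => hmono j) (Finset.mem_univ i)
    rw [Finset.sum_sub_distrib] at h4
    have h2 := hb2 i k hk
    have h5 := Real.log_le_log (by linarith) (hlt.le.trans h1)
    rw [Real.log_mul (by norm_num) (by linarith)] at h5
    simp only [hS]
    linarith
  have hgrow : ∀ n : ℕ, n * η ≤ S (k₀ + n) := by
    intro n
    induction n with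
    | zero =>
      simp only [Nat.cast_zero, zero_mul]
      refine Finset.sum_nonneg fun i _ => Real.log_nonneg ?_
      linarith [hb2 i (k₀ + 0) (by omega)]
    | succ n ih =>
      have := hstep (k₀ + n) (by omega)
      push_cast
      rw [← add_assoc]
      linarith
  -- the exponent for which the zero-order bound on `S k` has slope at most `η / 2`
  set ε := η / (2 * Real.log 3 * (Fintype.card ι + 1)) with hε
  have hε0 : 0 < ε := by positivity
  choose C hC hCf using fun i => (hf i).2 ε hε0
  have hup : ∀ i k, k₀ ≤ k → Real.log (b i k) ≤ Real.log (C i + 1) + ε * Real.log 2 +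
      k * (ε * Real.log 3) := by
    intro i k hk
    have h2 := hb2 i k hk
    have h1 : b i k ≤ (C i + 1) * (2 * 3 ^ k) ^ ε := by
      refine log_norm_le_of_le_exp (by have := hC i; positivity) ((hCf i _).trans ?_)
      have := hC i
      have h3 : (1 : ℝ) ≤ 3 ^ k := one_le_pow₀ (by norm_num)
      gcongr
      · linarith
      · linarith [hp i k]
    have h3 := Real.log_le_log (by linarith) h1
    have := hC i
    rw [Real.log_mul (by positivity) (by positivity), Real.log_rpow (by positivity),
      Real.log_mul (by positivity) (by positivity), Real.log_pow] at h3
    linarith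
  set A := ∑ i, (Real.log (C i + 1) + ε * Real.log 2) with hA
  have hSup : ∀ k, k₀ ≤ k → S k ≤ A + k * (η / 2) := by
    intro k hk
    have h1 := Finset.sum_le_sum fun i (_ : i ∈ Finset.univ) => hup i k hk
    rw [Finset.sum_add_distrib] at h1
    simp only [Finset.sum_const, Finset.card_univ, nsmul_eq_mul] at h1
    have h2 : (Fintype.card ι : ℝ) * (ε * Real.log 3) ≤ η / 2 := by
      have : η / 2 = (Fintype.card ι + 1) * (ε * Real.log 3) := by
        rw [hε]; field_simp
      rw [this]
      have : 0 < ε * Real.log 3 := by positivity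
      nlinarith
    have h3 : (Fintype.card ι : ℝ) * (k * (ε * Real.log 3)) ≤ k * (η / 2) := by
      calc _ = k * ((Fintype.card ι : ℝ) * (ε * Real.log 3)) := by ring
        _ ≤ _ := by gcongr
    linarith
  obtain ⟨n, hn⟩ := exists_nat_gt ((A + k₀ * (η / 2)) / (η / 2))
  rw [div_lt_iff₀ (by positivity)] at hn
  have h1 := hgrow n
  have h2 := hSup (k₀ + n) (by omega)
  push_cast at h2
  linarith

/-! ### The auxiliary functions -/

/-- Entire functions divide when the orders of vanishing allow it; the quotient is the meromorphic
normal form of `A / B`. -/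
lemma exists_quotient {A B : ℂ → ℂ} (hA : Differentiable ℂ A) (hB : Differentiable ℂ B)
    (hfin : ∀ z, analyticOrderAt B z ≠ ⊤)
    (hord : ∀ z, analyticOrderAt B z ≤ analyticOrderAt A z) :
    ∃ φ : ℂ → ℂ, Differentiable ℂ φ ∧ ∀ z, A z = B z * φ z := by
  have hmA : ∀ z, MeromorphicAt A z := fun z => (hA.analyticAt z).meromorphicAt
  have hmB : ∀ z, MeromorphicAt B z := fun z => (hB.analyticAt z).meromorphicAt
  have hm : MeromorphicOn (A * B⁻¹) Set.univ := fun z _ => (hmA z).mul (hmB z).inv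
  set φ := toMeromorphicNFOn (A * B⁻¹) Set.univ with hφ
  have hφa : ∀ z, AnalyticAt ℂ φ z := by
    intro z
    rw [← (meromorphicNFOn_toMeromorphicNFOn (A * B⁻¹) Set.univ
      (Set.mem_univ z)).meromorphicOrderAt_nonneg_iff_analyticAt,
      meromorphicOrderAt_toMeromorphicNFOn hm (Set.mem_univ z),
      meromorphicOrderAt_mul (hmA z) (hmB z).inv, meromorphicOrderAt_inv,
      (hA.analyticAt z).meromorphicOrderAt_eq, (hB.analyticAt z).meromorphicOrderAt_eq]
    have h1 := hord z
    obtain ⟨n, hn⟩ := ENat.ne_top_iff_exists.1 (hfin z)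
    rw [← hn] at h1 ⊢
    cases hm : analyticOrderAt A z with
    | top => simp
    | coe m =>
      rw [hm] at h1
      have h2 : n ≤ m := by exact_mod_cast h1
      change (0 : WithTop ℤ) ≤ (((m : ℤ) + -(n : ℤ) : ℤ) : WithTop ℤ)
      exact_mod_cast (by omega : (0 : ℤ) ≤ (m : ℤ) + -(n : ℤ))
  refine ⟨φ, fun z => (hφa z).differentiableAt, fun z => ?_⟩
  have h1 : ∀ᶠ w in 𝓝[≠] z, A w = B w * φ w := by
    have h2 : ∀ᶠ w in 𝓝[≠] z, B w ≠ 0 :=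
      (hB.analyticAt z).eventually_eq_zero_or_eventually_ne_zero.resolve_left
        fun h => hfin z (analyticOrderAt_eq_top.2 h)
    filter_upwards [h2, hm.toMeromorphicNFOn_eq_self_on_nhdsNE (Set.mem_univ z)] with w hw1 hw2
    rw [hφ, hw2]
    simp
    field_simp
  have h3 : Tendsto (fun w => A w - B w * φ w) (𝓝[≠] z) (𝓝 (A z - B z * φ z)) :=
    ((hA z).continuousAt.sub
      ((hB z).continuousAt.mul (hφa z).continuousAt)).tendsto.mono_left nhdsWithin_le_nhds
  have h4 : Tendsto (fun w => A w - B w * φ w) (𝓝[≠] z) (𝓝 0) :=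
    tendsto_const_nhds.congr' (h1.mono fun w hw => (sub_eq_zero.2 hw).symm)
  exact sub_eq_zero.1 (tendsto_nhds_unique h3 h4)

/-- At a `c`-point of `F` with `c ∈ {0, 1}` the derivative `F'` loses exactly one order of vanishing,
which the zero of `D` makes up for. -/
lemma exists_deriv_mul_quotient {F D : ℂ → ℂ} (hF : Differentiable ℂ F) (hD : Differentiable ℂ D)
    (hF0 : F 0 * (F 0 - 1) ≠ 0) (h0 : ∀ z, F z = 0 → D z = 0) (h1 : ∀ z, F z = 1 → D z = 0) :
    ∃ φ : ℂ → ℂ, Differentiable ℂ φ ∧ ∀ z, deriv F z * D z = F z * (F z - 1) * φ z := by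
  have hB : Differentiable ℂ (F * fun z => F z - 1) := hF.mul (hF.sub_const 1)
  refine exists_quotient (A := deriv F * D) (B := F * fun z => F z - 1) (hF.deriv.mul hD) hB ?_ ?_
  · intro z
    have han : AnalyticOnNhd ℂ (F * fun z => F z - 1) Set.univ := fun w _ => hB.analyticAt w
    refine han.analyticOrderAt_ne_top_of_isPreconnected isPreconnected_univ (x := 0)
      (Set.mem_univ _) (Set.mem_univ _) ?_
    rw [(hB.analyticAt 0).analyticOrderAt_eq_zero.2 hF0]
    simp
  · intro z
    have haF := hF.analyticAt z
    have haF1 := (hF.sub_const 1).analyticAt z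
    rw [analyticOrderAt_mul haF haF1, analyticOrderAt_mul (hF.deriv.analyticAt z)
      (hD.analyticAt z)]
    have hd := haF.analyticOrderAt_deriv_add_one
    by_cases hz0 : F z = 0
    · rw [haF1.analyticOrderAt_eq_zero.2 (by simp [hz0]), add_zero]
      simp only [hz0, sub_zero] at hd
      rw [← hd]
      gcongr
      exact Order.one_le_iff_ne_zero.2 ((hD.analyticAt z).analyticOrderAt_ne_zero.2 (h0 z hz0))
    · rw [haF.analyticOrderAt_eq_zero.2 hz0, zero_add]
      by_cases hz1 : F z = 1
      · simp only [hz1] at hd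
        rw [← hd]
        gcongr
        exact Order.one_le_iff_ne_zero.2 ((hD.analyticAt z).analyticOrderAt_ne_zero.2 (h1 z hz1))
      · rw [haF1.analyticOrderAt_eq_zero.2 (sub_ne_zero.2 hz1)]
        exact zero_le

lemma exists_exp_two_le {F : ℂ → ℂ} (hF : Differentiable ℂ F) (hnc : ¬∃ c, ∀ z, F z = c) :
    ∃ w, Real.exp 2 ≤ ‖F w‖ := by
  by_contra! h
  refine hnc ⟨F 0, fun z => hF.apply_eq_apply_of_bounded ?_ z 0⟩
  exact isBounded_iff_forall_norm_le.2 ⟨Real.exp 2, by rintro _ ⟨w, rfl⟩; exact (h w).le⟩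

/-- The auxiliary entire function `F' (F - G) / (F (F - 1))`, multiplied by a constant `K` so that it
attains a modulus of at least `exp 2`. -/
lemma exists_auxiliary {F G : ℂ → ℂ} (hF : SubPow F) (hG : SubPow G) (hF0 : F 0 * (F 0 - 1) ≠ 0)
    (hnc : ¬∃ c, ∀ z, F z = c) (h0 : ∀ z, F z = 0 → G z = 0) (h1 : ∀ z, F z = 1 → G z = 1)
    (hne : ∃ z, F z - G z ≠ 0) :
    ∃ φ : ℂ → ℂ, SubPow φ ∧ (∃ w, Real.exp 2 ≤ ‖φ w‖) ∧ ∃ K : ℝ, 0 < K ∧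
      ∀ z, K * (‖deriv F z‖ * ‖F z - G z‖) = ‖F z‖ * ‖F z - 1‖ * ‖φ z‖ := by
  obtain ⟨φ, hφd, hφ⟩ := exists_deriv_mul_quotient hF.1 (hF.sub hG).1 hF0
    (fun z hz => by simp [hz, h0 z hz]) (fun z hz => by simp [hz, h1 z hz])
  have hφs : SubPow φ := (hF.deriv.mul (hF.sub hG)).of_mul_eq
    (hF.mul (hF.sub (SubPow.const 1))) hφd hF0 hφ
  obtain ⟨v, hv⟩ : ∃ v, deriv F v ≠ 0 := by
    by_contra! h
    exact hnc ⟨F 0, fun z => is_const_of_deriv_eq_zero hF.1 h z 0⟩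
  obtain ⟨u, hu⟩ := hne
  obtain ⟨w, hw1, hw2⟩ :=
    ((ae_ne_zero hF.deriv.1 hv).and (ae_ne_zero (hF.sub hG).1 hu)).exists
  have hφw : φ w ≠ 0 := by
    intro h
    have := hφ w
    rw [h, mul_zero] at this
    exact mul_ne_zero hw1 hw2 this
  have hK : 0 < Real.exp 2 / ‖φ w‖ := by positivity
  refine ⟨fun z => ((Real.exp 2 / ‖φ w‖ : ℝ) : ℂ) * φ z, hφs.const_mul _, ⟨w, ?_⟩,
    Real.exp 2 / ‖φ w‖, hK, fun z => ?_⟩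
  · rw [norm_mul, Complex.norm_real, Real.norm_of_nonneg hK.le,
      div_mul_cancel₀ _ (norm_ne_zero_iff.2 hφw)]
  · rw [norm_mul, Complex.norm_real, Real.norm_of_nonneg hK.le, ← norm_mul, hφ z]
    simp only [norm_mul]
    ring

lemma false_of_auxiliary_bounds {F G F' φ : ℂ} {K κ : ℝ} (hK : 0 ≤ K) (hKκ : 2 * (K * κ) ≤ 1)
    (hF : 2 ≤ ‖F‖) (hGF : ‖G‖ ≤ ‖F‖) (hφ : Real.exp 1 ≤ ‖φ‖) (hF' : ‖F'‖ ≤ κ * ‖F‖)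
    (h : K * (‖F'‖ * ‖F - G‖) = ‖F‖ * ‖F - 1‖ * ‖φ‖) : False := by
  have h1 : ‖F‖ / 2 ≤ ‖F - 1‖ := by
    have := norm_sub_norm_le F 1
    rw [norm_one] at this
    linarith
  have h2 : ‖F - G‖ ≤ 2 * ‖F‖ := by linarith [norm_sub_le F G]
  have he : 2.7 < Real.exp 1 := by linarith [Real.exp_one_gt_d9]
  have h3 : ‖F‖ * (‖F‖ / 2) * 2.7 ≤ ‖F‖ * ‖F - 1‖ * ‖φ‖ := by gcongr; linarith
  have h4 : K * (‖F'‖ * ‖F - G‖) ≤ K * (κ * ‖F‖ * (2 * ‖F‖)) := by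
    gcongr
    exact (norm_nonneg _).trans hF'
  have h5 : K * (κ * ‖F‖ * (2 * ‖F‖)) = 2 * (K * κ) * ‖F‖ ^ 2 := by ring
  nlinarith

/-! ### Uniqueness -/

/-- Uniqueness for two non-constant functions of zero order sharing `0` and `1` ignoring
multiplicities. If `F ≠ G`, both auxiliary functions, `F` and `G` are at least `e` in modulus at some
point where `F' / F` and `G' / G` are tiny, contradicting the definition of the auxiliary function
belonging to the larger of `F` and `G`. -/
lemma eq_of_shared_values {F G : ℂ → ℂ} (hF : SubPow F) (hG : SubPow G)
    (hF0 : F 0 * (F 0 - 1) ≠ 0) (hG0 : G 0 * (G 0 - 1) ≠ 0)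
    (hFnc : ¬∃ c, ∀ z, F z = c) (hGnc : ¬∃ c, ∀ z, G z = c)
    (h0 : ∀ z, F z = 0 ↔ G z = 0) (h1 : ∀ z, F z = 1 ↔ G z = 1) (z : ℂ) : F z = G z := by
  by_contra hne
  obtain ⟨φ, hφ, hφw, K, hK, hKφ⟩ := exists_auxiliary hF hG hF0 hFnc (fun z => (h0 z).1)
    (fun z => (h1 z).1) ⟨z, sub_ne_zero.2 hne⟩
  obtain ⟨ψ, hψ, hψw, L, hL, hLψ⟩ := exists_auxiliary hG hF hG0 hGnc (fun z => (h0 z).2)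
    (fun z => (h1 z).2) ⟨z, sub_ne_zero.2 (Ne.symm hne)⟩
  -- this choice gives `2 K κ ≤ 1` and `2 L κ ≤ 1`
  set κ : ℝ := 1 / (2 * (K + L)) with hκ
  have hκ0 : 0 < κ := by positivity
  have hκs : 2 * (K * κ) + 2 * (L * κ) = 1 := by rw [hκ]; field_simp
  have hKκ : 0 < K * κ := by positivity
  have hLκ : 0 < L * κ := by positivity
  obtain ⟨r₁, hr₁⟩ := volume_large_logDeriv_le hF (left_ne_zero_of_mul hF0) hκ0
  obtain ⟨r₂, hr₂⟩ := volume_large_logDeriv_le hG (left_ne_zero_of_mul hG0) hκ0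
  obtain ⟨r, hr, hrpos, hgood⟩ := exists_good_scale (f := ![F, G, φ, ψ])
    (by intro i; fin_cases i <;> assumption)
    (by
      intro i
      fin_cases i
      exacts [exists_exp_two_le hF.1 hFnc, exists_exp_two_le hG.1 hGnc, hφw, hψw]) (max r₁ r₂)
  have b1 := hr₁ r ((le_max_left _ _).trans hr)
  have b2 := hr₂ r ((le_max_right _ _).trans hr)
  have b3 := hgood 0
  have b4 := hgood 1
  have b5 := hgood 2
  have b6 := hgood 3
  simp only [Matrix.cons_val] at b3 b4 b5 b6
  set V := volume (ball (0 : ℂ) r) with hV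
  have hV0 : V ≠ 0 := (measure_ball_pos volume _ hrpos).ne'
  have hVt : V ≠ ⊤ := measure_ball_lt_top.ne
  obtain ⟨z, hz⟩ : ∃ z : ℂ, (κ * ‖F z‖ ≥ ‖deriv F z‖ ∧ κ * ‖G z‖ ≥ ‖deriv G z‖) ∧
      (Real.exp 1 ≤ ‖F z‖ ∧ Real.exp 1 ≤ ‖G z‖) ∧ Real.exp 1 ≤ ‖φ z‖ ∧ Real.exp 1 ≤ ‖ψ z‖ := by
    by_contra! hbad
    have hsub : ball (0 : ℂ) r ⊆
        (({z ∈ ball (0 : ℂ) r | κ * ‖F z‖ < ‖deriv F z‖} ∪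
          {z ∈ ball (0 : ℂ) r | κ * ‖G z‖ < ‖deriv G z‖}) ∪
        ({z ∈ ball (0 : ℂ) r | ‖F z‖ < Real.exp 1} ∪ {z ∈ ball (0 : ℂ) r | ‖G z‖ < Real.exp 1})) ∪
        ({z ∈ ball (0 : ℂ) r | ‖φ z‖ < Real.exp 1} ∪
          {z ∈ ball (0 : ℂ) r | ‖ψ z‖ < Real.exp 1}) := by
      intro z hz
      simp only [Set.mem_union, Set.mem_ofPred_eq, hz, true_and]
      by_contra! hn
      exact absurd (hbad z ⟨hn.1.1.1, hn.1.1.2⟩ hn.1.2 hn.2.1) (not_lt.2 hn.2.2)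
    -- the six exceptional sets cover at most `2 / 8 + 4 / 16` of the disc
    have hle : V ≤ ENNReal.ofReal (1 / 2) * V := by
      refine (measure_mono hsub).trans ((measure_union_le _ _).trans ((add_le_add
        ((measure_union_le _ _).trans (add_le_add
          ((measure_union_le _ _).trans (add_le_add b1 b2))
          ((measure_union_le _ _).trans (add_le_add b3 b4))))
        ((measure_union_le _ _).trans (add_le_add b5 b6))).trans (le_of_eq ?_)))
      simp only [← add_mul]
      rw [← ENNReal.ofReal_add (by norm_num) (by norm_num),
        ← ENNReal.ofReal_add (by norm_num) (by norm_num),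
        ← ENNReal.ofReal_add (by norm_num) (by norm_num),
        ← ENNReal.ofReal_add (by norm_num) (by norm_num)]
      norm_num
    have h1le : (1 : ENNReal) ≤ ENNReal.ofReal (1 / 2) :=
      (ENNReal.mul_le_mul_iff_left hV0 hVt).1 (by rwa [one_mul])
    rw [ENNReal.one_le_ofReal] at h1le
    norm_num at h1le
  obtain ⟨⟨hF', hG'⟩, ⟨hFe, hGe⟩, hφe, hψe⟩ := hz
  have he : 2 < Real.exp 1 := by linarith [Real.exp_one_gt_d9]
  rcases le_total ‖G z‖ ‖F z‖ with h | h
  · exact false_of_auxiliary_bounds hK.le (by linarith) (by linarith) h hφe hF' (hKφ z)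
  · exact false_of_auxiliary_bounds hL.le (by linarith) (by linarith) h hψe hG' (hLψ z)

/-- Otherwise `F` and `1 / F` would both be large at a common point. -/
lemma SubPow.const_of_ne_zero {F : ℂ → ℂ} (hF : SubPow F) (h0 : ∀ z, F z ≠ 0) :
    ∃ c, ∀ z, F z = c := by
  by_contra hnc
  have hφd : Differentiable ℂ fun z => (F z)⁻¹ := fun z => (hF.1 z).inv (h0 z)
  have hφ : SubPow fun z => (F z)⁻¹ := (SubPow.const 1).of_mul_eq hF hφd (h0 0)
    (fun z => (mul_inv_cancel₀ (h0 z)).symm)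
  have hφnc : ¬∃ c, ∀ z, (F z)⁻¹ = c := fun ⟨c, hc⟩ => hnc ⟨c⁻¹, fun z => by simp [← hc z]⟩
  obtain ⟨r, -, hr, hgood⟩ := exists_good_scale (f := ![F, fun z => (F z)⁻¹])
    (by intro i; fin_cases i <;> assumption)
    (by
      intro i
      fin_cases i
      exacts [exists_exp_two_le hF.1 hnc, exists_exp_two_le hφd hφnc]) 0
  have b1 := hgood 0
  have b2 := hgood 1
  simp only [Matrix.cons_val] at b1 b2
  set V := volume (ball (0 : ℂ) r) with hV
  have hV0 : V ≠ 0 := (measure_ball_pos volume _ hr).ne'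
  have hVt : V ≠ ⊤ := measure_ball_lt_top.ne
  have hsub : ball (0 : ℂ) r ⊆ {z ∈ ball (0 : ℂ) r | ‖F z‖ < Real.exp 1} ∪
      {z ∈ ball (0 : ℂ) r | ‖(F z)⁻¹‖ < Real.exp 1} := by
    intro z hz
    simp only [Set.mem_union, Set.mem_ofPred_eq, hz, true_and]
    by_contra! hn
    have he : 2 < Real.exp 1 := by linarith [Real.exp_one_gt_d9]
    have h1 : ‖F z‖ * ‖(F z)⁻¹‖ = 1 := by rw [← norm_mul, mul_inv_cancel₀ (h0 z), norm_one]
    nlinarith [hn.1, hn.2]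
  have hle : V ≤ ENNReal.ofReal (1 / 8) * V := by
    refine (measure_mono hsub).trans ((measure_union_le _ _).trans ((add_le_add b1 b2).trans
      (le_of_eq ?_)))
    rw [← add_mul, ← ENNReal.ofReal_add (by norm_num) (by norm_num)]
    norm_num
  have h1le : (1 : ENNReal) ≤ ENNReal.ofReal (1 / 8) :=
    (ENNReal.mul_le_mul_iff_left hV0 hVt).1 (by rwa [one_mul])
  rw [ENNReal.one_le_ofReal] at h1le
  norm_num at h1le

/-- Removes from `eq_of_shared_values` the conditions at the origin, by a translation, and the
assumption that `G` is not constant. -/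
lemma eq_of_shared_values_of_nonconst {F G : ℂ → ℂ} (hF : SubPow F) (hG : SubPow G)
    (hFnc : ¬∃ c, ∀ z, F z = c)
    (h0 : ∀ z, F z = 0 ↔ G z = 0) (h1 : ∀ z, F z = 1 ↔ G z = 1) (z : ℂ) : F z = G z := by
  have hGnc : ¬∃ c, ∀ z, G z = c := by
    rintro ⟨c, hc⟩
    by_cases hc0 : c = 0
    · exact hFnc ⟨0, fun z => (h0 z).2 ((hc z).trans hc0)⟩
    · exact hFnc (hF.const_of_ne_zero fun z hz => hc0 (by rw [← hc z, (h0 z).1 hz]))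
  have hex : ∀ {H : ℂ → ℂ}, Differentiable ℂ H → (¬∃ c, ∀ z, H z = c) → ∀ a : ℂ,
      ∀ᵐ z, H z - a ≠ 0 := by
    intro H hH hnc a
    obtain ⟨w, hw⟩ : ∃ w, H w - a ≠ 0 := by
      by_contra! h
      exact hnc ⟨a, fun z => sub_eq_zero.1 (h z)⟩
    exact ae_ne_zero (hH.sub_const a) hw
  obtain ⟨c, ⟨hc1, hc2⟩, hc3, hc4⟩ :=
    (((hex hF.1 hFnc 0).and (hex hF.1 hFnc 1)).and
      ((hex hG.1 hGnc 0).and (hex hG.1 hGnc 1))).exists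
  rw [sub_zero] at hc1 hc3
  have hshift : ∀ {H : ℂ → ℂ}, (¬∃ c, ∀ z, H z = c) → ¬∃ a, ∀ z, H (1 * z + c) = a := by
    rintro H hnc ⟨a, ha⟩
    exact hnc ⟨a, fun z => by simpa using ha (z - c)⟩
  have := eq_of_shared_values (hF.comp_affine 1 c) (hG.comp_affine 1 c)
    (by simpa using ⟨hc1, hc2⟩) (by simpa using ⟨hc3, hc4⟩) (hshift hFnc) (hshift hGnc)
    (fun z => h0 _) (fun z => h1 _) (z - c)
  simpa using this

/-- **Theorem 2.** If a non-constant entire function `f` of zero order and its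
`q`-difference `Δ_{q,η} f (z) = f(qz+η) - f(z)` share the pairs `(a₁, a₂)` and
`(b₁, b₂)` IM, where `a₁ ≠ b₁` and `a₂ ≠ b₂`, then
`(a₂ - b₂) f - (a₁ - b₁) Δ_{q,η} f ≡ a₂ b₁ - a₁ b₂`. -/
theorem uniqueness_qdifference_shares_two_pairs_IM
    (f : ℂ → ℂ) (hf : ZeroOrderEntire f) (hnc : ¬∃ c : ℂ, ∀ z : ℂ, f z = c)
    (q η : ℂ) (hq : q ≠ 0) (a₁ a₂ b₁ b₂ : ℂ) (ha : a₁ ≠ b₁) (hb : a₂ ≠ b₂)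
    (hsa : {z : ℂ | f z = a₁} = {z : ℂ | f (q * z + η) - f z = a₂})
    (hsb : {z : ℂ | f z = b₁} = {z : ℂ | f (q * z + η) - f z = b₂}) :
    ∀ z : ℂ, (a₂ - b₂) * f z - (a₁ - b₁) * (f (q * z + η) - f z) = a₂ * b₁ - a₁ * b₂ := by
  intro z
  have hs := SubPow.of_zeroOrderEntire hf
  have hd₁ : b₁ - a₁ ≠ 0 := sub_ne_zero.2 ha.symm
  have hd₂ : b₂ - a₂ ≠ 0 := sub_ne_zero.2 hb.symm
  have zero_iff : ∀ {d x a : ℂ}, d ≠ 0 → (d⁻¹ * (x - a) = 0 ↔ x = a) := by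
    intro d x a hd
    simp [hd, sub_eq_zero]
  have one_iff : ∀ {x a b : ℂ}, b - a ≠ 0 → ((b - a)⁻¹ * (x - a) = 1 ↔ x = b) := by
    intro x a b hd
    rw [inv_mul_eq_one₀ hd, eq_comm, sub_left_inj]
  have key := eq_of_shared_values_of_nonconst
    (F := fun z => (b₁ - a₁)⁻¹ * (f z - a₁))
    (G := fun z => (b₂ - a₂)⁻¹ * ((f (q * z + η) - f z) - a₂))
    ((hs.sub (SubPow.const a₁)).const_mul _)
    ((((hs.comp_affine q η).sub hs).sub (SubPow.const a₂)).const_mul _)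
    (by
      rintro ⟨c, hc⟩
      refine hnc ⟨(b₁ - a₁) * c + a₁, fun w => ?_⟩
      rw [← hc w, mul_inv_cancel_left₀ hd₁, sub_add_cancel])
    (fun w => by
      rw [zero_iff hd₁, zero_iff hd₂]
      exact Set.ext_iff.1 hsa w)
    (fun w => by
      rw [one_iff hd₁, one_iff hd₂]
      exact Set.ext_iff.1 hsb w) z
  rw [inv_mul_eq_iff_eq_mul₀ hd₁, ← mul_assoc, mul_comm (b₁ - a₁), mul_assoc,
    eq_inv_mul_iff_mul_eq₀ hd₂] at key
  linear_combination -key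
end

section
/- Let f and g be two non-constant polynomials with complex coefficients, and let a and b be two distinct complex numbers. If f and g share the values a and b IM (i.e., the set of complex roots of f − a equals the set of complex roots of g − a, and the set of complex roots of f − b equals the set of complex roots of g − b), then f = g. -/
/-!
Assume `deg g ≤ deg f = n`. At a zero of `f - a` of multiplicity `m`, the derivative `f'` vanishes
to order at least `m - 1` and `f - g = (f - a) - (g - a)` vanishes to order at least one, so
`f - a` divides `f' * (f - g)`; the same holds for `f - b`. As `f - a` and `f - b` are coprime,
their product, of degree `2 * n`, divides `f' * (f - g)`, of degree at most `2 * n - 1`.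
Hence `f' * (f - g) = 0`, and `f' ≠ 0` because `f` is not constant.
-/

open Polynomial in
/-- The multiplicity lost by `p` on differentiation is restored by any `q` vanishing at the
zeros of `p`. -/
lemma dvd_derivative_mul_of_roots (p q : ℂ[X]) (h : ∀ z, p.eval z = 0 → q.eval z = 0) :
    p ∣ derivative p * q := by
  by_cases h0 : derivative p * q = 0
  · simp [h0]
  have hq : q ≠ 0 := right_ne_zero_of_mul h0
  have hp : p ≠ 0 := by
    rintro rfl
    simp at h0
  refine (IsAlgClosed.splits p).dvd_of_roots_le_roots hp ?_
  rw [Multiset.le_iff_count]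
  intro z
  rw [count_roots, count_roots, rootMultiplicity_mul h0]
  by_cases hz : p.eval z = 0
  · have h1 := rootMultiplicity_sub_one_le_derivative_rootMultiplicity p z
    have h2 : 0 < q.rootMultiplicity z := (rootMultiplicity_pos hq).2 (h z hz)
    omega
  · rw [rootMultiplicity_eq_zero hz]
    exact Nat.zero_le _

open Polynomial in
lemma eq_of_shared_values_of_natDegree_le (f g : ℂ[X]) (hf : 0 < f.natDegree)
    (hle : g.natDegree ≤ f.natDegree) (a b : ℂ) (hab : a ≠ b)
    (ha : ∀ z, f.eval z = a → g.eval z = a) (hb : ∀ z, f.eval z = b → g.eval z = b) :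
    f = g := by
  have key : ∀ c : ℂ, (∀ z, f.eval z = c → g.eval z = c) →
      f - C c ∣ derivative f * (f - g) := by
    intro c hc
    have := dvd_derivative_mul_of_roots (f - C c) (f - g) (by
      intro z hz
      have hz' : f.eval z = c := by simpa [sub_eq_zero] using hz
      simp [hz', hc z hz'])
    simpa using this
  have hcop : IsCoprime (f - C a) (f - C b) := by
    have h := (isCoprime_X_sub_C_of_isUnit_sub (sub_ne_zero.2 hab).isUnit).map
      (compRingHom f)
    simpa using h
  have hdvd := hcop.mul_dvd (key a ha) (key b hb)
  have hne : ∀ c : ℂ, f - C c ≠ 0 := by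
    intro c hc
    have := natDegree_sub_C (p := f) (a := c)
    rw [hc, natDegree_zero] at this
    omega
  have hd : derivative f ≠ 0 := by
    intro h
    have := derivative_eq_zero.1 h
    omega
  by_contra hfg
  have h1 := natDegree_le_of_dvd hdvd (mul_ne_zero hd (sub_ne_zero.2 hfg))
  rw [natDegree_mul (hne a) (hne b), natDegree_sub_C, natDegree_sub_C,
    natDegree_mul hd (sub_ne_zero.2 hfg)] at h1
  have h2 := natDegree_derivative_lt hf.ne'
  have h3 := natDegree_sub_le_of_le (le_refl f.natDegree) hle
  rw [max_self] at h3
  omega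

/-- **Adams–Straus.** If two non-constant complex polynomials share two distinct
values `a` and `b` IM, then they are equal. -/
theorem polynomials_sharing_two_values_IM_eq
    (f g : Polynomial ℂ) (hf : 0 < f.natDegree) (hg : 0 < g.natDegree)
    (a b : ℂ) (hab : a ≠ b)
    (hsa : {z : ℂ | f.eval z = a} = {z : ℂ | g.eval z = a})
    (hsb : {z : ℂ | f.eval z = b} = {z : ℂ | g.eval z = b}) :
    f = g := by
  have ha : ∀ z, f.eval z = a ↔ g.eval z = a := fun z => Set.ext_iff.1 hsa z
  have hb : ∀ z, f.eval z = b ↔ g.eval z = b := fun z => Set.ext_iff.1 hsb z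
  rcases le_total g.natDegree f.natDegree with h | h
  · exact eq_of_shared_values_of_natDegree_le f g hf h a b hab
      (fun z => (ha z).1) (fun z => (hb z).1)
  · exact (eq_of_shared_values_of_natDegree_le g f hg h a b hab
      (fun z => (ha z).2) (fun z => (hb z).2)).symm
end

section
/- Let f : ℂ → ℂ be an entire function of zero order such that f(z) ≠ 0 for every z ∈ ℂ. Then f is constant. -/
/-!
A zero-free entire `f` has an entire logarithm, `f = exp ∘ g` (`exists_entire_log`). Zero order
gives `log⁺ M(R, f) ≤ √R` for all large `R`, so by the maximum principle `Re g ≤ √R` on the disc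
`|z| < R` (`ZeroOrderEntire.eventually_norm_le`). The Borel–Carathéodory inequality turns this
one-sided bound into `|g z - g 0| ≤ 2 (√R + |g 0|) |z| / (R - |z|)`, which tends to `0` as
`R → ∞` with `z` fixed. Hence `g`, and therefore `f`, is constant.
-/

open Filter Topology

theorem exists_entire_log {f : ℂ → ℂ} (hf : Differentiable ℂ f) (hne : ∀ z, f z ≠ 0) :
    ∃ g : ℂ → ℂ, Differentiable ℂ g ∧ ∀ z, f z = Complex.exp (g z) := by
  have hd : Differentiable ℂ (fun z => deriv f z / f z) := hf.deriv.div hf hne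
  obtain ⟨g, hg⟩ := hd.isExactOn_univ.with_val_at 0 (Complex.log (f 0))
  obtain ⟨hg0, hg⟩ := hg
  have hg' : ∀ z, HasDerivAt g (deriv f z / f z) z := fun z => hg z (Set.mem_univ z)
  refine ⟨g, fun z => (hg' z).differentiableAt, fun z => ?_⟩
  -- `f * exp (-g)` has zero derivative and equals `1` at the origin.
  have hq : ∀ w, HasDerivAt (fun u => f u * Complex.exp (-g u)) 0 w := by
    intro w
    have h := (hf w).hasDerivAt.mul (hg' w).neg.cexp
    have e : deriv f w * Complex.exp (-g w)
        + f w * (Complex.exp (-g w) * (-(deriv f w / f w))) = 0 := by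
      have := hne w
      field_simp
      ring
    exact e ▸ h
  have hc := is_const_of_deriv_eq_zero (fun w => (hq w).differentiableAt)
    (fun w => (hq w).deriv) z 0
  simp only [hg0, Complex.exp_neg, Complex.exp_log (hne 0), mul_inv_cancel₀ (hne 0)] at hc
  rwa [← div_eq_mul_inv, div_eq_one_iff_eq (Complex.exp_ne_zero _)] at hc

theorem le_exp_logPlus (x : ℝ) : x ≤ Real.exp (logPlus x) := by
  rcases le_or_gt x 0 with hx | hx
  · exact hx.trans (Real.exp_pos _).le
  · exact (Real.log_le_iff_le_exp hx).1 (le_max_right _ _)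

theorem norm_le_maxMod {f : ℂ → ℂ} (hf : Continuous f) {z : ℂ} {r : ℝ} (hz : ‖z‖ = r) :
    ‖f z‖ ≤ maxMod f r :=
  le_csSup ((isCompact_sphere (0 : ℂ) r).image hf.norm).bddAbove
    ⟨z, by simpa using hz, rfl⟩

theorem ZeroOrderEntire.eventually_norm_le {f : ℂ → ℂ} (hf : ZeroOrderEntire f) :
    ∀ᶠ R : ℝ in atTop, ∀ z : ℂ, ‖z‖ < R → ‖f z‖ ≤ Real.exp (√R) := by
  have hlt := eventually_lt_of_limsup_lt (f := atTop)
    (u := fun r : ℝ => ((logPlus (logPlus (maxMod f r)) / Real.log r : ℝ) : EReal))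
    (b := ((1 / 2 : ℝ) : EReal)) (by rw [hf.2]; exact_mod_cast (by norm_num : (0 : ℝ) < 1 / 2))
  filter_upwards [hlt, eventually_gt_atTop 1] with R hR hR1 z hz
  have hlog : 0 < Real.log R := Real.log_pos hR1
  have h1 : logPlus (logPlus (maxMod f R)) ≤ Real.log (√R) := by
    have h2 : logPlus (logPlus (maxMod f R)) / Real.log R < 1 / 2 := EReal.coe_lt_coe_iff.1 hR
    rw [div_lt_iff₀ hlog] at h2
    rw [Real.log_sqrt (by linarith)]
    linarith
  have h3 : logPlus (maxMod f R) ≤ √R := by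
    refine (le_exp_logPlus _).trans ?_
    rw [← Real.le_log_iff_exp_le (by positivity)]
    exact h1
  have h4 : maxMod f R ≤ Real.exp (√R) := (le_exp_logPlus _).trans (Real.exp_le_exp.2 h3)
  refine Complex.norm_le_of_forall_mem_frontier_norm_le (U := Metric.ball (0 : ℂ) R)
    Metric.isBounded_ball hf.1.diffContOnCl (fun w hw => ?_) (subset_closure (by simpa using hz))
  rw [frontier_ball (0 : ℂ) (by linarith)] at hw
  exact (norm_le_maxMod hf.1.continuous (by simpa using hw)).trans h4

/-- Borel–Carathéodory combined with `R → ∞`: sublinear growth of `Re g` suffices. -/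
theorem eq_of_eventually_re_le_sqrt {g : ℂ → ℂ} (hg : Differentiable ℂ g)
    (h : ∀ᶠ R : ℝ in atTop, ∀ z : ℂ, ‖z‖ < R → (g z).re ≤ √R) (z : ℂ) : g z = g 0 := by
  by_contra hne
  set c := ‖g z - g 0‖ with hc
  have hc0 : 0 < c := norm_pos_iff.2 (sub_ne_zero.2 hne)
  set s := ‖z‖ with hs
  have hs0 : 0 ≤ s := norm_nonneg z
  set A := ‖g 0‖ with hA
  have hA0 : 0 ≤ A := norm_nonneg _
  -- Take `R = t ^ 2`, with `t` large enough that the Borel–Carathéodory bound drops below `c`.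
  have ht := (tendsto_pow_atTop (α := ℝ) (n := 2) two_ne_zero).eventually h
  obtain ⟨t, ht, ht1, ht2, ht3⟩ := (ht.and ((eventually_gt_atTop (1 + s)).and
    ((eventually_gt_atTop ((2 * s + 1) / c)).and
      (eventually_gt_atTop (c * s + 2 * s * A))))).exists
  have ht0 : 0 < t := by linarith
  have hst : s < t ^ 2 := by nlinarith
  rw [Real.sqrt_sq ht0.le] at ht
  have hbc := Complex.borelCaratheodory_zero (f := fun w => g w - g 0) (M := t + A)
    (R := t ^ 2) (z := z) (by linarith) (by fun_prop) (fun w hw => by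
      have h1 := ht w (by simpa using hw)
      have h2 := (neg_le_abs (g 0).re).trans (Complex.abs_re_le_norm (g 0))
      simp only [Set.mem_ofPred_eq, Complex.sub_re]
      linarith) (by positivity) (by simpa using hst) (by simp)
  rw [← hc, ← hs, le_div_iff₀ (by linarith)] at hbc
  rw [div_lt_iff₀ hc0] at ht2
  nlinarith [mul_lt_mul_of_pos_left ht2 ht0]

/-- An entire function of zero order with no zeros is constant. -/
theorem zeroOrderEntire_nonvanishing_const
    (f : ℂ → ℂ) (hf : ZeroOrderEntire f) (hne : ∀ z : ℂ, f z ≠ 0) :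
    ∃ c : ℂ, ∀ z : ℂ, f z = c := by
  obtain ⟨g, hg, hfg⟩ := exists_entire_log hf.1 hne
  refine ⟨f 0, fun z => ?_⟩
  rw [hfg z, hfg 0, eq_of_eventually_re_le_sqrt hg ?_ z]
  filter_upwards [hf.eventually_norm_le] with R hR w hw
  simpa [hfg, Complex.norm_exp] using hR w hw
end

section
/- Let f and g be non-constant entire functions, let a ≠ b be complex numbers, and let z₁ ∈ ℂ be a point with f(z₁) = g(z₁) = a. Let m be the multiplicity of z₁ as a zero of f − a and n the multiplicity of z₁ as a zero of g − a. Define φ(z) = f'(z)(f(z) − g(z)) / ((f(z) − a)(f(z) − b)) and ψ(z) = g'(z)(f(z) − g(z)) / ((g(z) − a)(g(z) − b)) on a punctured neighborhood of z₁. Then n·φ(z) − m·ψ(z) extends continuously across z₁ with value 0, i.e., lim_{z→z₁} (n·φ(z) − m·ψ(z)) = 0. -/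
/-!
The logarithmic derivative of a function with a zero of order `m` at `z₁` has a simple pole there
with residue `m`, i.e. `(z - z₁) f'(z) / (f(z) - a) → m`
(`tendsto_sub_mul_deriv_div_of_multiplicity`). On the other hand `f - g` vanishes at `z₁`, so
`(f(z) - g(z)) / (z - z₁) → D` with `D = f'(z₁) - g'(z₁)`. Multiplying the two limits gives
`φ → m D / (a - b)` and, symmetrically, `ψ → n D / (a - b)`; hence `n φ - m ψ → 0`.
-/

open Filter Topology

/-- The logarithmic derivative of `f - a` has residue `m` at a zero of multiplicity `m`. -/
lemma tendsto_sub_mul_deriv_div_of_multiplicity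
    {f : ℂ → ℂ} (hf : Differentiable ℂ f) {a z₁ : ℂ} (hfz : f z₁ = a) {m : ℕ}
    (hm0 : 0 < m) (hm1 : iteratedDeriv m (fun z => f z - a) z₁ ≠ 0)
    (hm2 : ∀ k : ℕ, 0 < k → k < m → iteratedDeriv k (fun z => f z - a) z₁ = 0) :
    Tendsto (fun z => (z - z₁) * (deriv f z / (f z - a))) (𝓝[≠] z₁) (𝓝 (m : ℂ)) := by
  have han : AnalyticAt ℂ (fun z => f z - a) z₁ :=
    (hf.sub_const a).analyticAt z₁
  have hord : analyticOrderAt (fun z => f z - a) z₁ = m := by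
    rw [analyticOrderAt_eq_nat_iff_iteratedDeriv_eq_zero han]
    refine ⟨fun k hk => ?_, hm1⟩
    rcases Nat.eq_zero_or_pos k with rfl | hk0
    · simp [hfz]
    · exact hm2 k hk0 hk
  obtain ⟨F, hF, hF0, hfF⟩ := han.analyticOrderAt_eq_natCast.mp hord
  -- Near `z₁`, `(z - z₁) f' / (f - a) = m + (z - z₁) F' / F`, where `f - a = (z - z₁) ^ m F`.
  have hlim : Tendsto (fun z => (m : ℂ) + (z - z₁) * (deriv F z / F z)) (𝓝[≠] z₁)
      (𝓝 (m : ℂ)) := by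
    have hc : ContinuousAt (fun z => (m : ℂ) + (z - z₁) * (deriv F z / F z)) z₁ :=
      continuousAt_const.add ((continuousAt_id.sub continuousAt_const).mul
        (hF.deriv.continuousAt.div hF.continuousAt hF0))
    have := hc.tendsto
    simp only [sub_self, zero_mul, add_zero] at this
    exact this.mono_left nhdsWithin_le_nhds
  refine hlim.congr' ?_
  have hFne : ∀ᶠ z in 𝓝[≠] z₁, F z ≠ 0 :=
    (hF.continuousAt.eventually_ne hF0).filter_mono nhdsWithin_le_nhds
  filter_upwards [hFne, hfF.eventually_nhds.filter_mono nhdsWithin_le_nhds,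
    hF.eventually_analyticAt.filter_mono nhdsWithin_le_nhds, self_mem_nhdsWithin]
    with z hFz hz hFan hne
  have hz0 : z - z₁ ≠ 0 := sub_ne_zero.mpr hne
  have hd : deriv f z = m * (z - z₁) ^ (m - 1) * F z + (z - z₁) ^ m * deriv F z := by
    have h1 : deriv (fun w => f w - a) z = deriv f z := deriv_sub_const a
    have h2 : HasDerivAt (fun w => (w - z₁) ^ m * F w)
        (m * (z - z₁) ^ (m - 1) * F z + (z - z₁) ^ m * deriv F z) z := by
      have h3 := (((hasDerivAt_id' z).sub_const z₁).fun_pow m).fun_mul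
        hFan.differentiableAt.hasDerivAt
      rwa [mul_one] at h3
    rw [← h1, Filter.EventuallyEq.deriv_eq hz]
    simpa only [smul_eq_mul] using h2.deriv
  have hv : f z - a = (z - z₁) ^ m * F z := by simpa only [smul_eq_mul] using hz.self_of_nhds
  rw [hd, hv]
  obtain ⟨k, rfl⟩ := Nat.exists_eq_succ_of_ne_zero hm0.ne'
  simp only [Nat.succ_eq_add_one, Nat.add_sub_cancel]
  field_simp
  ring

/-- The function `h` stands for the difference `f - g`; only its vanishing at `z₁` matters. -/
lemma tendsto_deriv_mul_div_of_multiplicity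
    {f h : ℂ → ℂ} (hf : Differentiable ℂ f) (hh : Differentiable ℂ h) {a b z₁ : ℂ}
    (hab : a ≠ b) (hfz : f z₁ = a) (hhz : h z₁ = 0) {m : ℕ}
    (hm0 : 0 < m) (hm1 : iteratedDeriv m (fun z => f z - a) z₁ ≠ 0)
    (hm2 : ∀ k : ℕ, 0 < k → k < m → iteratedDeriv k (fun z => f z - a) z₁ = 0) :
    Tendsto (fun z => deriv f z * h z / ((f z - a) * (f z - b))) (𝓝[≠] z₁)
      (𝓝 (m * deriv h z₁ / (a - b))) := by
  have h1 := tendsto_sub_mul_deriv_div_of_multiplicity hf hfz hm0 hm1 hm2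
  have h2 : Tendsto (slope h z₁) (𝓝[≠] z₁) (𝓝 (deriv h z₁)) :=
    hasDerivAt_iff_tendsto_slope.mp (hh z₁).hasDerivAt
  have h3 : Tendsto (fun z => f z - b) (𝓝[≠] z₁) (𝓝 (a - b)) := by
    rw [← hfz]
    exact ((hf.continuous.sub continuous_const).tendsto z₁).mono_left nhdsWithin_le_nhds
  refine ((h1.mul h2).div h3 (sub_ne_zero.mpr hab)).congr' ?_
  filter_upwards [self_mem_nhdsWithin] with z hne
  have hz0 : z - z₁ ≠ 0 := sub_ne_zero.mpr hne
  simp only [Pi.div_apply]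
  rw [slope_def_field, hhz, sub_zero, ← div_div]
  congr 1
  field_simp

/-- If `f` and `g` are non-constant entire functions sharing the value `a` at `z₁` with
multiplicities `m` and `n` respectively, then for
`φ = f'(f-g)/((f-a)(f-b))` and `ψ = g'(f-g)/((g-a)(g-b))` one has
`n·φ(z) - m·ψ(z) → 0` as `z → z₁`. -/
theorem nphi_sub_mpsi_tendsto_zero
    (f g : ℂ → ℂ) (hf : Differentiable ℂ f) (hg : Differentiable ℂ g)
    (hfnc : ¬∃ c : ℂ, ∀ z : ℂ, f z = c) (hgnc : ¬∃ c : ℂ, ∀ z : ℂ, g z = c)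
    (a b : ℂ) (hab : a ≠ b) (z₁ : ℂ) (hfz : f z₁ = a) (hgz : g z₁ = a)
    (m n : ℕ)
    (hm0 : 0 < m) (hm1 : iteratedDeriv m (fun z => f z - a) z₁ ≠ 0)
    (hm2 : ∀ k : ℕ, 0 < k → k < m → iteratedDeriv k (fun z => f z - a) z₁ = 0)
    (hn0 : 0 < n) (hn1 : iteratedDeriv n (fun z => g z - a) z₁ ≠ 0)
    (hn2 : ∀ k : ℕ, 0 < k → k < n → iteratedDeriv k (fun z => g z - a) z₁ = 0) :
    Filter.Tendsto
      (fun z : ℂ =>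
        (n : ℂ) * (deriv f z * (f z - g z) / ((f z - a) * (f z - b))) -
        (m : ℂ) * (deriv g z * (f z - g z) / ((g z - a) * (g z - b))))
      (𝓝[≠] z₁) (𝓝 0) := by
  have hφ := tendsto_deriv_mul_div_of_multiplicity (h := fun z => f z - g z) hf (hf.sub hg) hab hfz
    (by simp [hfz, hgz]) hm0 hm1 hm2
  have hψ := tendsto_deriv_mul_div_of_multiplicity (h := fun z => f z - g z) hg (hf.sub hg) hab hgz
    (by simp [hfz, hgz]) hn0 hn1 hn2
  convert (hφ.const_mul (n : ℂ)).sub (hψ.const_mul (m : ℂ)) using 2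
  ring
end
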